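/- Let G be a finite group acting linearly on the sphere S^n via an orthogonal representation ρ : G → O(n+1), suppose S^n is G-connected and the fixed point set (S^n)^G is the great k-sphere S^k with 0 < k < n. If the orbit space S^n/G (with the quotient topology) is neither contractible nor homotopy equivalent to an odd-dimensional sphere, then TC^G(S^n) = 3. -/

import Mathlib

open Set unitInterval

namespace PaperTC

variable {G X : Type*}

/-- The orbit of `x` under the action `act`. -/
def orbit (act : G → X → X) (x : X) : Set X := {y | ∃ g, act g x = y}

/-- The fixed point set of the action `act`. -/
def fixedSet (act : G → X → X) : Set X := {x | ∀ g, act g x = x}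

/-- The fixed point set of a subset `S` of the acting group. -/
def fixedSetOf (act : G → X → X) (S : Set G) : Set X := {x | ∀ g ∈ S, act g x = x}

/-- `minCover P` is the least `k ≥ 1` satisfying `P k`, as an element of `ℕ∞`
(equal to `∞` if there is no such `k`). -/
noncomputable def minCover (P : ℕ → Prop) : ℕ∞ :=
  sInf {k : ℕ∞ | ∃ m : ℕ, k = m ∧ 1 ≤ m ∧ P m}

section Plain

variable (Y : Type*) [TopologicalSpace Y]

/-- `Y × Y` can be covered by `k` open sets each admitting a motion planner. -/
def TCcover (k : ℕ) : Prop :=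
  ∃ U : Fin k → Set (Y × Y),
    (∀ i, IsOpen (U i)) ∧ (⋃ i, U i) = univ ∧
    ∀ i, ∃ s : Y × Y → C(I, Y),
      ContinuousOn s (U i) ∧ ∀ p ∈ U i, s p 0 = p.1 ∧ s p 1 = p.2

/-- Topological complexity (non-reduced, possibly infinite). -/
noncomputable def TC : ℕ∞ := minCover (TCcover Y)

/-- `Y` can be covered by `k` open sets, each of which can be deformed within `Y`
to a point. -/
def catCover (k : ℕ) : Prop :=
  ∃ U : Fin k → Set Y,
    (∀ i, IsOpen (U i)) ∧ (⋃ i, U i) = univ ∧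
    ∀ i, ∃ H : Y × I → Y,
      ContinuousOn H (U i ×ˢ (univ : Set I)) ∧ (∀ x ∈ U i, H (x, 0) = x) ∧
      ∃ y₀, ∀ x ∈ U i, H (x, 1) = y₀

/-- Non-reduced Lusternik–Schnirelmann category. -/
noncomputable def cat : ℕ∞ := minCover (catCover Y)

end Plain

section Equivariant

variable [TopologicalSpace X] (act : G → X → X)

/-- `X × X` can be covered by `k` invariant open sets each admitting an
equivariant motion planner. -/
def eqTCcover (k : ℕ) : Prop :=
  ∃ U : Fin k → Set (X × X),
    (∀ i, IsOpen (U i)) ∧ (⋃ i, U i) = univ ∧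
    ∀ i, (∀ g p, p ∈ U i → (act g p.1, act g p.2) ∈ U i) ∧
      ∃ s : X × X → C(I, X),
        ContinuousOn s (U i) ∧
        (∀ p ∈ U i, s p 0 = p.1 ∧ s p 1 = p.2) ∧
        (∀ g p, p ∈ U i → ∀ t : I, s (act g p.1, act g p.2) t = act g (s p t))

/-- Equivariant topological complexity `TC_G` of Colman and Grant. -/
noncomputable def eqTC : ℕ∞ := minCover (eqTCcover act)

/-- `X × X` can be covered by `k` `(G × G)`-invariant open sets, each admitting a
`(G × G)`-equivariant section of `π^G : P X ×_{X/G} P X → X × X`; such a section is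
recorded by a pair of paths `s₁ p`, `s₂ p`, with the orbit of the endpoint of the first
equal to the orbit of the starting point of the second. -/
def invTCcover (k : ℕ) : Prop :=
  ∃ U : Fin k → Set (X × X),
    (∀ i, IsOpen (U i)) ∧ (⋃ i, U i) = univ ∧
    ∀ i, (∀ g₁ g₂ : G, ∀ p, p ∈ U i → (act g₁ p.1, act g₂ p.2) ∈ U i) ∧
      ∃ s₁ s₂ : X × X → C(I, X),
        ContinuousOn s₁ (U i) ∧ ContinuousOn s₂ (U i) ∧
        (∀ p ∈ U i, s₁ p 0 = p.1 ∧ s₂ p 1 = p.2 ∧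
          orbit act (s₁ p 1) = orbit act (s₂ p 0)) ∧
        (∀ g₁ g₂ : G, ∀ p, p ∈ U i → ∀ t : I,
          s₁ (act g₁ p.1, act g₂ p.2) t = act g₁ (s₁ p t) ∧
          s₂ (act g₁ p.1, act g₂ p.2) t = act g₂ (s₂ p t))

/-- Invariant topological complexity `TC^G` of Lubawski and Marzantowicz. -/
noncomputable def invTC : ℕ∞ := minCover (invTCcover act)

/-- The invariant open set `U` is `G`-compressible into `A`: the inclusion `U ↪ X` is
`G`-equivariantly homotopic to a `G`-map with values in `A`. -/
def GCompressible (A : Set X) (U : Set X) : Prop :=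
  (∀ g x, x ∈ U → act g x ∈ U) ∧
  ∃ H : X × I → X,
    ContinuousOn H (U ×ˢ (univ : Set I)) ∧ (∀ x ∈ U, H (x, 0) = x) ∧
    (∀ g x, x ∈ U → ∀ t : I, H (act g x, t) = act g (H (x, t))) ∧
    (∀ x ∈ U, H (x, 1) ∈ A)

/-- A `G`-categorical set: compressible into a single orbit. -/
def GCategorical (U : Set X) : Prop :=
  ∃ x₀ : X, GCompressible act (orbit act x₀) U

/-- `X` can be covered by `k` open `G`-categorical sets. -/
def catGCover (k : ℕ) : Prop :=
  ∃ U : Fin k → Set X,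
    (∀ i, IsOpen (U i)) ∧ (⋃ i, U i) = univ ∧ ∀ i, GCategorical act (U i)

/-- Equivariant Lusternik–Schnirelmann category `cat_G`. -/
noncomputable def catG : ℕ∞ := minCover (catGCover act)

/-- `X` can be covered by `k` open sets `G`-compressible into `{star}`. -/
def pointedCatGCover (star : X) (k : ℕ) : Prop :=
  ∃ U : Fin k → Set X,
    (∀ i, IsOpen (U i)) ∧ (⋃ i, U i) = univ ∧
    ∀ i, GCompressible act {star} (U i)

/-- The pointed equivariant category `_{{⋆}}cat_G(X)`. -/
noncomputable def pointedCatG (star : X) : ℕ∞ := minCover (pointedCatGCover act star)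

/-- `X` is `G`-contractible: the identity is `G`-homotopic to a map with values in a
single orbit. -/
def GContractible : Prop :=
  ∃ H : X × I → X,
    Continuous H ∧ (∀ x, H (x, 0) = x) ∧
    (∀ g x, ∀ t : I, H (act g x, t) = act g (H (x, t))) ∧
    ∃ x₀ : X, ∀ x, H (x, 1) ∈ orbit act x₀

end Equivariant

/-- The orbit space `X/G` with the quotient topology. -/
abbrev OrbitSpace (act : G → X → X) : Type _ := Quot (fun x y => ∃ g, act g x = y)

end PaperTC
namespace PaperTC

/-- The unit sphere `S^n ⊆ ℝ^{n+1}` (with the Euclidean metric). -/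
abbrev Sph (n : ℕ) : Set (EuclideanSpace ℝ (Fin (n + 1))) := Metric.sphere 0 1

/-- The action of `G` on the unit sphere `S^n` obtained by restricting an orthogonal
representation of `G` on `ℝ^{n+1}`. -/
noncomputable def sphereAct {G : Type*} [Monoid G] {n : ℕ}
    (ρ : G →* (EuclideanSpace ℝ (Fin (n + 1)) ≃ₗᵢ[ℝ] EuclideanSpace ℝ (Fin (n + 1)))) :
    G → ↥(Sph n) → ↥(Sph n) := fun g x =>
  ⟨ρ g x, mem_sphere_zero_iff_norm.mpr (by
    rw [(ρ g).norm_map]; exact mem_sphere_zero_iff_norm.mp x.2)⟩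

end PaperTC

open PaperTC

/-!
Let `V` be the subspace fixed by `G` and `W` its orthogonal complement.

Suppose that two invariant open sets with equivariant motion planners cover `S^n × S^n`. We
parametrise pairs of points of the sphere by two points `v₁`, `v₂` of the unit ball of `V` and the
direction of a nonzero `w : W`. Weighting the `V`-coordinates of the end of the first path by a
partition of unity gives two maps to `V`. Since a planner keeps fixed points fixed, these maps are
homotopic to `v₁` where `‖v₁‖ = 1` and to `v₂` where `‖v₂‖ = 1`. For even `k` this is contradictory,
and for odd `k` the two maps have exactly one common zero over the product of the two balls, counted
with signs. At a common zero the first path ends in `W`. If `w` has a maximal isotropy group `H`,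
the group element relating the ends of the two paths is a well-defined label in `G ⧸ H`. Counting
the common zeros by their labels expresses `1` as the sum of integers indexed by `G ⧸ H`. These
depend on `w` only up to a cocycle, which is a coboundary because `W \ {0}` is simply connected for
`dim W ≥ 3` and `H¹` of a finite group in a permutation module vanishes. After the correction they
are invariant, so that `|G ⧸ H|` divides `1`, which is absurd as `H ≠ G`.

If `dim W = 1`, the orbit space is a hemisphere. If `dim W = 2`, the orbit space is a hemisphere or
`S^n`, and in the latter case `n = k + 2` is odd.

Three sets suffice: the complement of the antipode of a fixed point `N` and a neighbourhood of this
antipode both contract equivariantly to `N`.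
-/

namespace PaperTC

section Cochains

variable {X Y : Type*}

/-- An integral cochain on `X`: a list of length `p + 1` is an ordered `p`-simplex with arbitrary
vertices in `X`, and the empty list is the simplex of the augmentation. All degrees are kept in a
single function. -/
abbrev Cochain (X : Type*) := List X → ℤ

/-- An integral chain on `X`, encoded by the additive functional it induces on cochains. -/
abbrev Chain (X : Type*) := Cochain X →+ ℤ

/-- The cochain on the link of the vertex `x`: evaluate on the simplex with first vertex `x`. -/
def link (x : X) : Cochain X →+ Cochain X where
  toFun φ l := φ (x :: l)
  map_zero' := rfl
  map_add' _ _ := rfl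

/-- The pullback of cochains along a map of vertices. -/
def pullback (f : X → Y) : Cochain Y →+ Cochain X where
  toFun φ l := φ (l.map f)
  map_zero' := rfl
  map_add' _ _ := rfl

@[simp] lemma link_apply (x : X) (φ : Cochain X) (l : List X) : link x φ l = φ (x :: l) := rfl

@[simp] lemma pullback_apply (f : X → Y) (φ : Cochain Y) (l : List X) :
    pullback f φ l = φ (l.map f) := rfl

lemma link_pullback (f : X → Y) (x : X) (φ : Cochain Y) :
    link x (pullback f φ) = pullback f (link (f x) φ) := rfl

namespace Chain

/-- The chain consisting of a single simplex. -/
def simplex (l : List X) : Chain X := Pi.evalAddMonoidHom _ l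

@[simp] lemma simplex_apply (l : List X) (φ : Cochain X) : simplex l φ = φ l := rfl

lemma smul_apply (c : Chain X) (z : ℤ) (φ : Cochain X) : c (fun l => z * φ l) = z * c φ :=
  map_zsmul c z φ

/-- The alternating sum of the codimension one faces of a simplex. -/
def faces : List X → Chain X
  | [] => 0
  | x :: l => simplex l - (faces l).comp (link x)

end Chain

/-- The simplicial coboundary, including the augmentation: `(coboundary φ) [x] = φ []`. -/
def coboundary : Cochain X →+ Cochain X where
  toFun φ l := Chain.faces l φ
  map_zero' := by ext; simp
  map_add' φ ψ := by ext; simp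

end Cochains

open Chain

local notation "δ" => coboundary

section Chains

variable {X Y Z : Type*}

@[simp] lemma coboundary_nil (φ : Cochain X) : δ φ [] = 0 := rfl

@[simp] lemma coboundary_cons (φ : Cochain X) (x : X) (l : List X) :
    δ φ (x :: l) = φ l - δ (link x φ) l := rfl

lemma coboundary_smul_apply (z : ℤ) (φ : Cochain X) (l : List X) :
    δ (fun l => z * φ l) l = z * δ φ l :=
  (faces l).smul_apply z φ

lemma link_coboundary (x : X) (φ : Cochain X) : link x (δ φ) = φ - δ (link x φ) := rfl

@[simp] lemma coboundary_coboundary (φ : Cochain X) : δ (δ φ) = 0 := by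
  ext l
  induction l generalizing φ with
  | nil => simp
  | cons x l ih => simp [link_coboundary, ih]

lemma coboundary_congr {φ ψ : Cochain X} {l : List X}
    (h : ∀ l', l'.Sublist l → l'.length + 1 = l.length → φ l' = ψ l') : δ φ l = δ ψ l := by
  induction l generalizing φ ψ with
  | nil => simp
  | cons x l ih =>
    rw [coboundary_cons, coboundary_cons, h l (List.sublist_cons_self x l) (by simp), ih]
    exact fun l' hsub hlen => h _ (hsub.cons_cons x) (by simp [hlen])

lemma coboundary_eq_zero {φ : Cochain X} {l : List X}
    (h : ∀ l', l'.Sublist l → l'.length + 1 = l.length → φ l' = 0) : δ φ l = 0 := by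
  rw [coboundary_congr (ψ := 0) h, map_zero, Pi.zero_apply]

lemma coboundary_pullback (f : X → Y) (φ : Cochain Y) : δ (pullback f φ) = pullback f (δ φ) := by
  ext l
  induction l generalizing φ with
  | nil => simp
  | cons x l ih => simp [link_pullback, ih]

lemma Chain.apply_coboundary (d : Chain Y) (F : List X → Cochain Y) (a : List X) :
    d (fun b => δ (fun a' => F a' b) a) = δ (fun a' => d (F a')) a := by
  induction a generalizing F with
  | nil => exact map_zero d
  | cons x a ih => exact (map_sub d _ _).trans (congrArg₂ _ rfl (ih fun a' => F (x :: a')))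

namespace Chain

/-- The boundary of a chain. -/
def boundary (c : Chain X) : Chain X := c.comp δ

/-- The pushforward of a chain along a map of vertices. -/
def map (f : X → Y) (c : Chain X) : Chain Y := c.comp (pullback f)

/-- The path with vertices `p 0, …, p n`. -/
def path (p : ℕ → X) (n : ℕ) : Chain X := ∑ i ∈ Finset.range n, simplex [p i, p (i + 1)]

lemma boundary_apply (c : Chain X) (φ : Cochain X) : boundary c φ = c (δ φ) := rfl

lemma map_apply (f : X → Y) (c : Chain X) (φ : Cochain Y) : map f c φ = c (pullback f φ) := rfl

lemma path_apply (p : ℕ → X) (n : ℕ) (φ : Cochain X) :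
    path p n φ = ∑ i ∈ Finset.range n, φ [p i, p (i + 1)] := by
  simp [path]

@[simp] lemma boundary_boundary (c : Chain X) : boundary (boundary c) = 0 := by
  ext φ
  simp [boundary_apply]

lemma boundary_map (f : X → Y) (c : Chain X) : boundary (map f c) = map f (boundary c) := by
  ext φ
  simp [boundary_apply, map_apply, coboundary_pullback]

lemma boundary_path (p : ℕ → X) (n : ℕ) :
    boundary (path p n) = simplex [p n] - simplex [p 0] := by
  ext φ
  simp [boundary_apply, path_apply, Finset.sum_range_sub fun i => φ [p i]]

/-- `c.SupportedOn S` means that the chain `c` involves only simplices satisfying `S`. -/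
def SupportedOn (c : Chain X) (S : List X → Prop) : Prop :=
  ∀ ⦃φ ψ : Cochain X⦄, (∀ l, S l → φ l = ψ l) → c φ = c ψ

namespace SupportedOn

variable {c : Chain X} {S T : List X → Prop}

lemma mono (h : c.SupportedOn S) (hST : ∀ l, S l → T l) : c.SupportedOn T :=
  fun _ _ hφ => h fun l hl => hφ l (hST l hl)

lemma apply_eq_zero (h : c.SupportedOn S) {φ : Cochain X} (hφ : ∀ l, S l → φ l = 0) : c φ = 0 := by
  rw [h (ψ := 0) hφ, map_zero]

lemma inter (h : c.SupportedOn S) (h' : c.SupportedOn T) :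
    c.SupportedOn fun l => S l ∧ T l := by
  classical
  intro φ ψ hφ
  have restrict (χ : Cochain X) : c χ = c fun l => if S l then χ l else 0 :=
    h fun l hl => by simp [hl]
  rw [restrict φ, restrict ψ]
  refine h' fun l hl => ?_
  split_ifs with hS
  exacts [hφ l ⟨hS, hl⟩, rfl]

lemma boundary (h : c.SupportedOn S)
    (hST : ∀ l l', S l → l'.Sublist l → l'.length + 1 = l.length → T l') :
    c.boundary.SupportedOn T :=
  fun _ _ hφ => h fun l hl => coboundary_congr fun l' hsub hlen => hφ l' (hST l l' hl hsub hlen)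

lemma map {T : List Y → Prop} (h : c.SupportedOn S) (f : X → Y) (hST : ∀ l, S l → T (l.map f)) :
    (c.map f).SupportedOn T :=
  fun _ _ hφ => h fun l hl => hφ _ (hST l hl)

end SupportedOn

lemma supportedOn_simplex (l : List X) : (simplex l).SupportedOn (· = l) :=
  fun _ _ hφ => hφ l rfl

lemma supportedOn_path (p : ℕ → X) (n : ℕ) :
    (path p n).SupportedOn fun l => ∃ i < n, l = [p i, p (i + 1)] := by
  intro φ ψ hφ
  rw [path_apply, path_apply]
  exact Finset.sum_congr rfl fun i hi => hφ _ ⟨i, Finset.mem_range.1 hi, rfl⟩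

/-- The shuffle product of two simplices: the signed sum of the simplices in the staircase
triangulation of their product. The empty simplex acts as the augmentation, so that the Leibniz
rule `shuffle_coboundary` holds for all simplices. -/
def shuffle : List X → List Y → Chain (X × Y)
  | [], [_] => simplex []
  | [], _ => 0
  | _ :: _, [] => 0
  | x :: a, y :: b =>
    (shuffle a (y :: b) + (-1 : ℤ) ^ a.length • shuffle (x :: a) b).comp (link (x, y))
termination_by a b => a.length + b.length

@[simp] lemma shuffle_nil_singleton (y : Y) :
    shuffle ([] : List X) [y] = simplex [] := by
  rw [shuffle]

@[simp] lemma shuffle_nil_cons_cons (y y' : Y) (b : List Y) :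
    shuffle ([] : List X) (y :: y' :: b) = 0 := by
  rw [shuffle]; simp

@[simp] lemma shuffle_nil_right (a : List X) : shuffle a ([] : List Y) = 0 := by
  cases a <;> rw [shuffle]; simp

lemma shuffle_cons_cons (x : X) (a : List X) (y : Y) (b : List Y) (φ : Cochain (X × Y)) :
    shuffle (x :: a) (y :: b) φ = shuffle a (y :: b) (link (x, y) φ) +
      (-1) ^ a.length * shuffle (x :: a) b (link (x, y) φ) := by
  rw [shuffle]; rfl

lemma supportedOn_shuffle (a : List X) (b : List Y) :
    (shuffle a b).SupportedOn fun l =>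
      l.length + 1 = a.length + b.length ∧ ∀ p ∈ l, p.1 ∈ a ∧ p.2 ∈ b := by
  intro φ ψ h
  match a, b with
  | a, [] => simp
  | [], [y] => simpa using h [] (by simp)
  | [], _ :: _ :: _ => simp
  | x :: a, y :: b =>
    rw [shuffle_cons_cons, shuffle_cons_cons,
      supportedOn_shuffle a (y :: b) (φ := link (x, y) φ) (ψ := link (x, y) ψ),
      supportedOn_shuffle (x :: a) b (φ := link (x, y) φ) (ψ := link (x, y) ψ)]
    · rintro l ⟨hl, hm⟩
      refine h _ ⟨by grind, List.forall_mem_cons.2 ⟨by simp, fun p hp => ?_⟩⟩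
      exact ⟨(hm p hp).1, List.mem_cons_of_mem _ (hm p hp).2⟩
    · rintro l ⟨hl, hm⟩
      refine h _ ⟨by grind, List.forall_mem_cons.2 ⟨by simp, fun p hp => ?_⟩⟩
      exact ⟨List.mem_cons_of_mem _ (hm p hp).1, (hm p hp).2⟩
termination_by a.length + b.length

lemma shuffle_cons_cons_eq_zero {x : X} {y : Y} {φ : Cochain (X × Y)} (h : link (x, y) φ = 0)
    (a : List X) (b : List Y) : shuffle (x :: a) (y :: b) φ = 0 := by
  simp [shuffle_cons_cons, h]

lemma shuffle_singleton_right {a : List X} (ha : a ≠ []) (y : Y) :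
    shuffle a [y] = simplex (a.map (·, y)) := by
  ext φ
  induction a generalizing φ with
  | nil => exact absurd rfl ha
  | cons x a ih =>
    rw [shuffle_cons_cons]
    cases a with
    | nil => simp
    | cons x' a => simp [ih]

lemma shuffle_singleton_left {b : List Y} (hb : b ≠ []) (x : X) :
    shuffle [x] b = simplex (b.map (x, ·)) := by
  ext φ
  induction b generalizing φ with
  | nil => exact absurd rfl hb
  | cons y b ih =>
    rw [shuffle_cons_cons]
    cases b with
    | nil => simp
    | cons y' b => simp [ih]

lemma coboundary_shuffle_cons_left (x : X) (a : List X) (y : Y) (b : List Y)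
    (φ : Cochain (X × Y)) :
    δ (fun a => shuffle (x :: a) (y :: b) φ) a =
      δ (fun a => shuffle a (y :: b) (link (x, y) φ)) a -
        (-1) ^ a.length * δ (fun a => shuffle (x :: a) b (link (x, y) φ)) a := by
  rw [← coboundary_smul_apply, ← Pi.sub_apply, ← map_sub]
  refine coboundary_congr fun l _ hl => ?_
  rw [shuffle_cons_cons, ← hl, Pi.sub_apply, pow_succ]
  ring

lemma coboundary_shuffle_cons_right (x : X) (a : List X) (y : Y) (b : List Y)
    (φ : Cochain (X × Y)) :
    δ (fun b => shuffle (x :: a) (y :: b) φ) b =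
      δ (fun b => shuffle a (y :: b) (link (x, y) φ)) b +
        (-1) ^ a.length * δ (fun b => shuffle (x :: a) b (link (x, y) φ)) b := by
  rw [← coboundary_smul_apply, ← Pi.add_apply, ← map_add]
  exact coboundary_congr fun l _ _ => shuffle_cons_cons ..

lemma shuffle_coboundary (a : List X) (b : List Y) (φ : Cochain (X × Y)) :
    shuffle a b (δ φ) = δ (fun a => shuffle a b φ) a +
      (-1) ^ (a.length + 1) * δ (fun b => shuffle a b φ) b := by
  match a, b with
  | a, [] =>
    rw [coboundary_eq_zero (by simp)]
    simp
  | [], [y] => simp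
  | [], [y, y'] => simp
  | [], y :: y' :: y'' :: b =>
    simp [link, coboundary_eq_zero (φ := fun _ => (0 : ℤ)) (l := b) (by simp)]
  | x :: a, y :: b =>
    have ih₁ := shuffle_coboundary a (y :: b) (link (x, y) φ)
    have ih₂ := shuffle_coboundary (x :: a) b (link (x, y) φ)
    have link_left (ψ : Cochain (X × Y)) (b : List Y) :
        link x (fun a => shuffle a b ψ) = fun a => shuffle (x :: a) b ψ := rfl
    have link_right (ψ : Cochain (X × Y)) (a : List X) :
        link y (fun b => shuffle a b ψ) = fun b => shuffle a (y :: b) ψ := rfl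
    simp only [coboundary_cons, link_left, link_right] at ih₁ ih₂ ⊢
    rw [coboundary_shuffle_cons_left, coboundary_shuffle_cons_right, shuffle_cons_cons,
      link_coboundary, map_sub, map_sub, ih₁, ih₂]
    simp only [List.length_cons, pow_succ]
    ring
termination_by a.length + b.length

end Chain

end Chains

section Products

variable {X Y : Type*}

/-- The slant product of a chain on `X` with a cochain on `X × Y`. -/
def slant (c : Chain X) : Cochain (X × Y) →+ Cochain Y where
  toFun χ b := c fun a => shuffle a b χ
  map_zero' := by
    ext b
    simp only [map_zero]
    exact map_zero c
  map_add' χ χ' := by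
    ext b
    simp only [map_add]
    exact map_add c (fun a => shuffle a b χ) fun a => shuffle a b χ'

lemma slant_apply (c : Chain X) (χ : Cochain (X × Y)) (b : List Y) :
    slant c χ b = c fun a => shuffle a b χ := rfl

lemma slant_coboundary {c : Chain X} {p : ℕ} (hc : c.SupportedOn (·.length = p))
    (χ : Cochain (X × Y)) :
    slant c (δ χ) = slant c.boundary χ + (-1 : ℤ) ^ (p + 1) • δ (slant c χ) := by
  ext b
  calc c (fun a => shuffle a b (δ χ))
      = c ((δ fun a => shuffle a b χ) +
          fun a => (-1) ^ (p + 1) * δ (fun b => shuffle a b χ) b) :=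
        hc fun a ha => by rw [shuffle_coboundary, ha, Pi.add_apply]
    _ = _ := by
        rw [map_add, smul_apply, c.apply_coboundary fun b a => shuffle a b χ]
        rfl

namespace Chain

/-- The product chain, given by the staircase triangulation of products of simplices. -/
def prod (c : Chain X) (d : Chain Y) : Chain (X × Y) := d.comp (slant c)

lemma prod_apply (c : Chain X) (d : Chain Y) (χ : Cochain (X × Y)) :
    c.prod d χ = d (slant c χ) := rfl

lemma boundary_prod {c : Chain X} {p : ℕ} (hc : c.SupportedOn (·.length = p)) (d : Chain Y) :
    (c.prod d).boundary = c.boundary.prod d + (-1 : ℤ) ^ (p + 1) • c.prod d.boundary := by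
  ext χ
  rw [boundary_apply, prod_apply, slant_coboundary hc, map_add, map_zsmul]
  rfl

lemma SupportedOn.prod {c : Chain X} {d : Chain Y} {S : List X → Prop} {T : List Y → Prop}
    (hc : c.SupportedOn S) (hd : d.SupportedOn T) :
    (c.prod d).SupportedOn fun l => ∃ a b, S a ∧ T b ∧
      l.length + 1 = a.length + b.length ∧ ∀ p ∈ l, p.1 ∈ a ∧ p.2 ∈ b :=
  fun _ _ h => hd fun b hb => hc fun a ha => supportedOn_shuffle a b fun l hl =>
    h l ⟨a, b, ha, hb, hl⟩

lemma prod_simplex_singleton {c : Chain X} (hc : c.SupportedOn (· ≠ [])) (y : Y) :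
    c.prod (simplex [y]) = c.map (·, y) := by
  ext χ
  exact hc fun a ha => by rw [shuffle_singleton_right ha]; rfl

lemma prod_boundary_path {c : Chain X} (hc : c.SupportedOn (· ≠ [])) (p : ℕ → Y) (n : ℕ) :
    c.prod (path p n).boundary = c.map (·, p n) - c.map (·, p 0) := by
  rw [boundary_path, ← prod_simplex_singleton hc, ← prod_simplex_singleton hc]
  rfl

end Chain

/-- The cup product of `φ`, regarded as a cochain of degree `p`, with `ψ`. -/
def cup (p : ℕ) (φ ψ : Cochain X) : Cochain X := fun l => φ (l.take (p + 1)) * ψ (l.drop p)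

lemma cup_apply (p : ℕ) (φ ψ : Cochain X) (l : List X) :
    cup p φ ψ l = φ (l.take (p + 1)) * ψ (l.drop p) := rfl

lemma link_cup_succ (p : ℕ) (φ ψ : Cochain X) (x : X) :
    link x (cup (p + 1) φ ψ) = cup p (link x φ) ψ := rfl

lemma pullback_cup (f : X → Y) (p : ℕ) (φ ψ : Cochain Y) :
    pullback f (cup p φ ψ) = cup p (pullback f φ) (pullback f ψ) := by
  ext l
  simp [cup, List.map_take, List.map_drop]

lemma coboundary_cup (p : ℕ) (φ ψ : Cochain X) {l : List X} (hl : p + 2 ≤ l.length) :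
    δ (cup p φ ψ) l = cup (p + 1) (δ φ) ψ l + (-1) ^ p * cup p φ (δ ψ) l := by
  induction p generalizing φ l with
  | zero =>
    match l, hl with
    | x :: y :: r, _ =>
      have coboundary_link_link : δ (link y (link x (cup 0 φ ψ))) r =
          φ [x] * δ (link y (link x ψ)) r :=
        coboundary_smul_apply (φ [x]) (link y (link x ψ)) r
      simp only [coboundary_cons, coboundary_link_link]
      simp [cup]
      ring
  | succ p ih =>
    match l, hl with
    | x :: l, hl =>
      have ih := ih (link x φ) (l := l) (by simpa using hl)
      rw [coboundary_cons, link_cup_succ, ih]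
      simp only [cup, coboundary_cons, link_apply, List.take_succ_cons, List.drop_succ_cons]
      ring

/-- A cochain is normalized if it vanishes on simplices with two equal consecutive vertices. -/
def Normalized (φ : Cochain X) : Prop := ∀ l : List X, ¬ l.IsChain (· ≠ ·) → φ l = 0

namespace Normalized

lemma link {φ : Cochain X} (h : Normalized φ) (x : X) : Normalized (link x φ) :=
  fun _ hl => h _ fun hl' => hl hl'.of_cons

lemma link_link_self {φ : Cochain X} (h : Normalized φ) (x : X) :
    PaperTC.link x (PaperTC.link x φ) = 0 :=
  funext fun _ => h _ (by simp)

lemma pullback {φ : Cochain Y} (h : Normalized φ) (f : X → Y) : Normalized (pullback f φ) :=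
  fun _ hl => h _ fun hl' => hl <| (List.isChain_map f).1 hl' |>.imp fun _ _ => mt (congrArg f)

lemma cup {p : ℕ} {φ ψ : Cochain X} (hφ : Normalized φ) (hψ : Normalized ψ) :
    Normalized (cup p φ ψ) := by
  intro l hl
  induction p generalizing φ l with
  | zero => rw [cup_apply, List.drop_zero, hψ l hl, mul_zero]
  | succ p ih =>
    match l with
    | [] | [_] => simp at hl
    | x :: y :: l =>
      by_cases hxy : x = y
      · subst hxy
        exact mul_eq_zero_of_left (congrFun (hφ.link_link_self x) (l.take p)) _
      · exact ih (hφ.link x) (y :: l) fun h => hl (by simp [hxy, h])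

end Normalized

lemma shuffle_pullback_snd_eq_zero {χ : Cochain Y} (hχ : Normalized χ) (x x' : X) (a : List X)
    (b : List Y) : shuffle (x :: x' :: a) b (pullback Prod.snd χ) = 0 := by
  induction b generalizing χ with
  | nil => simp
  | cons y b ih =>
    rw [shuffle_cons_cons, link_pullback, ih (hχ.link y), mul_zero, add_zero]
    exact shuffle_cons_cons_eq_zero (by rw [link_pullback, hχ.link_link_self, map_zero]) a b

lemma shuffle_pullback_fst_eq_zero {χ : Cochain X} (hχ : Normalized χ) (a : List X) (y y' : Y)
    (b : List Y) : shuffle a (y :: y' :: b) (pullback Prod.fst χ) = 0 := by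
  induction a generalizing χ with
  | nil => simp
  | cons x a ih =>
    rw [shuffle_cons_cons, link_pullback, ih (hχ.link x), zero_add,
      shuffle_cons_cons_eq_zero (by rw [link_pullback, hχ.link_link_self, map_zero]), mul_zero]

lemma shuffle_cup_fst_snd {p : ℕ} {φ : Cochain X} (hφ : Normalized φ) (ψ : Cochain Y)
    {a : List X} (ha : a.length = p + 1) {b : List Y} (hb : b ≠ []) :
    shuffle a b (cup p (pullback Prod.fst φ) (pullback Prod.snd ψ)) = φ a * ψ b := by
  induction p generalizing φ a with
  | zero =>
    obtain ⟨x, rfl⟩ := List.length_eq_one_iff.1 ha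
    obtain ⟨y, b, rfl⟩ := List.exists_cons_of_ne_nil hb
    simp [shuffle_singleton_left, cup, Function.comp_def]
  | succ p ih =>
    obtain ⟨x, a, rfl⟩ := List.exists_cons_of_length_eq_add_one ha
    obtain ⟨x', a, rfl⟩ := List.exists_cons_of_length_eq_add_one (Nat.succ.inj ha)
    obtain ⟨y, b, rfl⟩ := List.exists_cons_of_ne_nil hb
    rw [shuffle_cons_cons, link_cup_succ, link_pullback, ih (hφ.link x) (by simpa using ha),
      link_apply, add_eq_left]
    cases b with
    | nil => simp
    | cons y' b =>
      rw [shuffle_cons_cons_eq_zero _ (x' :: a) b, mul_zero]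
      ext l
      exact mul_eq_zero_of_left (congrFun (hφ.link_link_self x) _) _

lemma shuffle_cup_snd_fst {p q : ℕ} {φ : Cochain Y} (hφ : Normalized φ) (ψ : Cochain X)
    {a : List X} (ha : a.length = q + 1) {b : List Y} (hb : b.length = p + 1) :
    shuffle a b (cup p (pullback Prod.snd φ) (pullback Prod.fst ψ)) =
      (-1) ^ (p * q) * (φ b * ψ a) := by
  obtain ⟨x, a, rfl⟩ := List.exists_cons_of_length_eq_add_one ha
  induction p generalizing φ b with
  | zero =>
    obtain ⟨y, rfl⟩ := List.length_eq_one_iff.1 hb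
    simp [shuffle_singleton_right, cup, Function.comp_def]
  | succ p ih =>
    obtain ⟨y, b, rfl⟩ := List.exists_cons_of_length_eq_add_one hb
    obtain ⟨y', b, rfl⟩ := List.exists_cons_of_length_eq_add_one (Nat.succ.inj hb)
    have first_step : shuffle a (y :: y' :: b)
        (cup p (pullback Prod.snd (link y φ)) (pullback Prod.fst ψ)) = 0 := by
      cases a with
      | nil => simp
      | cons x' a =>
        refine shuffle_cons_cons_eq_zero ?_ a (y' :: b)
        ext l
        exact mul_eq_zero_of_left (congrFun (hφ.link_link_self y) _) _
    rw [shuffle_cons_cons, link_cup_succ, link_pullback, first_step,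
      ih (hφ.link y) (by simpa using hb), link_apply, show a.length = q by simpa using ha]
    ring

namespace Chain

variable {c : Chain X} {d : Chain Y}

lemma prod_cup_fst_snd {p : ℕ} (hc : c.SupportedOn (·.length = p + 1))
    (hd : d.SupportedOn (· ≠ [])) {φ : Cochain X} (hφ : Normalized φ) (ψ : Cochain Y) :
    c.prod d (cup p (pullback Prod.fst φ) (pullback Prod.snd ψ)) = c φ * d ψ := by
  rw [← smul_apply]
  refine hd fun b hb => ?_
  rw [mul_comm, ← smul_apply]
  exact hc fun a ha => by rw [shuffle_cup_fst_snd hφ ψ ha hb, mul_comm]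

lemma prod_cup_snd_fst {p q : ℕ} (hc : c.SupportedOn (·.length = q + 1))
    (hd : d.SupportedOn (·.length = p + 1)) {φ : Cochain Y} (hφ : Normalized φ)
    (ψ : Cochain X) :
    c.prod d (cup p (pullback Prod.snd φ) (pullback Prod.fst ψ)) =
      (-1) ^ (p * q) * (d φ * c ψ) := by
  rw [mul_comm (d φ), ← mul_assoc, ← smul_apply]
  refine hd fun b hb => ?_
  rw [mul_right_comm, ← smul_apply]
  refine hc fun a ha => ?_
  rw [shuffle_cup_snd_fst hφ ψ ha hb]
  ring

lemma prod_pullback_snd_eq_zero (hc : c.SupportedOn (2 ≤ ·.length)) (d : Chain Y)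
    {χ : Cochain Y} (hχ : Normalized χ) : c.prod d (pullback Prod.snd χ) = 0 := by
  have slant_eq_zero : slant c (pullback Prod.snd χ) = 0 := by
    ext b
    exact hc.apply_eq_zero fun a ha => match a, ha with
      | x :: x' :: a, _ => shuffle_pullback_snd_eq_zero hχ x x' a b
  rw [prod_apply, slant_eq_zero, map_zero]

lemma prod_pullback_fst_eq_zero (c : Chain X) (hd : d.SupportedOn (2 ≤ ·.length))
    {χ : Cochain X} (hχ : Normalized χ) : c.prod d (pullback Prod.fst χ) = 0 := by
  refine hd.apply_eq_zero fun b hb => match b, hb with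
    | y :: y' :: b, _ => ?_
  simp only [slant_apply, shuffle_pullback_fst_eq_zero hχ]
  exact map_zero c

end Chain

end Products

section StepProducts

variable {X Y : Type*}

/-- The cochain `du₁ ∪ ⋯ ∪ duₘ ∪ b` for functions `u₁, …, uₘ, b` on the vertices. -/
def stepProduct : List (X → ℤ) → (X → ℤ) → Cochain X
  | [], b, [x] => b x
  | u :: us, b, x :: y :: l => (u y - u x) * stepProduct us b (y :: l)
  | _, _, _ => 0

lemma stepProduct_congr {us vs : List (X → ℤ)} {b c : X → ℤ} {l : List X}
    (h : us.Forall₂ (fun u v => ∀ x ∈ l, u x = v x) vs) (hb : ∀ x ∈ l, b x = c x) :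
    stepProduct us b l = stepProduct vs c l := by
  induction l generalizing us vs with
  | nil => cases h <;> simp [stepProduct]
  | cons x l ih =>
    cases h with
    | nil =>
      cases l
      · exact hb x (by simp)
      · rfl
    | cons hu hus =>
      cases l with
      | nil => rfl
      | cons y l =>
        rw [stepProduct, stepProduct, hu x (by simp), hu y (by simp),
          ih (hus.imp fun _ _ h z hz => h z (List.mem_cons_of_mem _ hz))
            fun z hz => hb z (List.mem_cons_of_mem _ hz)]

lemma pullback_stepProduct (f : X → Y) (us : List (Y → ℤ)) (b : Y → ℤ) :
    pullback f (stepProduct us b) = stepProduct (us.map (· ∘ f)) (b ∘ f) := by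
  ext l
  induction l generalizing us with
  | nil => cases us <;> simp [stepProduct]
  | cons x l ih =>
    cases us with
    | nil => cases l <;> simp [stepProduct]
    | cons u us =>
      cases l with
      | nil => simp [stepProduct]
      | cons y l => exact congrArg (_ * ·) (ih us)

lemma stepProduct_eq_zero {us : List (X → ℤ)} {u : X → ℤ} (hu : u ∈ us) (b : X → ℤ) {l : List X}
    (h : ∀ x ∈ l, ∀ y ∈ l, u x = u y) : stepProduct us b l = 0 := by
  induction l generalizing us with
  | nil => cases us <;> simp [stepProduct]
  | cons x l ih =>
    cases us with
    | nil => simp at hu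
    | cons v us =>
      cases l with
      | nil => rfl
      | cons y l =>
        rw [stepProduct]
        rcases List.mem_cons.1 hu with rfl | hu
        · rw [h y (by simp) x (by simp), sub_self, zero_mul]
        · rw [ih hu fun z hz w hw =>
            h z (List.mem_cons_of_mem _ hz) w (List.mem_cons_of_mem _ hw), mul_zero]

lemma coboundary_stepProduct (us : List (X → ℤ)) (b : X → ℤ) {l : List X} (hl : 2 ≤ l.length) :
    δ (stepProduct us b) l = (-1) ^ us.length * stepProduct (us ++ [b]) 1 l := by
  induction l generalizing us with
  | nil => simp at hl
  | cons x l ih =>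
    match l, hl with
    | [y], _ => rcases us with _ | ⟨u, _ | _⟩ <;> simp [stepProduct]
    | y :: z :: l, _ =>
      cases us with
      | nil =>
        have coboundary_link : δ (link z (link y (link x (stepProduct [] b)))) l = 0 :=
          congrFun (map_zero δ) l
        simp only [coboundary_cons, coboundary_link]
        simp [stepProduct]
      | cons u us =>
        have coboundary_link : δ (link z (link y (link x (stepProduct (u :: us) b)))) l =
            (u y - u x) * δ (link z (link y (stepProduct us b))) l :=
          coboundary_smul_apply (u y - u x) (link z (link y (stepProduct us b))) l
        have ih := ih us (by simp)
        simp only [coboundary_cons, coboundary_link, link_apply, stepProduct, List.cons_append,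
          List.length_cons, pow_succ] at ih ⊢
        linear_combination (-(u y - u x)) * ih

lemma normalized_stepProduct (us : List (X → ℤ)) (b : X → ℤ) : Normalized (stepProduct us b) := by
  intro l hl
  induction l generalizing us with
  | nil => simp at hl
  | cons x l ih =>
    cases l with
    | nil => simp at hl
    | cons y l =>
      cases us with
      | nil => rfl
      | cons u us =>
        rw [stepProduct]
        by_cases hxy : x = y
        · rw [hxy, sub_self, zero_mul]
        · rw [ih us fun h => hl (by simp [hxy, h]), mul_zero]

lemma stepProduct_append (us vs : List (X → ℤ)) (b : X → ℤ) :
    stepProduct (us ++ vs) b = cup us.length (stepProduct us 1) (stepProduct vs b) := by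
  ext l
  induction us generalizing l with
  | nil => rcases l with _ | ⟨x, l⟩ <;> rcases vs with _ | ⟨v, vs⟩ <;> simp [cup, stepProduct]
  | cons u us ih =>
    match l with
    | [] | [x] => simp [cup, stepProduct]
    | x :: y :: l =>
      rw [List.cons_append, stepProduct, ih]
      simp only [cup, List.length_cons, List.take_succ_cons, List.drop_succ_cons, stepProduct]
      ring

/-- The indicator function of the positive reals. -/
noncomputable def step (r : ℝ) : ℤ := if 0 < r then 1 else 0

lemma step_mul_of_pos {c : ℝ} (hc : 0 < c) (x : ℝ) : step (c * x) = step x := by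
  simp only [step, mul_pos_iff_of_pos_left hc]

/-- The indicator functions of the sets where the coordinates of `f` are positive. -/
noncomputable def coordSteps {m : ℕ} (f : X → Fin m → ℝ) : List (X → ℤ) :=
  List.ofFn fun i x => step (f x i)

/-- The cocycle counting how often `f` passes through the origin of `ℝᵐ`: the cup product of the
coboundaries of the indicators of positivity of the coordinates of `f`. -/
noncomputable def signCocycle {m : ℕ} (f : X → Fin m → ℝ) : Cochain X :=
  stepProduct (coordSteps f) 1

/-- A primitive of `signCocycle f`, up to sign. -/
noncomputable def signPrimitive {k : ℕ} (f : X → Fin (k + 1) → ℝ) : Cochain X :=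
  stepProduct (coordSteps fun x => Fin.init (f x)) fun x => step (f x (Fin.last k))

lemma coordSteps_succ {k : ℕ} (f : X → Fin (k + 1) → ℝ) :
    coordSteps f = (coordSteps fun x => Fin.init (f x)) ++ [fun x => step (f x (Fin.last k))] := by
  rw [coordSteps, List.ofFn_succ_last]
  rfl

lemma forall₂_coordSteps {m : ℕ} {f g : X → Fin m → ℝ} {l : List X}
    (h : ∀ x ∈ l, ∀ i, step (f x i) = step (g x i)) :
    (coordSteps f).Forall₂ (fun u v => ∀ x ∈ l, u x = v x) (coordSteps g) := by
  refine List.forall₂_iff_get.2 ⟨by simp [coordSteps], fun i _ _ x hx => ?_⟩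
  simp [coordSteps, h x hx]

lemma coboundary_signPrimitive {k : ℕ} (f : X → Fin (k + 1) → ℝ) {l : List X}
    (hl : 2 ≤ l.length) : δ (signPrimitive f) l = (-1) ^ k * signCocycle f l := by
  rw [signPrimitive, coboundary_stepProduct _ _ hl, signCocycle, coordSteps_succ]
  simp [coordSteps]

lemma normalized_signPrimitive {k : ℕ} (f : X → Fin (k + 1) → ℝ) :
    Normalized (signPrimitive f) :=
  normalized_stepProduct _ _

lemma normalized_signCocycle {m : ℕ} (f : X → Fin m → ℝ) : Normalized (signCocycle f) :=
  normalized_stepProduct _ _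

lemma signPrimitive_congr {k : ℕ} {f g : X → Fin (k + 1) → ℝ} {l : List X}
    (h : ∀ x ∈ l, ∀ i, step (f x i) = step (g x i)) : signPrimitive f l = signPrimitive g l :=
  stepProduct_congr (forall₂_coordSteps fun x hx i => h x hx i.castSucc) fun x hx => h x hx _

lemma signCocycle_congr {m : ℕ} {f g : X → Fin m → ℝ} {l : List X}
    (h : ∀ x ∈ l, ∀ i, step (f x i) = step (g x i)) : signCocycle f l = signCocycle g l :=
  stepProduct_congr (forall₂_coordSteps h) fun _ _ => rfl

lemma pullback_signPrimitive {k : ℕ} (g : X → Y) (f : Y → Fin (k + 1) → ℝ) :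
    pullback g (signPrimitive f) = signPrimitive (f ∘ g) := by
  rw [signPrimitive, pullback_stepProduct, coordSteps, List.map_ofFn]
  rfl

lemma pullback_signCocycle {m : ℕ} (g : X → Y) (f : Y → Fin m → ℝ) :
    pullback g (signCocycle f) = signCocycle (f ∘ g) := by
  rw [signCocycle, pullback_stepProduct, coordSteps, List.map_ofFn]
  rfl

lemma signCocycle_eq_zero {m : ℕ} {f : X → Fin m → ℝ} {l : List X} (i : Fin m)
    (h : ∀ x ∈ l, ∀ y ∈ l, step (f x i) = step (f y i)) : signCocycle f l = 0 :=
  stepProduct_eq_zero (List.mem_ofFn.2 ⟨i, rfl⟩) 1 h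

lemma signCocycle_nil {m : ℕ} (f : X → Fin m → ℝ) : signCocycle f [] = 0 := by
  rw [signCocycle]
  cases coordSteps f <;> rfl

lemma signCocycle_succ {k : ℕ} (f : X → Fin (k + 1) → ℝ) :
    signCocycle f = cup k (signCocycle fun x => Fin.init (f x))
      (stepProduct [fun x => step (f x (Fin.last k))] 1) := by
  rw [signCocycle, coordSteps_succ, stepProduct_append]
  simp [signCocycle, coordSteps]

end StepProducts

section FineLists

variable {X Y : Type*} [PseudoMetricSpace X] [PseudoMetricSpace Y]

/-- The simplex `l` has its vertices in `D` and diameter at most `ε`. -/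
def FineIn (ε : ℝ) (D : Set X) (l : List X) : Prop := ∀ x ∈ l, x ∈ D ∧ ∀ y ∈ l, dist x y ≤ ε

namespace FineIn

variable {ε : ℝ} {D D' : Set X} {l l' : List X}

lemma mem (h : FineIn ε D l) {x : X} (hx : x ∈ l) : x ∈ D := (h x hx).1

lemma dist_le (h : FineIn ε D l) {x y : X} (hx : x ∈ l) (hy : y ∈ l) : dist x y ≤ ε :=
  (h x hx).2 y hy

lemma subset (h : FineIn ε D l) (hl : l' ⊆ l) : FineIn ε D l' :=
  fun _ hx => ⟨h.mem (hl hx), fun _ hy => h.dist_le (hl hx) (hl hy)⟩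

lemma mono (h : FineIn ε D l) (hD : ∀ x ∈ l, x ∈ D → x ∈ D') : FineIn ε D' l :=
  fun _ hx => ⟨hD _ hx (h.mem hx), fun _ => h.dist_le hx⟩

lemma prod {E : Set Y} {b : List Y} {L : List (X × Y)} (hl : FineIn ε D l) (hb : FineIn ε E b)
    (hL : ∀ p ∈ L, p.1 ∈ l ∧ p.2 ∈ b) : FineIn ε (D ×ˢ E) L :=
  fun p hp => ⟨⟨hl.mem (hL p hp).1, hb.mem (hL p hp).2⟩, fun q hq =>
    max_le (hl.dist_le (hL p hp).1 (hL q hq).1) (hb.dist_le (hL p hp).2 (hL q hq).2)⟩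

end FineIn

lemma tendsto_two_div_nhdsGT_zero :
    Filter.Tendsto (fun n : ℕ => (2 / n : ℝ)) Filter.atTop (nhdsWithin 0 (Ioi 0)) :=
  tendsto_nhdsWithin_iff.2 ⟨tendsto_const_div_atTop_nhds_zero_nat 2,
    (Filter.eventually_gt_atTop 0).mono fun _ hn => mem_Ioi.2 (div_pos two_pos (Nat.cast_pos.2 hn))⟩

end FineLists

section CubeChain

/-- The `i`-th point of the subdivision of `[-1, 1]` into `n` intervals. -/
noncomputable def gridPoint (n i : ℕ) : ℝ := -1 + 2 * i / n

lemma gridPoint_zero (n : ℕ) : gridPoint n 0 = -1 := by simp [gridPoint]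

lemma gridPoint_self {n : ℕ} (hn : 0 < n) : gridPoint n n = 1 := by
  have : (n : ℝ) ≠ 0 := by positivity
  rw [gridPoint]
  field_simp
  norm_num

lemma gridPoint_mem_closedBall {n i : ℕ} (hi : i ≤ n) : gridPoint n i ∈ Metric.closedBall 0 1 := by
  have hi' : (i : ℝ) / n ≤ 1 := div_le_one_of_le₀ (by exact_mod_cast hi) n.cast_nonneg
  have h0 : 0 ≤ (i : ℝ) / n := by positivity
  rw [mem_closedBall_zero_iff, Real.norm_eq_abs, abs_le, gridPoint, mul_div_assoc]
  constructor <;> linarith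

lemma dist_gridPoint_succ (n i : ℕ) : dist (gridPoint n i) (gridPoint n (i + 1)) = 2 / n := by
  have sub_eq : gridPoint n i - gridPoint n (i + 1) = -(2 / n) := by
    rw [gridPoint, gridPoint]
    push_cast
    ring
  rw [Real.dist_eq, sub_eq, abs_neg, abs_of_nonneg (by positivity)]

lemma supportedOn_path_gridPoint (n : ℕ) :
    (path (gridPoint n) n).SupportedOn
      fun l => l.length = 2 ∧ FineIn (2 / n) (Metric.closedBall 0 1) l := by
  refine (supportedOn_path _ _).mono ?_
  rintro l ⟨i, hi, rfl⟩
  have h0 : (0 : ℝ) ≤ 2 / n := by positivity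
  have hdist := (dist_gridPoint_succ n i).le
  have hdist' := (dist_comm _ _).trans_le hdist
  have hmem := gridPoint_mem_closedBall hi.le
  have hmem' := gridPoint_mem_closedBall (Nat.succ_le_of_lt hi)
  simp_all [FineIn]

lemma supportedOn_boundary_path_gridPoint {n : ℕ} (hn : 0 < n) :
    (path (gridPoint n) n).boundary.SupportedOn fun l => ∀ x ∈ l, x ∈ Metric.sphere 0 1 := by
  intro φ ψ h
  simp only [boundary_path, AddMonoidHom.sub_apply, simplex_apply]
  rw [h [gridPoint n n] (by simp [gridPoint_self hn]), h [gridPoint n 0] (by simp [gridPoint_zero])]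

/-- The fundamental chain of `[-1, 1]ʲ`, subdivided into simplices of diameter at most `2 / n`. -/
noncomputable def cubeChain (n : ℕ) : (j : ℕ) → Chain (Fin j → ℝ)
  | 0 => simplex [Fin.elim0]
  | j + 1 => ((cubeChain n j).prod (path (gridPoint n) n)).map
      fun q => Fin.snoc (α := fun _ => ℝ) q.1 q.2

variable {n j : ℕ}

lemma norm_snoc (v : Fin j → ℝ) (t : ℝ) :
    ‖(Fin.snoc v t : Fin (j + 1) → ℝ)‖ = max ‖v‖ ‖t‖ := by
  refine le_antisymm ((pi_norm_le_iff_of_nonneg (by positivity)).2 fun i => ?_) (max_le ?_ ?_)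
  · refine Fin.lastCases ?_ (fun i => ?_) i
    · simp
    · simpa using Or.inl (norm_le_pi_norm v i)
  · refine (pi_norm_le_iff_of_nonneg (norm_nonneg _)).2 fun i => ?_
    simpa using norm_le_pi_norm (Fin.snoc v t : Fin (j + 1) → ℝ) i.castSucc
  · simpa using norm_le_pi_norm (Fin.snoc v t : Fin (j + 1) → ℝ) (Fin.last j)

lemma dist_snoc (v w : Fin j → ℝ) (s t : ℝ) :
    dist (Fin.snoc v s : Fin (j + 1) → ℝ) (Fin.snoc w t) = max (dist v w) (dist s t) := by
  rw [dist_eq_norm, dist_eq_norm, dist_eq_norm, ← norm_snoc]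
  congr 1
  ext i
  refine Fin.lastCases ?_ (fun i => ?_) i <;> simp

lemma FineIn.map_snoc {ε : ℝ} {a : List (Fin j → ℝ)} {b : List ℝ} {L : List ((Fin j → ℝ) × ℝ)}
    (ha : FineIn ε (Metric.closedBall 0 1) a) (hb : FineIn ε (Metric.closedBall 0 1) b)
    (hL : ∀ p ∈ L, p.1 ∈ a ∧ p.2 ∈ b) :
    FineIn ε (Metric.closedBall 0 1)
      (L.map fun q => (Fin.snoc q.1 q.2 : Fin (j + 1) → ℝ)) := by
  intro _ hx
  obtain ⟨p, hp, rfl⟩ := List.mem_map.1 hx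
  obtain ⟨hmem, hdist⟩ := ha.prod hb hL p hp
  refine ⟨?_, fun _ hy => ?_⟩
  · rw [mem_closedBall_zero_iff, norm_snoc]
    exact max_le (mem_closedBall_zero_iff.1 hmem.1) (mem_closedBall_zero_iff.1 hmem.2)
  · obtain ⟨q, hq, rfl⟩ := List.mem_map.1 hy
    exact (dist_snoc _ _ _ _).trans_le (hdist q hq)

lemma supportedOn_cubeChain (n j : ℕ) :
    (cubeChain n j).SupportedOn
      fun l => l.length = j + 1 ∧ FineIn (2 / n) (Metric.closedBall 0 1) l := by
  induction j with
  | zero =>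
    refine (supportedOn_simplex _).mono ?_
    rintro l rfl
    have h0 : (0 : ℝ) ≤ 2 / n := by positivity
    refine ⟨rfl, fun x _ => ⟨?_, fun y _ => ?_⟩⟩
    · rw [Subsingleton.elim x 0]
      exact Metric.mem_closedBall_self zero_le_one
    · rwa [Subsingleton.elim x y, dist_self]
  | succ j ih =>
    refine (ih.prod (supportedOn_path_gridPoint n)).map _ ?_
    rintro l ⟨a, b, ⟨ha, ha'⟩, ⟨hb, hb'⟩, hl, hmem⟩
    exact ⟨by grind, ha'.map_snoc hb' hmem⟩

lemma supportedOn_cubeChain_length (n j : ℕ) :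
    (cubeChain n j).SupportedOn (·.length = j + 1) :=
  (supportedOn_cubeChain n j).mono fun _ h => h.1

lemma supportedOn_boundary_cubeChain_sphere (hn : 0 < n) (j : ℕ) :
    (cubeChain n j).boundary.SupportedOn fun l => ∀ x ∈ l, 1 ≤ ‖x‖ := by
  induction j with
  | zero =>
    refine (supportedOn_cubeChain_length n 0).boundary fun l l' hl _ hl' x hx => ?_
    rw [List.length_eq_zero_iff.1 (by omega : l'.length = 0)] at hx
    simp at hx
  | succ j ih =>
    intro φ ψ h
    rw [cubeChain, boundary_map, boundary_prod (supportedOn_cubeChain_length n j)]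
    simp only [map_apply, AddMonoidHom.add_apply, AddMonoidHom.smul_apply]
    refine congrArg₂ _ ?_ (congrArg _ ?_)
    · refine ih.prod (supportedOn_path_gridPoint n) fun l => ?_
      rintro ⟨a, b, ha, -, -, hmem⟩
      refine h _ fun x hx => ?_
      obtain ⟨p, hp, rfl⟩ := List.mem_map.1 hx
      exact (norm_snoc _ _).ge.trans' (le_max_of_le_left (ha _ (hmem p hp).1))
    · refine (supportedOn_cubeChain_length n j).prod
        (supportedOn_boundary_path_gridPoint hn) fun l => ?_
      rintro ⟨a, b, -, hb, -, hmem⟩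
      refine h _ fun x hx => ?_
      obtain ⟨p, hp, rfl⟩ := List.mem_map.1 hx
      exact (norm_snoc _ _).ge.trans'
        (le_max_of_le_right (mem_sphere_zero_iff_norm.1 (hb _ (hmem p hp).2)).ge)

lemma supportedOn_boundary_cubeChain (hn : 0 < n) (j : ℕ) :
    (cubeChain n j).boundary.SupportedOn
      fun l => l.length = j ∧ FineIn (2 / n) (Metric.sphere 0 1) l := by
  have hball : (cubeChain n j).boundary.SupportedOn
      fun l => l.length = j ∧ FineIn (2 / n) (Metric.closedBall 0 1) l :=
    (supportedOn_cubeChain n j).boundary fun l l' hl hsub hlen =>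
      ⟨by omega, hl.2.subset hsub.subset⟩
  refine ((supportedOn_boundary_cubeChain_sphere hn j).inter hball).mono ?_
  rintro l ⟨hone, hlen, hfine⟩
  exact ⟨hlen, hfine.mono fun x hx hx' => mem_sphere_zero_iff_norm.2 <|
    (mem_closedBall_zero_iff.1 hx').antisymm (hone x hx)⟩

lemma path_gridPoint_stepProduct (hn : 0 < n) :
    path (gridPoint n) n (stepProduct [step] 1) = 1 := by
  rw [path_apply]
  refine (Finset.sum_congr rfl fun i _ => mul_one _).trans ?_
  rw [Finset.sum_range_sub fun i => step (gridPoint n i), gridPoint_zero, gridPoint_self hn]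
  norm_num [step]

lemma cubeChain_signCocycle (hn : 0 < n) (j : ℕ) : cubeChain n j (signCocycle id) = 1 := by
  induction j with
  | zero => simp [cubeChain, signCocycle, coordSteps, stepProduct]
  | succ j ih =>
    have pullback_snoc : pullback (fun q : (Fin j → ℝ) × ℝ => (Fin.snoc q.1 q.2 : Fin (j + 1) → ℝ))
        (signCocycle id) = cup j (pullback Prod.fst (signCocycle id))
          (pullback Prod.snd (stepProduct [step] 1)) := by
      rw [signCocycle_succ, pullback_cup, pullback_signCocycle, pullback_signCocycle,
        pullback_stepProduct, pullback_stepProduct]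
      congr 2
      · ext q
        simp
      · simp [Function.comp_def]
    have hpath : (path (gridPoint n) n).SupportedOn (· ≠ []) :=
      (supportedOn_path_gridPoint n).mono fun l h => by rintro rfl; simp at h
    rw [cubeChain, map_apply, pullback_snoc, prod_cup_fst_snd (supportedOn_cubeChain_length n j)
      hpath (normalized_signCocycle _), ih, path_gridPoint_stepProduct hn, one_mul]

lemma boundary_cubeChain_signPrimitive (hn : 0 < n) (k : ℕ) :
    (cubeChain n (k + 1)).boundary (signPrimitive id) = (-1) ^ k := by
  rw [boundary_apply, supportedOn_cubeChain_length n (k + 1) fun l hl =>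
    coboundary_signPrimitive id (by omega), smul_apply, cubeChain_signCocycle hn, mul_one]

end CubeChain

section Smallness

open Filter Topology

variable {X : Type*} [PseudoMetricSpace X] {D : Set X}

lemma step_eq_step_of_abs_sub_lt {r s t : ℝ} (hr : r ≤ |s|) (h : |t - s| < r) :
    step t = step s := by
  rw [abs_lt] at h
  rcases le_abs.1 hr with hs | hs
  · rw [step, step, if_pos (by linarith), if_pos (by linarith)]
  · rw [step, step, if_neg (by linarith), if_neg (by linarith)]

lemma eventually_signCocycle_eq_zero_of_le_abs {m : ℕ} (hD : IsCompact D) {f : X → Fin m → ℝ}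
    (hf : ContinuousOn f D) {r : ℝ} (hr : 0 < r) :
    ∀ᶠ ε in 𝓝[>] (0 : ℝ), ∀ l, FineIn ε D l → (∃ x ∈ l, ∃ i, r ≤ |f x i|) →
      ∀ l' ⊆ l, signCocycle f l' = 0 := by
  obtain ⟨d, hd, hfd⟩ := Metric.uniformContinuousOn_iff.1
    (hD.uniformContinuousOn_of_continuous hf) r hr
  filter_upwards [Ioo_mem_nhdsGT hd] with ε hε l hl
  rintro ⟨x, hx, i, hi⟩ l' hl'
  have step_const : ∀ y ∈ l, step (f y i) = step (f x i) := fun y hy =>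
    step_eq_step_of_abs_sub_lt hi <| (dist_le_pi_dist (f y) (f x) i).trans_lt <|
      hfd y (hl.mem hy) x (hl.mem hx) ((hl.dist_le hy hx).trans_lt hε.2)
  exact signCocycle_eq_zero i fun y hy z hz =>
    (step_const y (hl' hy)).trans (step_const z (hl' hz)).symm

lemma exists_pos_forall_exists_le_abs {ι : Type*} [Finite ι] (hD : IsCompact D)
    {f : X → ι → ℝ} (hf : ContinuousOn f D) (h0 : ∀ x ∈ D, f x ≠ 0) :
    ∃ r > 0, ∀ x ∈ D, ∃ i, r ≤ |f x i| := by
  have := Fintype.ofFinite ι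
  rcases D.eq_empty_or_nonempty with rfl | hne
  · exact ⟨1, one_pos, by simp⟩
  obtain ⟨x₀, hx₀, hmin⟩ := hD.exists_isMinOn hne hf.norm
  have hpos := norm_pos_iff.2 (h0 x₀ hx₀)
  refine ⟨‖f x₀‖, hpos, fun x hx => ?_⟩
  by_contra! hlt
  exact (hmin hx).not_gt ((pi_norm_lt_iff hpos).2 hlt)

lemma eventually_signCocycle_eq_zero {m : ℕ} (hD : IsCompact D) {f : X → Fin m → ℝ}
    (hf : ContinuousOn f D) (h0 : ∀ x ∈ D, f x ≠ 0) :
    ∀ᶠ ε in 𝓝[>] (0 : ℝ), ∀ l, FineIn ε D l → signCocycle f l = 0 := by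
  obtain ⟨r, hr, hrf⟩ := exists_pos_forall_exists_le_abs hD hf h0
  filter_upwards [eventually_signCocycle_eq_zero_of_le_abs hD hf hr] with ε hε l hl
  match l with
  | [] => exact signCocycle_nil f
  | x :: l => exact hε _ hl ⟨x, by simp, hrf x (hl.mem (by simp))⟩ _ (List.Subset.refl _)

/-- The prism operator along `[-1, 1]`, applied to `signPrimitive h`. -/
noncomputable def prismPrimitive {k : ℕ} (h : X × ℝ → Fin (k + 1) → ℝ) (n : ℕ) : Cochain X :=
  fun l => (-1) ^ (k + 1) * path (gridPoint n) n fun b => shuffle l b (signPrimitive h)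

lemma coboundary_prismPrimitive {k n : ℕ} (hn : 0 < n)
    {h : X × ℝ → Fin (k + 1) → ℝ}
    (h0 : ∀ L, FineIn (2 / n) (D ×ˢ Metric.closedBall 0 1) L → signCocycle h L = 0)
    {l : List X} (hl : FineIn (2 / n) D l) (hlen : l.length = k + 1) :
    signPrimitive (fun x => h (x, 1)) l =
      signPrimitive (fun x => h (x, -1)) l + δ (prismPrimitive h n) l := by
  have prism_coboundary :
      path (gridPoint n) n (fun b => shuffle l b (δ (signPrimitive h))) = 0 := by
    refine (supportedOn_path_gridPoint n).apply_eq_zero ?_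
    rintro b ⟨hb, hb'⟩
    refine (supportedOn_shuffle l b).apply_eq_zero ?_
    rintro L ⟨hL, hL'⟩
    rw [coboundary_signPrimitive _ (by omega), h0 L (hl.prod hb' hL'), mul_zero]
  have hne : l ≠ [] := by rintro rfl; simp at hlen
  have ends : path (gridPoint n) n (δ fun b => shuffle l b (signPrimitive h)) =
      signPrimitive (fun x => h (x, 1)) l - signPrimitive (fun x => h (x, -1)) l := by
    rw [← boundary_apply, boundary_path, gridPoint_zero, gridPoint_self hn]
    simp only [AddMonoidHom.sub_apply, simplex_apply, shuffle_singleton_right hne]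
    exact congrArg₂ _ (congrFun (pullback_signPrimitive _ h) l)
      (congrFun (pullback_signPrimitive _ h) l)
  simp only [shuffle_coboundary] at prism_coboundary
  have expanded := (map_add (path (gridPoint n) n) _ _).symm.trans prism_coboundary
  rw [apply_coboundary, smul_apply, ends, hlen] at expanded
  rw [show δ (prismPrimitive h n) l = _ from coboundary_smul_apply _ _ l]
  rcases neg_one_pow_eq_or ℤ k with hs | hs <;>
    simp only [pow_succ, hs] at expanded ⊢ <;> linarith

end Smallness

section Stokes

variable {X : Type*} {e : Chain X} {S : List X → Prop} {p : ℕ}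

lemma cup_add_left (p : ℕ) (φ φ' ψ : Cochain X) :
    cup p (φ + φ') ψ = cup p φ ψ + cup p φ' ψ :=
  funext fun _ => add_mul _ _ _

lemma cup_sub_left (p : ℕ) (φ φ' ψ : Cochain X) :
    cup p (φ - φ') ψ = cup p φ ψ - cup p φ' ψ :=
  funext fun _ => sub_mul _ _ _

lemma cup_add_right (p : ℕ) (φ ψ ψ' : Cochain X) :
    cup p φ (ψ + ψ') = cup p φ ψ + cup p φ ψ' :=
  funext fun _ => mul_add _ _ _

lemma cup_sub_right (p : ℕ) (φ ψ ψ' : Cochain X) :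
    cup p φ (ψ - ψ') = cup p φ ψ - cup p φ ψ' :=
  funext fun _ => mul_sub _ _ _

lemma apply_cup_coboundary_eq_zero (he : e.SupportedOn S) (hS : ∀ l, S l → p + 2 ≤ l.length)
    {φ ψ : Cochain X} (hφ : ∀ l, S l → δ φ (l.take (p + 2)) = 0) (hcycle : e.boundary = 0) :
    e (cup p φ (δ ψ)) = 0 := by
  have hboundary : e (δ (cup p φ ψ)) = 0 := DFunLike.congr_fun hcycle _
  rw [he (ψ := fun l => (-1) ^ p * cup p φ (δ ψ) l) fun l hl => by
    rw [coboundary_cup _ _ _ (hS l hl), cup_apply, hφ l hl, zero_mul, zero_add],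
    smul_apply] at hboundary
  exact (mul_eq_zero.1 hboundary).resolve_left (by simp)

lemma apply_coboundary_cup_eq_zero (he : e.SupportedOn S) (hS : ∀ l, S l → p + 2 ≤ l.length)
    {φ ψ : Cochain X} (hψ : ∀ l, S l → δ ψ (l.drop p) = 0) (hcycle : e.boundary = 0) :
    e (cup (p + 1) (δ φ) ψ) = 0 := by
  have hboundary : e (δ (cup p φ ψ)) = 0 := DFunLike.congr_fun hcycle _
  rwa [he (ψ := cup (p + 1) (δ φ) ψ) fun l hl => by
    rw [coboundary_cup _ _ _ (hS l hl), cup_apply p, hψ l hl, mul_zero, mul_zero,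
      add_zero]] at hboundary

end Stokes

section FaceData

variable {X : Type*} [PseudoMetricSpace X] {k : ℕ} {ε : ℝ} {F : Set X} {f : X → Fin (k + 1) → ℝ}
  {R : Bool → Set X} {α : Bool → X → Fin (k + 1) → ℝ}

/-- On `F`, which is covered by `R true` and `R false`, the map `f` has no zeros, and over each
`R i` the sign primitive of `α i` is cohomologous to that of `f`; all this for simplices of
diameter at most `ε`. -/
structure FaceData (ε : ℝ) (F : Set X) (f : X → Fin (k + 1) → ℝ) (R : Bool → Set X)
    (α : Bool → X → Fin (k + 1) → ℝ) where
  /-- The primitives of the differences of the sign primitives. -/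
  primitive : Bool → Cochain X
  cover : ∀ l, FineIn ε F l → ∃ i, FineIn ε (F ∩ R i) l
  signCocycle_eq_zero : ∀ l, FineIn ε F l → signCocycle f l = 0
  signPrimitive_eq : ∀ i l, FineIn ε (F ∩ R i) l → l.length = k + 1 →
    signPrimitive (α i) l = (signPrimitive f + δ (primitive i)) l

namespace FaceData

lemma coboundary_signPrimitive_eq_zero (A : FaceData ε F f R α) {l : List X} (hl : FineIn ε F l)
    (hlen : 2 ≤ l.length) : δ (signPrimitive f) l = 0 := by
  rw [coboundary_signPrimitive _ hlen, A.signCocycle_eq_zero l hl, mul_zero]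

lemma signCocycle_comparison_eq_zero (A : FaceData ε F f R α) {i : Bool} {l : List X}
    (hl : FineIn ε (F ∩ R i) l) (hlen : l.length = k + 2) : signCocycle (α i) l = 0 := by
  have hzero : δ (signPrimitive (α i)) l = 0 := by
    rw [coboundary_congr fun l' hsub hl' =>
      A.signPrimitive_eq i l' (hl.subset hsub.subset) (by omega), map_add,
      coboundary_coboundary, add_zero]
    exact A.coboundary_signPrimitive_eq_zero (hl.mono fun _ _ h => h.1) (by omega)
  rw [coboundary_signPrimitive _ (by omega)] at hzero
  exact (mul_eq_zero.1 hzero).resolve_left (by simp)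

lemma apply_cup_signPrimitive (A : FaceData ε F f R α) {c : Chain X}
    (hc : c.SupportedOn fun l => l.length = 2 * k + 2 ∧ FineIn ε F l) :
    c (cup k (signPrimitive (α true)) (signCocycle (α false))) =
      c.boundary (cup k (signPrimitive f + δ (A.primitive true)) (signPrimitive (α false))) := by
  refine hc ?_
  rintro l ⟨hlen, hl⟩
  have hsign : (-1 : ℤ) ^ k * (-1) ^ k = 1 := by rw [← mul_pow]; simp
  have hcocycle : δ (signPrimitive f + δ (A.primitive true)) (l.take (k + 1 + 1)) = 0 := by
    rw [map_add, coboundary_coboundary, add_zero]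
    exact A.coboundary_signPrimitive_eq_zero (hl.subset (List.take_subset _ l)) (by grind)
  have hcompare : cup k (signPrimitive (α true)) (signCocycle (α false)) l =
      cup k (signPrimitive f + δ (A.primitive true)) (signCocycle (α false)) l := by
    rw [cup_apply, cup_apply]
    obtain ⟨_ | _, hR⟩ := A.cover l hl
    · rw [A.signCocycle_comparison_eq_zero (hR.subset (List.drop_subset k l)) (by grind),
        mul_zero, mul_zero]
    · rw [A.signPrimitive_eq true _ (hR.subset (List.take_subset _ l)) (by grind)]
  rw [coboundary_cup _ _ _ (by omega), cup_apply (k + 1), hcocycle, zero_mul, zero_add, hcompare,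
    cup_apply, cup_apply, coboundary_signPrimitive _ (by grind), mul_left_comm,
    mul_left_comm ((-1) ^ k), ← mul_assoc ((-1) ^ k), hsign, one_mul]

end FaceData

end FaceData

section CubePair

variable {k n : ℕ}

/-- Pairs of points of `ℝᵏ⁺¹`. The unit ball of the sup norm is the cube `[-1, 1]ᵏ⁺¹`. -/
abbrev CubePair (k : ℕ) := (Fin (k + 1) → ℝ) × (Fin (k + 1) → ℝ)

/-- The product of two copies of the cube `[-1, 1]ᵏ⁺¹`. -/
def cubeSquare (k : ℕ) : Set (CubePair k) := Metric.closedBall 0 1 ×ˢ Metric.closedBall 0 1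

/-- The part of the boundary of `cubeSquare k` where the first point is on the boundary. -/
def leftFace (k : ℕ) : Set (CubePair k) := Metric.sphere 0 1 ×ˢ Metric.closedBall 0 1

/-- The part of the boundary of `cubeSquare k` where the second point is on the boundary. -/
def rightFace (k : ℕ) : Set (CubePair k) := Metric.closedBall 0 1 ×ˢ Metric.sphere 0 1

/-- The fundamental chain of `cubeSquare k`. -/
noncomputable def squareChain (n k : ℕ) : Chain (CubePair k) :=
  (cubeChain n (k + 1)).prod (cubeChain n (k + 1))

/-- The fundamental chain of `leftFace k`. -/
noncomputable def leftChain (n k : ℕ) : Chain (CubePair k) :=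
  (cubeChain n (k + 1)).boundary.prod (cubeChain n (k + 1))

/-- The fundamental chain of `rightFace k`. -/
noncomputable def rightChain (n k : ℕ) : Chain (CubePair k) :=
  (cubeChain n (k + 1)).prod (cubeChain n (k + 1)).boundary

/-- The fundamental cycle of the product of spheres `leftFace k ∩ rightFace k`. -/
noncomputable def cornerChain (n k : ℕ) : Chain (CubePair k) :=
  (cubeChain n (k + 1)).boundary.prod (cubeChain n (k + 1)).boundary

lemma Chain.SupportedOn.prod_fineIn {X Y : Type*} [PseudoMetricSpace X] [PseudoMetricSpace Y]
    {c : Chain X} {d : Chain Y} {p q : ℕ} {ε : ℝ} {D : Set X} {E : Set Y}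
    (hc : c.SupportedOn fun l => l.length = p ∧ FineIn ε D l)
    (hd : d.SupportedOn fun l => l.length = q ∧ FineIn ε E l) :
    (c.prod d).SupportedOn fun l => l.length + 1 = p + q ∧ FineIn ε (D ×ˢ E) l := by
  refine (hc.prod hd).mono ?_
  rintro l ⟨a, b, ⟨rfl, ha⟩, ⟨rfl, hb⟩, hlen, hmem⟩
  exact ⟨hlen, ha.prod hb hmem⟩

lemma supportedOn_squareChain (n k : ℕ) :
    (squareChain n k).SupportedOn fun l => l.length = 2 * k + 3 ∧ FineIn (2 / n) (cubeSquare k) l :=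
  (SupportedOn.prod_fineIn (supportedOn_cubeChain n _) (supportedOn_cubeChain n _)).mono
    fun _ h => ⟨by omega, h.2⟩

lemma supportedOn_leftChain (hn : 0 < n) (k : ℕ) :
    (leftChain n k).SupportedOn fun l => l.length = 2 * k + 2 ∧ FineIn (2 / n) (leftFace k) l :=
  (SupportedOn.prod_fineIn (supportedOn_boundary_cubeChain hn _) (supportedOn_cubeChain n _)).mono
    fun _ h => ⟨by omega, h.2⟩

lemma supportedOn_rightChain (hn : 0 < n) (k : ℕ) :
    (rightChain n k).SupportedOn fun l => l.length = 2 * k + 2 ∧ FineIn (2 / n) (rightFace k) l :=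
  (SupportedOn.prod_fineIn (supportedOn_cubeChain n _) (supportedOn_boundary_cubeChain hn _)).mono
    fun _ h => ⟨by omega, h.2⟩

lemma supportedOn_cornerChain (hn : 0 < n) (k : ℕ) :
    (cornerChain n k).SupportedOn
      fun l => l.length = 2 * k + 1 ∧ FineIn (2 / n) (leftFace k ∩ rightFace k) l :=
  (SupportedOn.prod_fineIn (supportedOn_boundary_cubeChain hn _)
    (supportedOn_boundary_cubeChain hn _)).mono fun _ h => ⟨by omega, h.2.mono fun _ _ hx =>
      ⟨⟨hx.1, Metric.sphere_subset_closedBall hx.2⟩, Metric.sphere_subset_closedBall hx.1, hx.2⟩⟩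

lemma supportedOn_boundary_cubeChain_length (hn : 0 < n) (k : ℕ) :
    (cubeChain n (k + 1)).boundary.SupportedOn (·.length = k + 1) :=
  (supportedOn_boundary_cubeChain hn _).mono fun _ h => h.1

lemma boundary_squareChain (n k : ℕ) :
    (squareChain n k).boundary = leftChain n k + (-1 : ℤ) ^ (k + 1) • rightChain n k := by
  rw [squareChain, boundary_prod (supportedOn_cubeChain_length n _), pow_succ, pow_succ]
  simp [leftChain, rightChain, pow_succ]

lemma boundary_leftChain (hn : 0 < n) (k : ℕ) :
    (leftChain n k).boundary = (-1 : ℤ) ^ k • cornerChain n k := by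
  rw [leftChain, boundary_prod (supportedOn_boundary_cubeChain_length hn k), boundary_boundary]
  ext φ
  have zero_prod : (cubeChain n (k + 1)) (slant 0 φ) = 0 := map_zero _
  simp [cornerChain, prod_apply, pow_succ, zero_prod]

lemma boundary_rightChain (n k : ℕ) : (rightChain n k).boundary = cornerChain n k := by
  rw [rightChain, boundary_prod (supportedOn_cubeChain_length n _), boundary_boundary]
  ext φ
  simp [cornerChain, prod_apply]

lemma boundary_cornerChain (n k : ℕ) : (cornerChain n k).boundary = 0 := by
  rw [← boundary_rightChain, boundary_boundary]

lemma cornerChain_cup_fst_snd (hn : 0 < n) :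
    cornerChain n k (cup k (signPrimitive Prod.fst) (signPrimitive Prod.snd)) = 1 := by
  rw [cornerChain, show cup k (signPrimitive (X := CubePair k) Prod.fst) (signPrimitive Prod.snd) =
      cup k (pullback Prod.fst (signPrimitive id)) (pullback Prod.snd (signPrimitive id)) by
    rw [pullback_signPrimitive, pullback_signPrimitive]; rfl,
    prod_cup_fst_snd (supportedOn_boundary_cubeChain_length hn k)
      ((supportedOn_boundary_cubeChain_length hn k).mono fun l hl => by rintro rfl; simp at hl)
      (normalized_signPrimitive _), boundary_cubeChain_signPrimitive hn, ← mul_pow]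
  simp

lemma cornerChain_cup_snd_fst (hn : 0 < n) :
    cornerChain n k (cup k (signPrimitive Prod.snd) (signPrimitive Prod.fst)) = (-1) ^ k := by
  rw [cornerChain, show cup k (signPrimitive (X := CubePair k) Prod.snd) (signPrimitive Prod.fst) =
      cup k (pullback Prod.snd (signPrimitive id)) (pullback Prod.fst (signPrimitive id)) by
    rw [pullback_signPrimitive, pullback_signPrimitive]; rfl,
    prod_cup_snd_fst (supportedOn_boundary_cubeChain_length hn k)
      (supportedOn_boundary_cubeChain_length hn k) (normalized_signPrimitive _),
    boundary_cubeChain_signPrimitive hn, ← mul_pow]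
  rcases Nat.even_or_odd k with h | h <;> simp [pow_mul, h.neg_one_pow]

lemma cornerChain_cup_snd_snd (hn : 0 < n) (hk : 0 < k) :
    cornerChain n k (cup k (signPrimitive Prod.snd) (signPrimitive Prod.snd)) = 0 := by
  rw [cornerChain, show cup k (signPrimitive (X := CubePair k) Prod.snd) (signPrimitive Prod.snd) =
      pullback Prod.snd (cup k (signPrimitive id) (signPrimitive id)) by
    rw [pullback_cup, pullback_signPrimitive]; rfl]
  exact prod_pullback_snd_eq_zero
    ((supportedOn_boundary_cubeChain_length hn k).mono fun l hl => by omega) _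
    (.cup (normalized_signPrimitive _) (normalized_signPrimitive _))

lemma cornerChain_cup_fst_fst (hn : 0 < n) (hk : 0 < k) :
    cornerChain n k (cup k (signPrimitive Prod.fst) (signPrimitive Prod.fst)) = 0 := by
  rw [cornerChain, show cup k (signPrimitive (X := CubePair k) Prod.fst) (signPrimitive Prod.fst) =
      pullback Prod.fst (cup k (signPrimitive id) (signPrimitive id)) by
    rw [pullback_cup, pullback_signPrimitive]; rfl]
  exact prod_pullback_fst_eq_zero _
    ((supportedOn_boundary_cubeChain_length hn k).mono fun l hl => by omega)
    (.cup (normalized_signPrimitive _) (normalized_signPrimitive _))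

end CubePair

section Degree

variable {k n : ℕ} {R : Bool → Set (CubePair k)} {α : Bool → CubePair k → Fin (k + 1) → ℝ}

/-- The difference of the sign primitives of the two projections, corrected by `δ η`. -/
noncomputable def signDifference (η : Cochain (CubePair k)) : Cochain (CubePair k) :=
  signPrimitive Prod.fst - signPrimitive Prod.snd + δ η

lemma exists_fineIn_corner (A : FaceData (2 / n) (leftFace k) Prod.fst R α) {l : List (CubePair k)}
    (hl : FineIn (2 / n) (leftFace k ∩ rightFace k) l) :
    ∃ i, FineIn (2 / n) (leftFace k ∩ rightFace k ∩ R i) l := by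
  obtain ⟨i, hi⟩ := A.cover l (hl.mono fun _ _ h => h.1)
  exact ⟨i, hl.mono fun _ hx h => ⟨h, (hi.mem hx).2⟩⟩

lemma squareChain_cup_signCocycle (n : ℕ) (f g : CubePair k → Fin (k + 1) → ℝ) :
    squareChain n k (cup (k + 1) (signCocycle f) (signCocycle g)) =
      (-1) ^ k * (squareChain n k).boundary (cup k (signPrimitive f) (signCocycle g)) := by
  rw [boundary_apply, ← smul_apply]
  refine supportedOn_squareChain n k ?_
  rintro l ⟨hlen, -⟩
  have hsign : (-1 : ℤ) ^ k * (-1) ^ k = 1 := by rw [← mul_pow]; simp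
  have hg : δ (signCocycle g) (l.drop k) = 0 := by
    rw [coboundary_congr (ψ := fun l => (-1) ^ k * δ (signPrimitive g) l) fun l' _ hl' => by
      rw [coboundary_signPrimitive _ (by grind), ← mul_assoc, hsign, one_mul],
      coboundary_smul_apply, coboundary_coboundary, Pi.zero_apply, mul_zero]
  rw [coboundary_cup _ _ _ (by omega), cup_apply, cup_apply, cup_apply, hg, mul_zero, mul_zero,
    add_zero, coboundary_signPrimitive _ (by grind), ← mul_assoc, ← mul_assoc, hsign, one_mul]

variable (A : FaceData (2 / n) (leftFace k) Prod.fst R α)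
  (B : FaceData (2 / n) (rightFace k) Prod.snd R α)
include A B

lemma coboundary_signDifference_eq_zero {l : List (CubePair k)}
    (hl : FineIn (2 / n) (leftFace k ∩ rightFace k) l) (hlen : 2 ≤ l.length)
    (η : Cochain (CubePair k)) : δ (signDifference η) l = 0 := by
  rw [signDifference, map_add, map_sub, coboundary_coboundary, add_zero, Pi.sub_apply,
    A.coboundary_signPrimitive_eq_zero (hl.mono fun _ _ h => h.1) hlen,
    B.coboundary_signPrimitive_eq_zero (hl.mono fun _ _ h => h.2) hlen, sub_zero]

lemma cornerChain_cup_signDifference (hn : 0 < n) (hk : 0 < k) (η β : Cochain (CubePair k))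
    {ψ : Cochain (CubePair k)} (hψ : ∀ l, FineIn (2 / n) (leftFace k ∩ rightFace k) l →
      2 ≤ l.length → δ ψ l = 0) :
    cornerChain n k (cup k (signDifference η) (ψ + δ β)) =
      cornerChain n k (cup k (signPrimitive Prod.fst) ψ) -
        cornerChain n k (cup k (signPrimitive Prod.snd) ψ) := by
  have right_exact : cornerChain n k (cup k (signDifference η) (δ β)) = 0 :=
    apply_cup_coboundary_eq_zero (supportedOn_cornerChain hn k) (fun l hl => by omega)
      (fun l hl => coboundary_signDifference_eq_zero A B
        (hl.2.subset (List.take_subset _ l)) (by grind) η) (boundary_cornerChain n k)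
  have left_exact : cornerChain n k (cup k (δ η) ψ) = 0 := by
    obtain ⟨k, rfl⟩ : ∃ j, k = j + 1 := ⟨k - 1, by omega⟩
    exact apply_coboundary_cup_eq_zero (supportedOn_cornerChain hn _) (fun l hl => by omega)
      (fun l hl => hψ _ (hl.2.subset (List.drop_subset k l)) (by grind))
      (boundary_cornerChain n _)
  rw [cup_add_right, map_add, right_exact, add_zero, signDifference, cup_add_left, map_add,
    left_exact, add_zero, cup_sub_left, map_sub]

lemma signDifference_eq_zero {i : Bool} {l : List (CubePair k)}
    (hl : FineIn (2 / n) (leftFace k ∩ rightFace k ∩ R i) l) (hlen : l.length = k + 1) :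
    signDifference (A.primitive i - B.primitive i) l = 0 := by
  have hA := A.signPrimitive_eq i l (hl.mono fun _ _ h => ⟨h.1.1, h.2⟩) hlen
  have hB := B.signPrimitive_eq i l (hl.mono fun _ _ h => ⟨h.1.2, h.2⟩) hlen
  simp only [signDifference, map_sub, Pi.add_apply, Pi.sub_apply] at *
  linarith

theorem odd_of_faceData (hn : 0 < n) (hk : 0 < k) : Odd k := by
  have product_eq_zero : cornerChain n k (cup k
      (signDifference (A.primitive true - B.primitive true))
      (signDifference (A.primitive false - B.primitive false))) = 0 := by
    refine (supportedOn_cornerChain hn k).apply_eq_zero ?_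
    rintro l ⟨hlen, hl⟩
    rw [cup_apply]
    obtain ⟨_ | _, hR⟩ := exists_fineIn_corner A hl
    · rw [signDifference_eq_zero A B (hR.subset (List.drop_subset k l)) (by grind), mul_zero]
    · rw [signDifference_eq_zero A B (hR.subset (List.take_subset _ l)) (by grind), zero_mul]
  have expansion := cornerChain_cup_signDifference A B hn hk (A.primitive true - B.primitive true)
    (A.primitive false - B.primitive false)
    (ψ := signPrimitive Prod.fst - signPrimitive Prod.snd) fun l hl hlen => by
      simpa [signDifference] using coboundary_signDifference_eq_zero A B hl hlen 0
  rw [← signDifference, product_eq_zero, cup_sub_right, cup_sub_right, map_sub, map_sub,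
    cornerChain_cup_fst_fst hn hk, cornerChain_cup_fst_snd hn, cornerChain_cup_snd_fst hn,
    cornerChain_cup_snd_snd hn hk] at expansion
  by_contra hodd
  rw [(Nat.not_odd_iff_even.1 hodd).neg_one_pow] at expansion
  norm_num at expansion

lemma cornerChain_cup_signPrimitive_sub (hn : 0 < n) (hk : 0 < k) :
    cornerChain n k (cup k (signPrimitive Prod.fst + δ (A.primitive true))
        (signPrimitive (α false))) -
      cornerChain n k (cup k (signPrimitive Prod.snd + δ (B.primitive true))
        (signPrimitive (α false))) = 1 := by
  have expansion := cornerChain_cup_signDifference A B hn hk (A.primitive true - B.primitive true)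
    (B.primitive false) (ψ := signPrimitive Prod.snd) fun l hl hlen =>
      B.coboundary_signPrimitive_eq_zero (hl.mono fun _ _ h => h.2) hlen
  rw [cornerChain_cup_fst_snd hn, cornerChain_cup_snd_snd hn hk, sub_zero] at expansion
  rw [← expansion, ← map_sub, ← cup_sub_left]
  refine supportedOn_cornerChain hn k ?_
  rintro l ⟨hlen, hl⟩
  have hdiff : signPrimitive Prod.fst + δ (A.primitive true) -
      (signPrimitive Prod.snd + δ (B.primitive true)) =
      signDifference (A.primitive true - B.primitive true) := by
    rw [signDifference, map_sub]
    abel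
  rw [hdiff, cup_apply, cup_apply]
  obtain ⟨_ | _, hR⟩ := exists_fineIn_corner A hl
  · rw [B.signPrimitive_eq false _
      ((hR.subset (List.drop_subset k l)).mono fun _ _ h => ⟨h.1.2, h.2⟩) (by grind)]
  · rw [signDifference_eq_zero A B (hR.subset (List.take_subset _ l)) (by grind), zero_mul,
      zero_mul]

theorem squareChain_cup_signCocycle_eq_one (hn : 0 < n) (hk : 0 < k) :
    squareChain n k (cup (k + 1) (signCocycle (α true)) (signCocycle (α false))) = 1 := by
  have hsign : (-1 : ℤ) ^ k * (-1) ^ k = 1 := by rw [← mul_pow]; simp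
  have hcorner := cornerChain_cup_signPrimitive_sub A B hn hk
  rw [squareChain_cup_signCocycle, boundary_squareChain, AddMonoidHom.add_apply,
    AddMonoidHom.smul_apply, A.apply_cup_signPrimitive (supportedOn_leftChain hn k),
    B.apply_cup_signPrimitive (supportedOn_rightChain hn k), boundary_leftChain hn,
    boundary_rightChain, AddMonoidHom.smul_apply, smul_eq_mul, smul_eq_mul, pow_succ]
  linear_combination hcorner + (cornerChain n k (cup k (signPrimitive Prod.fst +
    δ (A.primitive true)) (signPrimitive (α false))) - cornerChain n k (cup k
    (signPrimitive Prod.snd + δ (B.primitive true)) (signPrimitive (α false)))) * hsign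

end Degree

section Homotopy

open Filter Topology

variable {X : Type*} [PseudoMetricSpace X] {D F : Set X} {k : ℕ}

/-- The maps `f` and `g` are homotopic through nowhere vanishing maps on `D`, up to a change of
the moduli of their coordinates. -/
def StepHomotopic (D : Set X) (f g : X → Fin (k + 1) → ℝ) : Prop :=
  ∃ h : X × ℝ → Fin (k + 1) → ℝ, ContinuousOn h (D ×ˢ Icc (-1) 1) ∧
    (∀ p ∈ D ×ˢ Icc (-1 : ℝ) 1, h p ≠ 0) ∧
    ∀ x ∈ D, ∀ j, step (h (x, -1) j) = step (f x j) ∧ step (h (x, 1) j) = step (g x j)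

lemma StepHomotopic.eventually_exists_signPrimitive_eq (hD : IsCompact D)
    {f g : X → Fin (k + 1) → ℝ} (hfg : StepHomotopic D f g) :
    ∀ᶠ n : ℕ in atTop, ∃ β : Cochain X, ∀ l, FineIn (2 / n) D l → l.length = k + 1 →
      signPrimitive g l = (signPrimitive f + δ β) l := by
  obtain ⟨h, hcont, hne, hends⟩ := hfg
  filter_upwards [tendsto_two_div_nhdsGT_zero.eventually
    (eventually_signCocycle_eq_zero (hD.prod isCompact_Icc) hcont hne), eventually_gt_atTop 0]
    with n hn hn0
  refine ⟨prismPrimitive h n, fun l hl hlen => ?_⟩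
  rw [show Icc (-1 : ℝ) 1 = Metric.closedBall 0 1 by simp [Real.closedBall_eq_Icc]] at hn
  have prism := coboundary_prismPrimitive hn0 hn hl hlen
  rwa [signPrimitive_congr fun x hx i => (hends x (hl.mem hx) i).1,
    signPrimitive_congr fun x hx i => (hends x (hl.mem hx) i).2] at prism

lemma eventually_exists_forall_quarter_le (hF : IsCompact F) {ρ : Bool → X → ℝ}
    (hρ : ∀ i, ContinuousOn (ρ i) F) (hsum : ∀ x ∈ F, ρ true x + ρ false x = 1) :
    ∀ᶠ ε in 𝓝[>] (0 : ℝ), ∀ l, FineIn ε F l → ∃ i, ∀ x ∈ l, 1 / 4 ≤ ρ i x := by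
  obtain ⟨d, hd, hρd⟩ := Metric.uniformContinuousOn_iff.1
    (hF.uniformContinuousOn_of_continuous (hρ true)) (1 / 4) (by norm_num)
  filter_upwards [Ioo_mem_nhdsGT hd] with ε hε l hl
  by_contra! hsmall
  obtain ⟨x, hx, hxρ⟩ := hsmall true
  obtain ⟨y, hy, hyρ⟩ := hsmall false
  have hdist := hρd x (hl.mem hx) y (hl.mem hy) ((hl.dist_le hx hy).trans_lt hε.2)
  rw [Real.dist_eq, abs_lt] at hdist
  linarith [hsum y (hl.mem hy)]

lemma eventually_nonempty_faceData [T2Space X] (hF : IsCompact F) {ρ : Bool → X → ℝ}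
    (hρ : ∀ i, ContinuousOn (ρ i) F) (hsum : ∀ x ∈ F, ρ true x + ρ false x = 1)
    {f : X → Fin (k + 1) → ℝ} (hf : ContinuousOn f F) (hf0 : ∀ x ∈ F, f x ≠ 0)
    {α : Bool → X → Fin (k + 1) → ℝ}
    (hα : ∀ i, StepHomotopic (F ∩ {x | 1 / 4 ≤ ρ i x}) f (α i)) :
    ∀ᶠ n : ℕ in atTop, Nonempty (FaceData (2 / n) F f (fun i => {x | 1 / 4 ≤ ρ i x}) α) := by
  have hcompact (i : Bool) : IsCompact (F ∩ {x | 1 / 4 ≤ ρ i x}) :=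
    hF.of_isClosed_subset ((hρ i).preimage_isClosed_of_isClosed hF.isClosed isClosed_Ici)
      inter_subset_left
  filter_upwards [
    tendsto_two_div_nhdsGT_zero.eventually (eventually_exists_forall_quarter_le hF hρ hsum),
    tendsto_two_div_nhdsGT_zero.eventually (eventually_signCocycle_eq_zero hF hf hf0),
    eventually_all.2 fun i => (hα i).eventually_exists_signPrimitive_eq (hcompact i)]
    with n hcover hcocycle hprimitive
  choose β hβ using hprimitive
  exact ⟨{
    primitive := β
    cover := fun l hl => (hcover l hl).imp fun i hi => hl.mono fun x hx hxF => ⟨hxF, hi x hx⟩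
    signCocycle_eq_zero := hcocycle
    signPrimitive_eq := hβ }⟩

lemma leftFace_subset_cubeSquare (k : ℕ) : leftFace k ⊆ cubeSquare k :=
  prod_mono_left Metric.sphere_subset_closedBall

lemma rightFace_subset_cubeSquare (k : ℕ) : rightFace k ⊆ cubeSquare k :=
  prod_mono_right Metric.sphere_subset_closedBall

lemma isCompact_cubeSquare (k : ℕ) : IsCompact (cubeSquare k) :=
  (isCompact_closedBall _ _).prod (isCompact_closedBall _ _)

theorem odd_and_eventually_squareChain_eq_one (hk : 0 < k) {ρ : Bool → CubePair k → ℝ}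
    (hρ : ∀ i, ContinuousOn (ρ i) (cubeSquare k))
    (hsum : ∀ p ∈ cubeSquare k, ρ true p + ρ false p = 1)
    {α : Bool → CubePair k → Fin (k + 1) → ℝ}
    (hleft : ∀ i, StepHomotopic (leftFace k ∩ {p | 1 / 4 ≤ ρ i p}) Prod.fst (α i))
    (hright : ∀ i, StepHomotopic (rightFace k ∩ {p | 1 / 4 ≤ ρ i p}) Prod.snd (α i)) :
    Odd k ∧ ∀ᶠ n : ℕ in atTop,
      squareChain n k (cup (k + 1) (signCocycle (α true)) (signCocycle (α false))) = 1 := by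
  have faces : ∀ᶠ n : ℕ in atTop, Odd k ∧
      squareChain n k (cup (k + 1) (signCocycle (α true)) (signCocycle (α false))) = 1 := by
    filter_upwards [eventually_gt_atTop 0, eventually_nonempty_faceData
      ((isCompact_sphere 0 1).prod (isCompact_closedBall 0 1))
      (fun i => (hρ i).mono (leftFace_subset_cubeSquare k))
      (fun p hp => hsum p (leftFace_subset_cubeSquare k hp)) continuousOn_fst
      (fun p hp => ne_zero_of_mem_unit_sphere ⟨p.1, hp.1⟩) hleft, eventually_nonempty_faceData
      ((isCompact_closedBall 0 1).prod (isCompact_sphere 0 1))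
      (fun i => (hρ i).mono (rightFace_subset_cubeSquare k))
      (fun p hp => hsum p (rightFace_subset_cubeSquare k hp)) continuousOn_snd
      (fun p hp => ne_zero_of_mem_unit_sphere ⟨p.2, hp.2⟩) hright] with n hn hA hB
    obtain ⟨A⟩ := hA
    obtain ⟨B⟩ := hB
    exact ⟨odd_of_faceData A B hn hk, squareChain_cup_signCocycle_eq_one A B hn hk⟩
  exact ⟨faces.exists.choose_spec.1, faces.mono fun _ h => h.2⟩

end Homotopy

section PermutationModule

variable {G : Type*} [Group G]

-- A sum over `G` of the cocycle is a primitive of `|G|` times it, and the remainders modulo `|G|`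
-- are `G`-invariant because `G` only permutes the coordinates.
lemma exists_eq_sub_of_cocycle [Finite G] {S : Type*} [MulAction G S] {κ : G → S → ℤ}
    (hκ : ∀ g h s, κ (g * h) (g • s) = κ g (g • s) + κ h s) :
    ∃ e : S → ℤ, ∀ g s, κ g (g • s) = e (g • s) - e s := by
  have := Fintype.ofFinite G
  have hcard : (Fintype.card G : ℤ) ≠ 0 := mod_cast Fintype.card_ne_zero
  refine ⟨fun s => (∑ h, κ h s) / Fintype.card G, fun g s => ?_⟩
  have sum_smul : ∑ h, κ h (g • s) = ∑ h, κ h s + Fintype.card G * κ g (g • s) := by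
    rw [← Equiv.sum_comp (Equiv.mulLeft g)]
    simp only [Equiv.coe_mulLeft, hκ, Finset.sum_add_distrib, Finset.sum_const, Finset.card_univ,
      nsmul_eq_mul, add_comm]
  simp only [sum_smul, Int.add_mul_ediv_left _ _ hcard, add_sub_cancel_left]

variable {Λ : Type*} [MulAction G Λ] [Fintype Λ]

lemma card_dvd_sum_of_invariant [MulAction.IsPretransitive G Λ] {f : Λ → ℤ}
    (hf : ∀ (g : G) x, f (g • x) = f x) : (Fintype.card Λ : ℤ) ∣ ∑ x, f x := by
  rcases isEmpty_or_nonempty Λ with _ | ⟨⟨x₀⟩⟩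
  · simp
  · have f_eq (x : Λ) : f x = f x₀ := by
      obtain ⟨g, rfl⟩ := MulAction.exists_smul_eq G x₀ x
      exact hf g x₀
    simp [f_eq]

lemma sum_smul_fiber (g : G) (e : Λ → ℤ) : ∑ y, e (g • y) = ∑ y, e y :=
  (MulAction.bijective g).sum_comp e

theorem card_dvd_sum_add_sum_of_cocycle [Finite G] [MulAction.IsPretransitive G Λ] {a b : Λ → ℤ}
    {κ : G → Λ × Λ → ℤ} (hκ : ∀ g h s, κ (g * h) (g • s) = κ g (g • s) + κ h s)
    (ha : ∀ g x, a (g • x) = a x + ∑ y, κ g (g • (x, y)))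
    (hb : ∀ g y, b (g • y) = b y - ∑ x, κ g (g • (x, y))) :
    (Fintype.card Λ : ℤ) ∣ ∑ x, a x + ∑ y, b y := by
  obtain ⟨e, he⟩ := exists_eq_sub_of_cocycle hκ
  have left_invariant (g : G) (x : Λ) :
      a (g • x) - ∑ y, e (g • x, y) = a x - ∑ y, e (x, y) := by
    rw [ha, ← sum_smul_fiber g fun y => e (g • x, y)]
    simp only [he, Finset.sum_sub_distrib, ← Prod.smul_mk]
    ring
  have right_invariant (g : G) (y : Λ) :
      b (g • y) + ∑ x, e (x, g • y) = b y + ∑ x, e (x, y) := by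
    rw [hb, ← sum_smul_fiber g fun x => e (x, g • y)]
    simp only [he, Finset.sum_sub_distrib, ← Prod.smul_mk]
    ring
  have sum_eq : ∑ x, a x + ∑ y, b y
      = ∑ x, (a x - ∑ y, e (x, y)) + ∑ y, (b y + ∑ x, e (x, y)) := by
    rw [Finset.sum_sub_distrib, Finset.sum_add_distrib, Finset.sum_comm (f := fun x y => e (x, y))]
    ring
  rw [sum_eq]
  exact (card_dvd_sum_of_invariant left_invariant).add (card_dvd_sum_of_invariant right_invariant)

end PermutationModule

section SegmentChain

variable {X Y : Type*} [PseudoMetricSpace X] [PseudoMetricSpace Y] in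
lemma FineIn.map {ε η K : ℝ} {D : Set X} {E : Set Y} {f : X → Y} {l : List X} (hl : FineIn η D l)
    (hK : 0 ≤ K) (hmem : MapsTo f D E)
    (hf : ∀ x ∈ D, ∀ y ∈ D, dist (f x) (f y) ≤ K * dist x y) (hη : K * η ≤ ε) :
    FineIn ε E (l.map f) := by
  intro _ hfx
  obtain ⟨x, hx, rfl⟩ := List.mem_map.1 hfx
  refine ⟨hmem (hl.mem hx), fun _ hfy => ?_⟩
  obtain ⟨y, hy, rfl⟩ := List.mem_map.1 hfy
  exact (hf x (hl.mem hx) y (hl.mem hy)).trans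
    ((mul_le_mul_of_nonneg_left (hl.dist_le hx hy) hK).trans hη)

variable {W : Type*} [NormedAddCommGroup W] [NormedSpace ℝ W]

/-- The segment from `w` to `w'`, parametrised by `[-1, 1]`. -/
noncomputable def segmentMap (w w' : W) (t : ℝ) : W := AffineMap.lineMap w w' ((1 + t) / 2)

/-- The triangle with vertices `w`, `w'`, `w''`, as the cone with apex `w` over the opposite side,
parametrised by `[-1, 1] × [-1, 1]`. -/
noncomputable def triangleMap (w w' w'' : W) (q : ℝ × ℝ) : W :=
  segmentMap w (segmentMap w' w'' q.2) q.1

/-- The segment from `w` to `w'`, subdivided into `n` edges. -/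
noncomputable def segmentChain (n : ℕ) (w w' : W) : Chain W :=
  (path (gridPoint n) n).map (segmentMap w w')

lemma segmentMap_one (w w' : W) : segmentMap w w' 1 = w' := by norm_num [segmentMap]

lemma segmentMap_neg_one (w w' : W) : segmentMap w w' (-1) = w := by norm_num [segmentMap]

lemma segmentMap_mem_convexHull {S : Set W} {w w' : W} (hw : w ∈ convexHull ℝ S)
    (hw' : w' ∈ convexHull ℝ S) {t : ℝ} (ht : t ∈ Metric.closedBall 0 1) :
    segmentMap w w' t ∈ convexHull ℝ S := by
  rw [mem_closedBall_zero_iff, Real.norm_eq_abs, abs_le] at ht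
  exact (convex_convexHull ℝ S).lineMap_mem hw hw' ⟨by linarith, by linarith⟩

lemma dist_segmentMap_le {w u u' : W} {s t R : ℝ} (hw : ‖w‖ ≤ R) (hu : ‖u‖ ≤ R)
    (ht : t ∈ Metric.closedBall 0 1) :
    dist (segmentMap w u s) (segmentMap w u' t) ≤ R * dist s t + dist u u' := by
  rw [mem_closedBall_zero_iff, Real.norm_eq_abs, abs_le] at ht
  have sub_eq : segmentMap w u s - segmentMap w u' t
      = ((s - t) / 2) • (u - w) + ((1 + t) / 2) • (u - u') := by
    simp only [segmentMap, AffineMap.lineMap_apply_module]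
    module
  rw [dist_eq_norm, sub_eq, dist_eq_norm u, Real.dist_eq]
  refine (norm_add_le _ _).trans (add_le_add ?_ ?_)
  · rw [norm_smul, Real.norm_eq_abs, abs_div, abs_two]
    nlinarith [norm_sub_le u w, abs_nonneg (s - t)]
  · rw [norm_smul, Real.norm_eq_abs, abs_of_nonneg (by linarith)]
    nlinarith [norm_nonneg (u - u')]

section Bounded

variable {D : Set W} {ε R : ℝ} {n : ℕ} {w w' w'' : W}

lemma supportedOn_segmentChain (hR : ∀ u ∈ D, ‖u‖ ≤ R) (hn : 2 * R * (2 / n) ≤ ε)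
    (hD : convexHull ℝ {w, w'} ⊆ D) :
    (segmentChain n w w').SupportedOn fun l => l.length = 2 ∧ FineIn ε D l := by
  have hw : w ∈ convexHull ℝ {w, w'} := subset_convexHull ℝ _ (by simp)
  have hw' : w' ∈ convexHull ℝ {w, w'} := subset_convexHull ℝ _ (by simp)
  have hR₀ : 0 ≤ R := (norm_nonneg w).trans (hR w (hD hw))
  refine (supportedOn_path_gridPoint n).map _ fun l hl => ⟨by simpa using hl.1,
    hl.2.map (by positivity) (fun t ht => hD (segmentMap_mem_convexHull hw hw' ht))
      (fun s _ t ht => ?_) hn⟩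
  refine (dist_segmentMap_le (hR _ (hD hw)) (hR _ (hD hw')) ht).trans ?_
  rw [dist_self]
  nlinarith [mul_nonneg hR₀ (dist_nonneg (x := s) (y := t))]

lemma supportedOn_triangleChain (hR : ∀ u ∈ D, ‖u‖ ≤ R) (hn : 2 * R * (2 / n) ≤ ε)
    (hD : convexHull ℝ {w, w', w''} ⊆ D) :
    (((path (gridPoint n) n).prod (path (gridPoint n) n)).map (triangleMap w w' w'')).SupportedOn
      fun l => l.length = 3 ∧ FineIn ε D l := by
  have vertex_mem {u : W} (hu : u ∈ ({w, w', w''} : Set W)) : u ∈ convexHull ℝ {w, w', w''} :=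
    subset_convexHull ℝ _ hu
  have side_mem {t : ℝ} (ht : t ∈ Metric.closedBall 0 1) :
      segmentMap w' w'' t ∈ convexHull ℝ {w, w', w''} :=
    segmentMap_mem_convexHull (vertex_mem (by simp)) (vertex_mem (by simp)) ht
  have norm_le {u : W} (hu : u ∈ convexHull ℝ {w, w', w''}) : ‖u‖ ≤ R := hR u (hD hu)
  have hR₀ : 0 ≤ R := (norm_nonneg w).trans (norm_le (vertex_mem (by simp)))
  refine (SupportedOn.prod_fineIn (supportedOn_path_gridPoint n)
    (supportedOn_path_gridPoint n)).map _ fun l hl => ⟨by simpa using hl.1, hl.2.map (by positivity)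
      (fun p hp => hD (segmentMap_mem_convexHull (vertex_mem (by simp)) (side_mem hp.2) hp.1))
      (fun p hp q hq => ?_) hn⟩
  have cone_le := dist_segmentMap_le (s := p.1) (u' := segmentMap w' w'' q.2)
    (norm_le (vertex_mem (by simp : w ∈ _))) (norm_le (side_mem hp.2)) hq.1
  have side_le := dist_segmentMap_le (s := p.2) (u' := w'')
    (norm_le (vertex_mem (by simp : w' ∈ _))) (norm_le (vertex_mem (by simp : w'' ∈ _))) hq.2
  have fst_le : R * dist p.1 q.1 ≤ R * dist p q := mul_le_mul_of_nonneg_left (le_max_left _ _) hR₀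
  have snd_le : R * dist p.2 q.2 ≤ R * dist p q := mul_le_mul_of_nonneg_left (le_max_right _ _) hR₀
  rw [dist_self] at side_le
  rw [triangleMap, triangleMap]
  linarith

end Bounded

variable {n : ℕ} {w w' w'' : W}

lemma boundary_segmentChain (hn : 0 < n) (w w' : W) :
    (segmentChain n w w').boundary = simplex [w'] - simplex [w] := by
  ext φ
  rw [segmentChain, boundary_map, boundary_path, gridPoint_self hn, gridPoint_zero]
  simp [map_apply, segmentMap_one, segmentMap_neg_one]

lemma boundary_triangleChain (hn : 0 < n) {Ψ : Cochain W} (hΨ : Ψ [w, w] = 0) :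
    (((path (gridPoint n) n).prod (path (gridPoint n) n)).map (triangleMap w w' w'')).boundary Ψ
      = segmentChain n w' w'' Ψ - segmentChain n w w'' Ψ + segmentChain n w w' Ψ := by
  have edges : (path (gridPoint n) n).SupportedOn fun l => ∃ x y, l = [x, y] :=
    (supportedOn_path _ _).mono fun l ⟨i, _, h⟩ => ⟨_, _, h⟩
  have apex_face : (simplex [-1]).prod (path (gridPoint n) n)
      (pullback (triangleMap w w' w'') Ψ) = 0 := by
    refine edges.apply_eq_zero ?_
    rintro _ ⟨x, y, rfl⟩
    simp [slant_apply, shuffle_singleton_left, triangleMap, segmentMap_neg_one, hΨ]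
  have opposite_face : (simplex [1]).prod (path (gridPoint n) n)
      (pullback (triangleMap w w' w'') Ψ) = segmentChain n w' w'' Ψ := by
    refine edges ?_
    rintro _ ⟨x, y, rfl⟩
    simp [slant_apply, shuffle_singleton_left, triangleMap, segmentMap_one]
  have sides (t : ℝ) : (path (gridPoint n) n).map (·, t) (pullback (triangleMap w w' w'') Ψ)
      = segmentChain n w (segmentMap w' w'' t) Ψ := by
    simp [map_apply, segmentChain, triangleMap, Function.comp_def, pullback]
  have sub_prod (c c' : Chain ℝ) (d : Chain ℝ) : (c - c').prod d = c.prod d - c'.prod d := by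
    ext χ
    exact map_sub d _ _
  rw [boundary_map, boundary_prod ((supportedOn_path_gridPoint n).mono fun _ h => h.1),
    prod_boundary_path (edges.mono (by rintro _ ⟨x, y, rfl⟩; simp)), boundary_path,
    gridPoint_self hn, gridPoint_zero, map_apply, sub_prod]
  simp only [AddMonoidHom.add_apply, AddMonoidHom.sub_apply, AddMonoidHom.smul_apply,
    smul_eq_mul, apex_face, opposite_face, sides, segmentMap_one, segmentMap_neg_one]
  ring

theorem segmentChain_add_segmentChain {D : Set W} {ε R : ℝ} (hn : 0 < n) (hR : ∀ u ∈ D, ‖u‖ ≤ R)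
    (hε : 2 * R * (2 / n) ≤ ε) {Ψ : Cochain W}
    (hΨ : ∀ l, FineIn ε D l → l.length = 3 → δ Ψ l = 0) (hD : convexHull ℝ {w, w', w''} ⊆ D) :
    segmentChain n w w' Ψ + segmentChain n w' w'' Ψ = segmentChain n w w'' Ψ := by
  have hw : w ∈ D := hD (subset_convexHull ℝ _ (by simp))
  have hR₀ : 0 ≤ R := (norm_nonneg w).trans (hR w hw)
  have hε₀ : 0 ≤ ε := le_trans (by positivity) hε
  have degenerate : Ψ [w, w] = 0 := by
    have := hΨ [w, w, w] (by simp [FineIn, hw, hε₀]) rfl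
    simpa using this
  have boundary_eq := boundary_triangleChain (w' := w') (w'' := w'') hn degenerate
  rw [boundary_apply, (supportedOn_triangleChain hR hε hD).apply_eq_zero fun l hl =>
    hΨ l hl.2 hl.1] at boundary_eq
  linarith

end SegmentChain

section TransitionSystem

variable {G Λ W : Type*} [Group G] [MulAction G Λ] [Fintype Λ] [NormedAddCommGroup W]
  [NormedSpace ℝ W] {π : Representation ℝ G W} {ε : ℝ} {D : Set W}

lemma map_segmentChain (f : W →ₗ[ℝ] W) (n : ℕ) (w w' : W) :
    (segmentChain n w w').map f = segmentChain n (f w) (f w') := by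
  ext φ
  simp only [segmentChain, map_apply, pullback_apply, path_apply, List.map_cons, List.map_nil,
    segmentMap, AffineMap.lineMap_apply_module, map_add, map_smul]

/-- An equivariant family of integer weights on two copies of `Λ`, indexed by `Bool`, together with
a locally constant record of the weight moving from one copy to the other: `transition (x, y)`
integrates along a path to the amount that leaves `x` in the copy `true` and reaches `y` in the
copy `false`. All conditions are only imposed on fine lists in `D`. -/
structure TransitionSystem (π : Representation ℝ G W) (Λ : Type*) [MulAction G Λ] [Fintype Λ]
    (ε : ℝ) (D : Set W) where
  transition : Λ × Λ → Cochain W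
  weight : Bool → Λ → Cochain W
  coboundary_transition : ∀ s l, FineIn ε D l → l.length = 3 → δ (transition s) l = 0
  coboundary_weight_true : ∀ x l, FineIn ε D l → l.length = 2 →
    δ (weight true x) l = -∑ y, transition (x, y) l
  coboundary_weight_false : ∀ y l, FineIn ε D l → l.length = 2 →
    δ (weight false y) l = ∑ x, transition (x, y) l
  transition_map : ∀ g s l, FineIn ε D l → transition (g • s) (l.map (π g)) = transition s l
  weight_map : ∀ g i x l, FineIn ε D l → weight i (g • x) (l.map (π g)) = weight i x l

namespace TransitionSystem

variable (T : TransitionSystem π Λ ε D)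

/-- The total transition along the segment from `w` to `w'`, subdivided into `n` steps. -/
noncomputable def integral (n : ℕ) (w w' : W) (s : Λ × Λ) : ℤ :=
  segmentChain n w w' (T.transition s)

/-- The failure of `T.integral n u v` to be invariant under `g` acting on `v` and on the index. -/
noncomputable def defect (n : ℕ) (u v : W) (g : G) (s : Λ × Λ) : ℤ :=
  T.integral n u (π g v) s - T.integral n u v (g⁻¹ • s)

variable {T} {n : ℕ} {R : ℝ} {u v w w' : W}

lemma integral_map (hR : ∀ u ∈ D, ‖u‖ ≤ R) (hε : 2 * R * (2 / n) ≤ ε)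
    (hD : convexHull ℝ {w, w'} ⊆ D) (g : G) (s : Λ × Λ) :
    T.integral n (π g w) (π g w') (g • s) = T.integral n w w' s := by
  rw [integral, ← map_segmentChain]
  exact supportedOn_segmentChain hR hε hD fun l hl => T.transition_map g s l hl.2

lemma weight_true_sub (hn : 0 < n) (hR : ∀ u ∈ D, ‖u‖ ≤ R) (hε : 2 * R * (2 / n) ≤ ε)
    (hD : convexHull ℝ {w, w'} ⊆ D) (x : Λ) :
    T.weight true x [w'] - T.weight true x [w] = -∑ y, T.integral n w w' (x, y) := by
  calc T.weight true x [w'] - T.weight true x [w]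
    _ = (segmentChain n w w').boundary (T.weight true x) := by rw [boundary_segmentChain hn]; rfl
    _ = segmentChain n w w' (-∑ y, T.transition (x, y)) :=
      supportedOn_segmentChain hR hε hD fun l hl => by
        simpa using T.coboundary_weight_true x l hl.2 hl.1
    _ = -∑ y, T.integral n w w' (x, y) := by rw [map_neg, map_sum]; rfl

lemma weight_false_sub (hn : 0 < n) (hR : ∀ u ∈ D, ‖u‖ ≤ R) (hε : 2 * R * (2 / n) ≤ ε)
    (hD : convexHull ℝ {w, w'} ⊆ D) (y : Λ) :
    T.weight false y [w'] - T.weight false y [w] = ∑ x, T.integral n w w' (x, y) := by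
  calc T.weight false y [w'] - T.weight false y [w]
    _ = (segmentChain n w w').boundary (T.weight false y) := by rw [boundary_segmentChain hn]; rfl
    _ = segmentChain n w w' (∑ x, T.transition (x, y)) :=
      supportedOn_segmentChain hR hε hD fun l hl => by
        simpa using T.coboundary_weight_false y l hl.2 hl.1
    _ = ∑ x, T.integral n w w' (x, y) := by rw [map_sum]; rfl

lemma integral_mul (hn : 0 < n) (hR : ∀ u ∈ D, ‖u‖ ≤ R) (hε : 2 * R * (2 / n) ≤ ε)
    (hD : ∀ g h : G, convexHull ℝ {u, π g v, π h w} ⊆ D) (g h : G) (s : Λ × Λ) :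
    T.integral n u (π (g * h) w) (g • s)
      = T.integral n u (π h w) s + T.defect n u v g (g • s) := by
  have add_integral (g' h' : G) (t : Λ × Λ) : T.integral n u (π g' v) t
      + T.integral n (π g' v) (π h' w) t = T.integral n u (π h' w) t :=
    segmentChain_add_segmentChain hn hR hε (T.coboundary_transition t) (hD g' h')
  have translate : T.integral n (π g v) (π (g * h) w) (g • s) = T.integral n v (π h w) s := by
    rw [map_mul, Module.End.mul_apply]
    refine integral_map hR hε ((convexHull_mono ?_).trans (hD 1 h)) g s
    rw [map_one, Module.End.one_apply]
    exact subset_insert _ _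
  have from_v := add_integral 1 h s
  rw [map_one, Module.End.one_apply] at from_v
  rw [← add_integral g (g * h) (g • s), ← from_v, translate, defect, inv_smul_smul]
  ring

lemma defect_mul (hn : 0 < n) (hR : ∀ u ∈ D, ‖u‖ ≤ R) (hε : 2 * R * (2 / n) ≤ ε)
    (hD : ∀ g h : G, convexHull ℝ {u, π g v, π h w} ⊆ D) (g h : G) (s : Λ × Λ) :
    T.defect n u v (g * h) (g • s) = T.defect n u v g (g • s) + T.defect n u v h s := by
  have mul := T.integral_mul hn hR hε hD (g * h) 1 (h⁻¹ • s)
  have left := T.integral_mul hn hR hε hD g h s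
  have right := T.integral_mul hn hR hε hD h 1 (h⁻¹ • s)
  simp only [mul_smul, smul_inv_smul, mul_one] at mul right
  linarith

/- The auxiliary point `v` is there because a triangle with two vertices in the orbit of `w` need
not lie in `D`, whereas `v` can be chosen generically. -/
theorem card_dvd_sum_weight_add_sum_weight [Finite G] [MulAction.IsPretransitive G Λ]
    (T : TransitionSystem π Λ ε D) (hε : 0 < ε) (hbdd : Bornology.IsBounded D)
    (hD : ∀ g h : G, convexHull ℝ {u, π g v, π h w} ⊆ D) :
    (Fintype.card Λ : ℤ) ∣ ∑ x, T.weight true x [u] + ∑ y, T.weight false y [u] := by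
  obtain ⟨R, hR⟩ := hbdd.exists_norm_le
  obtain ⟨n, hnε, hn⟩ : ∃ n : ℕ, 2 * R * (2 / n) ≤ ε ∧ 0 < n := by
    have : Filter.Tendsto (fun n : ℕ => 2 * R * (2 / n)) .atTop (nhds (2 * R * 0)) :=
      (tendsto_const_div_atTop_nhds_zero_nat 2).const_mul _
    rw [mul_zero] at this
    exact ((this.eventually_le_const hε).and (Filter.eventually_gt_atTop 0)).exists
  have side (g : G) : convexHull ℝ {u, π g w} ⊆ D :=
    (convexHull_mono (by simp [insert_subset_iff])).trans (hD 1 g)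
  have hw (g : G) : π g w ∈ D := side g (subset_convexHull ℝ _ (by simp))
  have weight_map (g : G) (i : Bool) (x : Λ) :
      T.weight i (g • x) [π g w] = T.weight i x [π 1 w] := by
    have hw₁ := hw 1
    rw [map_one, Module.End.one_apply] at hw₁ ⊢
    exact T.weight_map g i x [w] (by simp [FineIn, hw₁, hε.le])
  have integral_eq (g : G) (s : Λ × Λ) := T.integral_mul hn hR hnε hD g 1 s
  simp only [mul_one] at integral_eq
  refine card_dvd_sum_add_sum_of_cocycle (κ := T.defect n u v)
    (T.defect_mul hn hR hnε hD) (fun g x => ?_) fun g y => ?_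
  · have moved := T.weight_true_sub hn hR hnε (side g) (g • x)
    have fixed := T.weight_true_sub hn hR hnε (side 1) x
    rw [← Equiv.sum_comp (MulAction.toPerm g)] at moved
    simp only [MulAction.toPerm_apply, ← Prod.smul_mk, integral_eq, Finset.sum_add_distrib] at moved
    linarith [weight_map g true x]
  · have moved := T.weight_false_sub hn hR hnε (side g) (g • y)
    have fixed := T.weight_false_sub hn hR hnε (side 1) y
    rw [← Equiv.sum_comp (MulAction.toPerm g)] at moved
    simp only [MulAction.toPerm_apply, ← Prod.smul_mk, integral_eq, Finset.sum_add_distrib] at moved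
    linarith [weight_map g false y]

end TransitionSystem

end TransitionSystem

section Labels

variable {X Y Z Λ : Type*}

lemma shuffle_map (f : Y → Z) (a : List X) (b : List Y) :
    shuffle a (b.map f) = (shuffle a b).map (Prod.map id f) := by
  ext φ
  induction a generalizing b φ with
  | nil => rcases b with _ | ⟨y, _ | ⟨y', b⟩⟩ <;> simp [map_apply]
  | cons x a iha =>
    induction b generalizing φ with
    | nil => simp [map_apply]
    | cons y b ihb =>
      have tail := iha (y :: b) (link (x, f y) φ)
      have head := ihb (link (x, f y) φ)
      simp only [List.map_cons, map_apply] at tail head ⊢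
      rw [shuffle_cons_cons, shuffle_cons_cons, tail, head]
      rfl

/-- The `0`-cochain with values `u`. -/
def vertexCochain (u : Z → ℤ) : Cochain Z
  | [z] => u z
  | _ => 0

/-- The `1`-cochain with values `u`. -/
def edgeCochain (u : Z → Z → ℤ) : Cochain Z
  | [z, z'] => u z z'
  | _ => 0

variable {l : List Z}

lemma coboundary_vertexCochain (u : Z → ℤ) (z z' : Z) :
    δ (vertexCochain u) [z, z'] = u z' - u z := by
  simp [vertexCochain]

lemma coboundary_edgeCochain (u : Z → Z → ℤ) (z z' z'' : Z) :
    δ (edgeCochain u) [z, z', z''] = u z' z'' - (u z z'' - u z z') := by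
  simp [edgeCochain]

/-- On `l`, the label is a function of the state. -/
def LabelConstantOn (state : Z → Bool) (label : Z → Λ) (l : List Z) : Prop :=
  ∀ z ∈ l, ∀ z' ∈ l, state z = state z' → label z = label z'

variable [DecidableEq Λ] (state : Z → Bool) (label : Z → Λ)

/-- The indicator function of the points in state `i` with label `x`. -/
def labelIndicator (i : Bool) (x : Λ) (z : Z) : ℤ :=
  if state z = i ∧ label z = x then 1 else 0

/-- The signed count of the edges that pass from state `true`, label `s.1` to state `false`,
label `s.2`. -/
def transitionCochain (s : Λ × Λ) : Cochain Z := edgeCochain fun z z' =>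
  labelIndicator state label true s.1 z * labelIndicator state label false s.2 z'
    - labelIndicator state label false s.2 z * labelIndicator state label true s.1 z'

variable {state label}

lemma sum_labelIndicator_true [Fintype Λ] (z : Z) :
    ∑ x, labelIndicator state label true x z = if state z = true then 1 else 0 := by
  simp [labelIndicator, ite_and]

lemma sum_labelIndicator_false [Fintype Λ] (z : Z) :
    ∑ x, labelIndicator state label false x z = if state z = false then 1 else 0 := by
  simp [labelIndicator, ite_and]

lemma coboundary_vertexCochain_true [Fintype Λ] (hl : l.length = 2)
    (hconst : LabelConstantOn state label l) (x : Λ) :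
    δ (vertexCochain (labelIndicator state label true x)) l
      = -∑ y, transitionCochain state label (x, y) l := by
  obtain ⟨z, z', rfl⟩ := List.length_eq_two.1 hl
  have label_eq := hconst z (by simp) z' (by simp)
  simp only [coboundary_vertexCochain, transitionCochain, edgeCochain,
    Finset.sum_sub_distrib, ← Finset.mul_sum, ← Finset.sum_mul, sum_labelIndicator_false]
  rcases hz : state z <;> rcases hz' : state z' <;> simp_all [labelIndicator]

lemma coboundary_vertexCochain_false [Fintype Λ] (hl : l.length = 2)
    (hconst : LabelConstantOn state label l) (y : Λ) :
    δ (vertexCochain (labelIndicator state label false y)) l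
      = ∑ x, transitionCochain state label (x, y) l := by
  obtain ⟨z, z', rfl⟩ := List.length_eq_two.1 hl
  have label_eq := hconst z (by simp) z' (by simp)
  simp only [coboundary_vertexCochain, transitionCochain, edgeCochain,
    Finset.sum_sub_distrib, ← Finset.mul_sum, ← Finset.sum_mul, sum_labelIndicator_true]
  rcases hz : state z <;> rcases hz' : state z' <;> simp_all [labelIndicator]

lemma coboundary_transitionCochain (hl : l.length = 3) (hconst : LabelConstantOn state label l)
    (s : Λ × Λ) : δ (transitionCochain state label s) l = 0 := by
  obtain ⟨z, z', z'', rfl⟩ := List.length_eq_three.1 hl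
  have label_eq := hconst z (by simp) z' (by simp)
  have label_eq' := hconst z' (by simp) z'' (by simp)
  have label_eq'' := hconst z (by simp) z'' (by simp)
  simp only [transitionCochain, coboundary_edgeCochain, labelIndicator]
  rcases hz : state z <;> rcases hz' : state z' <;> rcases hz'' : state z'' <;> simp_all <;>
    split_ifs <;> simp_all

end Labels

section FiberIntegration

variable {G Q W Λ : Type*} {N : ℕ} {C : Chain Q} {Ω : Cochain (Q × W)}

/-- Integration over the fibre chain `C` of the product of a cochain with the cocycle `Ω` of
degree `N`. -/
def fiberIntegral (C : Chain Q) (N : ℕ) (Ω : Cochain (Q × W)) : Cochain (Q × W) →+ Cochain W where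
  toFun φ := slant C (cup N Ω φ)
  map_zero' := by rw [(by ext; simp [cup] : cup N Ω 0 = 0), map_zero]
  map_add' φ ψ := by rw [cup_add_right, map_add]

lemma sum_fiberIntegral_indicator [Fintype Λ] [DecidableEq Λ] {state : Q × W → Bool}
    {label : Q × W → Λ} (hC : C.SupportedOn (·.length = N + 1)) (u : W) :
    ∑ x, fiberIntegral C N Ω (vertexCochain (labelIndicator state label true x)) [u]
      + ∑ y, fiberIntegral C N Ω (vertexCochain (labelIndicator state label false y)) [u]
      = C (pullback (·, u) Ω) := by
  rw [← Finset.sum_apply, ← Finset.sum_apply, ← map_sum, ← map_sum, ← Pi.add_apply, ← map_add]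
  refine hC fun a ha => ?_
  obtain ⟨q, hq⟩ := List.length_eq_one_iff.1 (by rw [List.length_drop]; omega :
    (a.drop N).length = 1)
  rw [shuffle_singleton_right (by rintro rfl; simp at ha), pullback_apply, simplex_apply, cup_apply,
    ← List.map_drop, hq, List.take_of_length_le (by simp [ha])]
  simp only [List.map_cons, List.map_nil, Pi.add_apply, Finset.sum_apply, vertexCochain,
    sum_labelIndicator_true, sum_labelIndicator_false]
  rcases state (q, u) <;> simp

variable [PseudoMetricSpace Q] [NormedAddCommGroup W] [NormedSpace ℝ W] [Group G] [MulAction G Λ]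
  {K F : Set Q} {D : Set W} {ε : ℝ}
  {π : Representation ℝ G W} {state : Q × W → Bool} {label : Q × W → Λ} {S : Set (Q × W)}

/-- On fine lists in `K ×ˢ D` the cocycle `Ω` is supported in `S`, where `label` is locally a
function of `state`; moreover `Ω` vanishes over `F`, and everything is equivariant for the action
of `G` through `π` on the second factor. -/
structure IsFineLabelling (π : Representation ℝ G W) (ε : ℝ) (K F : Set Q) (D : Set W)
    (Ω : Cochain (Q × W)) (state : Q × W → Bool) (label : Q × W → Λ) (S : Set (Q × W)) :
    Prop where
  coboundary_eq_zero : ∀ l, 2 ≤ l.length → δ Ω l = 0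
  eq_zero_or : ∀ l, FineIn ε (K ×ˢ D) l →
    (∀ l', l' ⊆ l → Ω l' = 0) ∨ (∀ z ∈ l, z ∈ S) ∧ LabelConstantOn state label l
  eq_zero_of_face : ∀ l, FineIn ε (F ×ˢ D) l → Ω l = 0
  apply_map : ∀ g l, FineIn ε (K ×ˢ D) l → Ω (l.map (Prod.map id (π g))) = Ω l
  state_map : ∀ g, ∀ z ∈ K ×ˢ D, state (z.1, π g z.2) = state z
  label_map : ∀ g, ∀ z ∈ K ×ˢ D, z ∈ S → label (z.1, π g z.2) = g • label z

namespace IsFineLabelling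

variable (h : IsFineLabelling π ε K F D Ω state label S)

include h

lemma coboundary_fiberIntegral (hN : Even N)
    (hC : C.SupportedOn fun l => l.length = N + 1 ∧ FineIn ε K l)
    (hB : C.boundary.SupportedOn (FineIn ε F)) {b : List W} (hb : FineIn ε D b)
    (hb₂ : 2 ≤ b.length) {φ ψ : Cochain (Q × W)}
    (hφ : ∀ l, l.length = b.length → LabelConstantOn state label l → δ φ l = ψ l) :
    δ (fiberIntegral C N Ω φ) b = fiberIntegral C N Ω ψ b := by
  have face_eq_zero : slant C.boundary (cup N Ω φ) b = 0 :=
    hB.apply_eq_zero fun a ha => (supportedOn_shuffle a b).apply_eq_zero fun l hl => by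
      rw [cup_apply, h.eq_zero_of_face _ ((ha.prod hb hl.2).subset (List.take_subset _ _)),
        zero_mul]
  have leibniz : slant C (δ (cup N Ω φ)) b = fiberIntegral C N Ω ψ b := by
    refine hC fun a ha => supportedOn_shuffle a b fun l hl => ?_
    rw [coboundary_cup N Ω φ (by omega), hN.neg_one_pow, one_mul, cup_apply, cup_apply, cup_apply,
      h.coboundary_eq_zero _ (by rw [List.length_take]; omega), zero_mul, zero_add]
    rcases h.eq_zero_or l (ha.2.prod hb hl.2) with hΩ | ⟨-, hlabel⟩
    · rw [hΩ _ (List.take_subset _ _), zero_mul, zero_mul]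
    · rw [hφ _ (by rw [List.length_drop]; omega) fun z hz z' hz' =>
        hlabel z (List.mem_of_mem_drop hz) z' (List.mem_of_mem_drop hz')]
  have stokes := congrFun (slant_coboundary (hC.mono fun l hl => hl.1) (cup N Ω φ)) b
  rw [Pi.add_apply, face_eq_zero, zero_add, leibniz, (by grind : Even (N + 1 + 1)).neg_one_pow,
    one_smul] at stokes
  exact stokes.symm

lemma fiberIntegral_map (hC : C.SupportedOn fun l => l.length = N + 1 ∧ FineIn ε K l)
    {φ ψ : Cochain (Q × W)} (g : G)
    (hφ : ∀ l, (∀ z ∈ l, z ∈ K ×ˢ D ∧ z ∈ S) → ψ (l.map (Prod.map id (π g))) = φ l)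
    {b : List W} (hb : FineIn ε D b) :
    fiberIntegral C N Ω ψ (b.map (π g)) = fiberIntegral C N Ω φ b := by
  refine hC fun a ha => ?_
  rw [shuffle_map, map_apply]
  refine supportedOn_shuffle a b fun l hl => ?_
  have fine := ha.2.prod hb hl.2
  rw [pullback_apply, cup_apply, cup_apply, ← List.map_take, ← List.map_drop,
    h.apply_map g _ (fine.subset (List.take_subset _ _))]
  rcases h.eq_zero_or l fine with hΩ | ⟨hS, -⟩
  · rw [hΩ _ (List.take_subset _ _), zero_mul, zero_mul]
  · rw [hφ _ fun z hz => ⟨fine.mem (List.mem_of_mem_drop hz), hS z (List.mem_of_mem_drop hz)⟩]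

lemma labelIndicator_map [DecidableEq Λ] (g : G) (i : Bool) (x : Λ) {z : Q × W}
    (hz : z ∈ K ×ˢ D ∧ z ∈ S) :
    labelIndicator state label i (g • x) (Prod.map id (π g) z)
      = labelIndicator state label i x z := by
  simp only [labelIndicator, Prod.map, id, h.state_map g z hz.1, h.label_map g z hz.1 hz.2,
    smul_left_cancel_iff]

/-- The fibre integrals of the indicators of the labels. -/
def transitionSystem [Fintype Λ] [DecidableEq Λ] (hN : Even N)
    (hC : C.SupportedOn fun l => l.length = N + 1 ∧ FineIn ε K l)
    (hB : C.boundary.SupportedOn (FineIn ε F)) : TransitionSystem π Λ ε D where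
  transition s := fiberIntegral C N Ω (transitionCochain state label s)
  weight i x := fiberIntegral C N Ω (vertexCochain (labelIndicator state label i x))
  coboundary_transition s l hl hl₃ := by
    rw [h.coboundary_fiberIntegral hN hC hB hl (by omega) (ψ := 0)
      fun l' hl' hlabel => coboundary_transitionCochain (hl'.trans hl₃) hlabel s, map_zero,
      Pi.zero_apply]
  coboundary_weight_true x l hl hl₂ := by
    rw [h.coboundary_fiberIntegral hN hC hB hl (by omega)
      (ψ := -∑ y, transitionCochain state label (x, y)) fun l' hl' hlabel => by
        simpa using coboundary_vertexCochain_true (hl'.trans hl₂) hlabel x]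
    simp
  coboundary_weight_false y l hl hl₂ := by
    rw [h.coboundary_fiberIntegral hN hC hB hl (by omega)
      (ψ := ∑ x, transitionCochain state label (x, y)) fun l' hl' hlabel => by
        simpa using coboundary_vertexCochain_false (hl'.trans hl₂) hlabel y]
    simp
  transition_map g s l hl := by
    refine h.fiberIntegral_map hC g (fun l' hl' => ?_) hl
    rcases l' with _ | ⟨z, _ | ⟨z', _ | _⟩⟩ <;> try rfl
    simp only [transitionCochain, edgeCochain, List.map_cons, List.map_nil, Prod.smul_fst,
      Prod.smul_snd, h.labelIndicator_map g _ _ (hl' z (by simp)),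
      h.labelIndicator_map g _ _ (hl' z' (by simp))]
  weight_map g i x l hl := by
    refine h.fiberIntegral_map hC g (fun l' hl' => ?_) hl
    rcases l' with _ | ⟨z, _ | _⟩ <;> try rfl
    exact h.labelIndicator_map g i x (hl' z (by simp))

theorem card_dvd_apply [Finite G] [Fintype Λ] [MulAction.IsPretransitive G Λ] (hN : Even N)
    (hC : C.SupportedOn fun l => l.length = N + 1 ∧ FineIn ε K l)
    (hB : C.boundary.SupportedOn (FineIn ε F)) (hε : 0 < ε) (hbdd : Bornology.IsBounded D)
    {u v w : W} (hD : ∀ g h : G, convexHull ℝ {u, π g v, π h w} ⊆ D) :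
    (Fintype.card Λ : ℤ) ∣ C (pullback (·, u) Ω) := by
  classical
  rw [← sum_fiberIntegral_indicator (state := state) (label := label)
    (hC.mono fun l hl => hl.1) u]
  exact (h.transitionSystem hN hC hB).card_dvd_sum_weight_add_sum_weight hε hbdd hD

end IsFineLabelling

end FiberIntegration

section ZeroCocycle

open Filter Topology

variable {X : Type*} {m : ℕ}

/-- The cocycle of degree `2 m` dual to the common zeros of the two maps `α true` and `α false`. -/
noncomputable def zeroCocycle (α : Bool → X → Fin m → ℝ) : Cochain X :=
  cup m (signCocycle (α true)) (signCocycle (α false))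

lemma coboundary_zeroCocycle (α : Bool → X → Fin m → ℝ) {l : List X} (hl : 2 ≤ l.length) :
    δ (zeroCocycle α) l = 0 := by
  have as_stepProduct : zeroCocycle α =
      stepProduct (coordSteps (α true) ++ coordSteps (α false)) 1 := by
    rw [stepProduct_append, coordSteps, List.length_ofFn]
    rfl
  rw [as_stepProduct, coboundary_stepProduct _ _ hl,
    stepProduct_eq_zero (List.mem_append_right _ (List.mem_singleton_self _)) 1
      fun _ _ _ _ => rfl, mul_zero]

lemma zeroCocycle_map {α : Bool → X → Fin m → ℝ} {f : X → X} {l : List X}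
    (h : ∀ i, ∀ x ∈ l, α i (f x) = α i x) : zeroCocycle α (l.map f) = zeroCocycle α l := by
  rw [← pullback_apply (φ := zeroCocycle α), zeroCocycle, pullback_cup, pullback_signCocycle,
    pullback_signCocycle, cup_apply, cup_apply]
  exact congrArg₂ (· * ·)
    (signCocycle_congr fun x hx j => congrArg (fun v => step (v j))
      (h true x (List.mem_of_mem_take hx)))
    (signCocycle_congr fun x hx j => congrArg (fun v => step (v j))
      (h false x (List.mem_of_mem_drop hx)))

lemma eventually_zeroCocycle_eq_zero [PseudoMetricSpace X] {D : Set X} (hD : IsCompact D)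
    {α : Bool → X → Fin m → ℝ} (hα : ∀ i, ContinuousOn (α i) D) {r : ℝ} (hr : 0 < r) :
    ∀ᶠ ε in 𝓝[>] (0 : ℝ), ∀ l, FineIn ε D l → (∃ x ∈ l, ∃ i j, r ≤ |α i x j|) →
      ∀ l' ⊆ l, zeroCocycle α l' = 0 := by
  have sign_zero i := eventually_signCocycle_eq_zero_of_le_abs hD (hα i) hr
  filter_upwards [sign_zero true, sign_zero false] with ε htrue hfalse l hl
  rintro ⟨x, hx, i, j, hij⟩ l' hl'
  cases i
  · rw [zeroCocycle, cup_apply,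
      hfalse l hl ⟨x, hx, j, hij⟩ _ (List.Subset.trans (List.drop_subset _ _) hl'), mul_zero]
  · rw [zeroCocycle, cup_apply,
      htrue l hl ⟨x, hx, j, hij⟩ _ (List.Subset.trans (List.take_subset _ _) hl'), zero_mul]

end ZeroCocycle

section ZeroLabelling

open Filter Topology

variable {G Λ W : Type*} [Group G] [MulAction G Λ] [NormedAddCommGroup W] [NormedSpace ℝ W]
  {π : Representation ℝ G W} {k : ℕ} {α : Bool → CubePair k × W → Fin (k + 1) → ℝ}
  {state : CubePair k × W → Bool} {label : CubePair k × W → Λ} {r : ℝ}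

/-- An equivariant labelling by `Λ` of the approximate common zeros of two maps `α true` and
`α false` on `cubeSquare k × (W \ {0})`, locally constant where `state` is, when the two maps have
no common zero over the boundary and the algebraic number of common zeros over each `w ≠ 0`
is one. -/
structure IsZeroLabelling (π : Representation ℝ G W)
    (α : Bool → CubePair k × W → Fin (k + 1) → ℝ) (state : CubePair k × W → Bool)
    (label : CubePair k × W → Λ) (r : ℝ) : Prop where
  pos : 0 < r
  continuousOn : ∀ i, ContinuousOn (α i) (cubeSquare k ×ˢ {0}ᶜ)
  ne_zero_of_face : ∀ z ∈ (leftFace k ∪ rightFace k) ×ˢ {0}ᶜ, ∃ i, α i z ≠ 0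
  apply_map : ∀ g i, ∀ z ∈ cubeSquare k ×ˢ {0}ᶜ, α i (Prod.map id (π g) z) = α i z
  state_map : ∀ g, ∀ z ∈ cubeSquare k ×ˢ {0}ᶜ, state (z.1, π g z.2) = state z
  label_map : ∀ g, ∀ z ∈ cubeSquare k ×ˢ {0}ᶜ, (∀ i j, |α i z j| < r) →
    label (z.1, π g z.2) = g • label z
  label_eq : ∀ D, IsCompact D → 0 ∉ D → ∀ᶠ ε in 𝓝[>] (0 : ℝ), ∀ l,
    FineIn ε (cubeSquare k ×ˢ D) l → (∀ z ∈ l, ∀ i j, |α i z j| < r) →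
      LabelConstantOn state label l
  degree : ∀ w ≠ 0, ∀ᶠ n : ℕ in atTop, squareChain n k (pullback (·, w) (zeroCocycle α)) = 1

lemma face_subset_cubeSquare (k : ℕ) : leftFace k ∪ rightFace k ⊆ cubeSquare k :=
  union_subset (leftFace_subset_cubeSquare k) (rightFace_subset_cubeSquare k)

lemma supportedOn_boundary_squareChain {n : ℕ} (hn : 0 < n) (k : ℕ) :
    (squareChain n k).boundary.SupportedOn (FineIn (2 / n) (leftFace k ∪ rightFace k)) := by
  intro φ ψ h
  simp only [boundary_squareChain, AddMonoidHom.add_apply, AddMonoidHom.smul_apply]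
  rw [supportedOn_leftChain hn k fun l hl => h l (hl.2.mono fun _ _ => Or.inl),
    supportedOn_rightChain hn k fun l hl => h l (hl.2.mono fun _ _ => Or.inr)]

namespace IsZeroLabelling

variable (h : IsZeroLabelling π α state label r)
include h

lemma eventually_isFineLabelling {D : Set W} (hD : IsCompact D) (h0 : 0 ∉ D) :
    ∀ᶠ ε in 𝓝[>] (0 : ℝ), IsFineLabelling π ε (cubeSquare k) (leftFace k ∪ rightFace k) D
      (zeroCocycle α) state label {z | ∀ i j, |α i z j| < r} := by
  have hD0 : D ⊆ {0}ᶜ := fun w hw hw0 => h0 (mem_singleton_iff.1 hw0 ▸ hw)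
  have hcube : cubeSquare k ×ˢ D ⊆ cubeSquare k ×ˢ {0}ᶜ := prod_mono_right hD0
  have hface : (leftFace k ∪ rightFace k) ×ˢ D ⊆ cubeSquare k ×ˢ {0}ᶜ :=
    prod_mono (face_subset_cubeSquare k) hD0
  have compact_face : IsCompact ((leftFace k ∪ rightFace k) ×ˢ D) :=
    (((isCompact_sphere 0 1).prod (isCompact_closedBall 0 1)).union
      ((isCompact_closedBall 0 1).prod (isCompact_sphere 0 1))).prod hD
  obtain ⟨s, hs, hαs⟩ := exists_pos_forall_exists_le_abs compact_face
    (f := fun z (p : Bool × Fin (k + 1)) => α p.1 z p.2)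
    (continuousOn_pi.2 fun p => continuousOn_pi.1 ((h.continuousOn p.1).mono hface) p.2)
    fun z hz hz0 => by
      obtain ⟨i, hi⟩ := h.ne_zero_of_face z ⟨hz.1, hD0 hz.2⟩
      exact hi (funext fun j => congrFun hz0 (i, j))
  filter_upwards [eventually_zeroCocycle_eq_zero ((isCompact_cubeSquare k).prod hD)
    (fun i => (h.continuousOn i).mono hcube) h.pos, eventually_zeroCocycle_eq_zero compact_face
    (fun i => (h.continuousOn i).mono hface) hs, h.label_eq D hD h0] with ε hr hface_zero hlabel
  refine
    { coboundary_eq_zero := fun l hl => coboundary_zeroCocycle α hl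
      eq_zero_or := fun l hl => ?_
      eq_zero_of_face := fun l hl => ?_
      apply_map := fun g l hl => ?_
      state_map := fun g z hz => h.state_map g z (hcube hz)
      label_map := fun g z hz => h.label_map g z (hcube hz) }
  · by_cases hsmall : ∀ z ∈ l, ∀ i j, |α i z j| < r
    · exact Or.inr ⟨hsmall, hlabel l hl hsmall⟩
    · push Not at hsmall
      exact Or.inl (hr l hl hsmall)
  · rcases l with _ | ⟨z, l⟩
    · rw [zeroCocycle, cup_apply, List.take_nil, signCocycle_nil, zero_mul]
    · obtain ⟨p, hp⟩ := hαs z (hl.mem (by simp))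
      exact hface_zero _ hl ⟨z, by simp, p.1, p.2, hp⟩ _ (List.Subset.refl _)
  · exact zeroCocycle_map fun i z hz => h.apply_map g i z (hcube (hl.mem hz))

lemma card_dvd_one [Finite G] [Fintype Λ] [MulAction.IsPretransitive G Λ] {D : Set W}
    (hD : IsCompact D) (h0 : 0 ∉ D) {u v w : W}
    (hhull : ∀ g h : G, convexHull ℝ {u, π g v, π h w} ⊆ D) : Fintype.card Λ ∣ 1 := by
  have hu : u ≠ 0 := by
    rintro rfl
    exact h0 (hhull 1 1 (subset_convexHull ℝ _ (mem_insert _ _)))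
  obtain ⟨n, hn, fine, degree_one⟩ := ((eventually_gt_atTop 0).and
    ((tendsto_two_div_nhdsGT_zero.eventually (h.eventually_isFineLabelling hD h0)).and
      (h.degree u hu))).exists
  have hdvd := fine.card_dvd_apply (N := 2 * k + 2) (by simp [parity_simps])
    (supportedOn_squareChain n k) (supportedOn_boundary_squareChain hn k) (by positivity)
    hD.isBounded hhull
  rw [degree_one] at hdvd
  exact_mod_cast hdvd

end IsZeroLabelling

end ZeroLabelling

section GenericHull

variable {W : Type*} [AddCommGroup W] [Module ℝ W]

lemma exists_forall_notMem_of_finrank_lt {K V ι : Type*} [Field K] [Infinite K] [AddCommGroup V]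
    [Module K V] [Finite ι] (P : ι → Submodule K V)
    (hP : ∀ i, Module.finrank K (P i) < Module.finrank K V) : ∃ v, ∀ i, v ∉ P i := by
  classical
  by_contra! hcover
  have htop : ⊤ ∈ (Set.finite_range P).toFinset :=
    Subspace.top_mem_of_biUnion_eq_univ <| eq_univ_of_forall fun v => by simpa using hcover v
  obtain ⟨i, hi⟩ : ∃ i, P i = ⊤ := by simpa using htop
  exact (hP i).ne (by rw [hi, finrank_top])

lemma zero_notMem_convexHull_insert {x : W} {s : Set W} (hx : x ∉ Submodule.span ℝ s)
    (hs : 0 ∉ convexHull ℝ s) : 0 ∉ convexHull ℝ (insert x s) := by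
  rcases s.eq_empty_or_nonempty with rfl | hne
  · rw [insert_empty_eq, convexHull_singleton, mem_singleton_iff]
    exact fun h => hx (h ▸ zero_mem _)
  rw [convexHull_insert hne, mem_convexJoin]
  rintro ⟨_, rfl, y, hy, a, b, -, -, hab, hxy⟩
  by_cases ha : a = 0
  · obtain rfl : b = 1 := by simpa [ha] using hab
    rw [ha, zero_smul, zero_add, one_smul] at hxy
    exact hs (hxy ▸ hy)
  · refine hx ((Submodule.smul_mem_iff _ ha).1 ?_)
    rw [eq_neg_of_add_eq_zero_left hxy]
    exact neg_mem (Submodule.smul_mem _ _ (convexHull_min Submodule.subset_span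
      (Submodule.convex _) hy))

lemma exists_zero_notMem_convexHull {G W : Type*} [Group G] [Finite G] [AddCommGroup W]
    [Module ℝ W] (π : Representation ℝ G W) (hW : 3 ≤ Module.finrank ℝ W) :
    ∃ u v w : W, ∀ g h : G, 0 ∉ convexHull ℝ {u, π g v, π h w} := by
  classical
  have finrank_span (s : Finset W) : Module.finrank ℝ (Submodule.span ℝ (s : Set W)) ≤ s.card :=
    finrank_span_finset_le_card s
  have : Nontrivial W := Module.nontrivial_of_finrank_pos (R := ℝ) (by omega)
  obtain ⟨w, hw⟩ := exists_ne (0 : W)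
  obtain ⟨v, hv⟩ := exists_forall_notMem_of_finrank_lt (fun g : G => Submodule.span ℝ {π g w})
    fun g => by
      have := finrank_span {π g w}
      rw [Finset.coe_singleton, Finset.card_singleton] at this
      omega
  obtain ⟨u, hu⟩ := exists_forall_notMem_of_finrank_lt
    (fun g : G × G => Submodule.span ℝ {π g.1 v, π g.2 w}) fun g => by
      have := finrank_span {π g.1 v, π g.2 w}
      rw [Finset.coe_pair] at this
      have := Finset.card_le_two (a := π g.1 v) (b := π g.2 w)
      omega
  refine ⟨u, v, w, fun g h => zero_notMem_convexHull_insert (hu (g, h))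
    (zero_notMem_convexHull_insert (fun hgv => hv (g⁻¹ * h) ?_) ?_)⟩
  · rw [Submodule.mem_span_singleton] at hgv ⊢
    obtain ⟨a, ha⟩ := hgv
    refine ⟨a, ?_⟩
    rw [map_mul, Module.End.mul_apply, ← map_smul, ha, π.inv_self_apply]
  · rw [convexHull_singleton, mem_singleton_iff]
    exact fun h0 => hw (by rw [← π.inv_self_apply h w, ← h0, map_zero])

end GenericHull

theorem IsZeroLabelling.card_eq_one {G Λ W : Type*} [Group G] [MulAction G Λ]
    [NormedAddCommGroup W] [NormedSpace ℝ W] {π : Representation ℝ G W} {k : ℕ}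
    {α : Bool → CubePair k × W → Fin (k + 1) → ℝ} {state : CubePair k × W → Bool}
    {label : CubePair k × W → Λ} {r : ℝ} [Finite G] [Fintype Λ] [MulAction.IsPretransitive G Λ]
    (h : IsZeroLabelling π α state label r) (hW : 3 ≤ Module.finrank ℝ W) :
    Fintype.card Λ = 1 := by
  obtain ⟨u, v, w, hhull⟩ := exists_zero_notMem_convexHull π hW
  refine Nat.dvd_one.1 (h.card_dvd_one
    (D := ⋃ g : G × G, convexHull ℝ {u, π g.1 v, π g.2 w}) ?_ ?_
    fun g h => subset_iUnion (fun g : G × G => convexHull ℝ {u, π g.1 v, π g.2 w}) (g, h))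
  · exact isCompact_iUnion fun g => (toFinite _).isCompact_convexHull (𝕜 := ℝ)
  · simpa using hhull

section PlannerPair

variable {G X Y : Type*}

lemma exists_continuous_pos_iff_mem [PseudoEMetricSpace Y] {U : Set Y} (hU : IsOpen U) :
    ∃ d : Y → ℝ, Continuous d ∧ (∀ y, 0 ≤ d y) ∧ (∀ y, 0 < d y ↔ y ∈ U) ∧
      ∀ T : Y ≃ᵢ Y, T ⁻¹' U = U → ∀ y, d (T y) = d y := by
  have hne (y : Y) : min 1 (Metric.infEDist y Uᶜ) ≠ ⊤ :=
    (min_le_left _ _).trans_lt ENNReal.one_lt_top |>.ne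
  refine ⟨fun y => (min 1 (Metric.infEDist y Uᶜ)).toReal,
    ENNReal.continuousOn_toReal.comp_continuous
      (continuous_const.min Metric.continuous_infEDist) hne, fun y => ENNReal.toReal_nonneg,
    fun y => ?_, fun T hT y => ?_⟩
  · rw [ENNReal.toReal_pos_iff, and_iff_left (hne y).lt_top, lt_min_iff,
      and_iff_right one_pos, pos_iff_ne_zero, ne_eq, ← Metric.mem_closure_iff_infEDist_zero,
      hU.isClosed_compl.closure_eq, notMem_compl_iff]
  · have himage : T '' Uᶜ = Uᶜ := by
      rw [image_compl_eq T.bijective]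
      exact congrArg compl (by conv_lhs => rw [← hT, T.surjective.image_preimage])
    change (min 1 (Metric.infEDist (T y) Uᶜ)).toReal = _
    rw [← himage, Metric.infEDist_image T.isometry, himage]

lemma exists_invariant_partition [PseudoEMetricSpace Y] {U : Bool → Set Y}
    (hU : ∀ i, IsOpen (U i)) (hcover : ∀ y, ∃ i, y ∈ U i) :
    ∃ f : Bool → Y → ℝ, (∀ i, Continuous (f i)) ∧ (∀ i y, 0 ≤ f i y) ∧
      (∀ y, f true y + f false y = 1) ∧ (∀ i y, 0 < f i y ↔ y ∈ U i) ∧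
      ∀ T : Y ≃ᵢ Y, (∀ i, T ⁻¹' U i = U i) → ∀ i y, f i (T y) = f i y := by
  choose d hd hd_nonneg hd_pos hd_map using fun i => exists_continuous_pos_iff_mem (hU i)
  have hsum (y) : 0 < d true y + d false y := by
    obtain ⟨i, hi⟩ := hcover y
    rw [← hd_pos] at hi
    cases i
    · exact add_pos_of_nonneg_of_pos (hd_nonneg true y) hi
    · exact add_pos_of_pos_of_nonneg hi (hd_nonneg false y)
  refine ⟨fun i y => d i y / (d true y + d false y),
    fun i => (hd i).div ((hd true).add (hd false)) fun y => (hsum y).ne',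
    fun i y => div_nonneg (hd_nonneg i y) (hsum y).le, fun y => ?_,
    fun i y => by rw [div_pos_iff_of_pos_right (hsum y), hd_pos], fun T hT i y => ?_⟩
  · rw [← add_div, div_self (hsum y).ne']
  · simp only [hd_map i T (hT i), hd_map true T (hT true), hd_map false T (hT false)]

/-- A cover of `X × X` by two invariant open sets with equivariant motion planners, in the form
used for the lower bound: the cover is recorded by an invariant partition of unity `weight`, the
planners by the two paths `head` and `tail`. -/
structure PlannerPair [TopologicalSpace X] (act : G → X → X) where
  weight : Bool → X × X → ℝ
  head : Bool → X × X → C(I, X)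
  tail : Bool → X × X → C(I, X)
  continuous_weight : ∀ i, Continuous (weight i)
  weight_nonneg : ∀ i p, 0 ≤ weight i p
  weight_add : ∀ p, weight true p + weight false p = 1
  weight_map : ∀ i g₁ g₂ p, weight i (Prod.map (act g₁) (act g₂) p) = weight i p
  continuousOn_head : ∀ i, ContinuousOn (head i) {p | 0 < weight i p}
  continuousOn_tail : ∀ i, ContinuousOn (tail i) {p | 0 < weight i p}
  head_zero : ∀ i p, 0 < weight i p → head i p 0 = p.1
  tail_one : ∀ i p, 0 < weight i p → tail i p 1 = p.2
  exists_act_head : ∀ i p, 0 < weight i p → ∃ g, act g (head i p 1) = tail i p 0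
  head_map : ∀ i p, 0 < weight i p → ∀ g₁ g₂ t,
    head i (Prod.map (act g₁) (act g₂) p) t = act g₁ (head i p t)
  tail_map : ∀ i p, 0 < weight i p → ∀ g₁ g₂ t,
    tail i (Prod.map (act g₁) (act g₂) p) t = act g₂ (tail i p t)

lemma nonempty_plannerPair [Group G] [PseudoMetricSpace X] {act : G → X → X}
    (hone : ∀ x, act 1 x = x) (hmul : ∀ g h x, act (g * h) x = act g (act h x))
    (hact : ∀ g, Isometry (act g)) (h : invTCcover act 2) : Nonempty (PlannerPair act) := by
  obtain ⟨U, hopen, hcover, h⟩ := h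
  choose hmaps s₁ s₂ hs₁ hs₂ hs hmap using h
  have hinv (g : G) (x : X) : act g (act g⁻¹ x) = x := by rw [← hmul, mul_inv_cancel, hone]
  have hinv' (g : G) (x : X) : act g⁻¹ (act g x) = x := by rw [← hmul, inv_mul_cancel, hone]
  let e' (g : G) : X ≃ X := ⟨act g, act g⁻¹, hinv' g, hinv g⟩
  let T (g₁ g₂ : G) : X × X ≃ᵢ X × X :=
    ⟨(e' g₁).prodCongr (e' g₂), (hact g₁).prodMap (hact g₂)⟩
  have hT (g₁ g₂ p) : T g₁ g₂ p = (act g₁ p.1, act g₂ p.2) := rfl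
  have hpre (g₁ g₂ i) : T g₁ g₂ ⁻¹' U i = U i := by
    refine Subset.antisymm (fun p hp => ?_) fun p hp => hmaps i g₁ g₂ p hp
    simpa [hT, hinv'] using hmaps i g₁⁻¹ g₂⁻¹ _ hp
  let e := finTwoEquiv.symm
  have hcover' (p) : ∃ i, p ∈ U (e i) := by
    obtain ⟨i, hi⟩ := mem_iUnion.1 (hcover.symm ▸ mem_univ p)
    exact ⟨finTwoEquiv i, by rwa [finTwoEquiv.symm_apply_apply]⟩
  obtain ⟨f, hf, hf_nonneg, hf_add, hf_pos, hf_map⟩ :=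
    exists_invariant_partition (fun i => hopen (e i)) hcover'
  have hmem (i p) (hp : 0 < f i p) : p ∈ U (e i) := (hf_pos i p).1 hp
  exact ⟨
    { weight := f
      head := fun i => s₁ (e i)
      tail := fun i => s₂ (e i)
      continuous_weight := hf
      weight_nonneg := hf_nonneg
      weight_add := hf_add
      weight_map := fun i g₁ g₂ p =>
        hf_map (T g₁ g₂) (fun i => hpre g₁ g₂ (e i)) i p
      continuousOn_head := fun i => (hs₁ _).mono (hmem i)
      continuousOn_tail := fun i => (hs₂ _).mono (hmem i)
      head_zero := fun i p hp => (hs _ p (hmem i p hp)).1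
      tail_one := fun i p hp => (hs _ p (hmem i p hp)).2.1
      exists_act_head := fun i p hp => (hs _ p (hmem i p hp)).2.2.ge ⟨1, hone _⟩
      head_map := fun i p hp g₁ g₂ t => (hmap _ g₁ g₂ p (hmem i p hp) t).1
      tail_map := fun i p hp g₁ g₂ t => (hmap _ g₁ g₂ p (hmem i p hp) t).2 }⟩

end PlannerPair

section FixedSubspace

open RealInnerProductSpace

variable {G E : Type*} [Group G] [NormedAddCommGroup E] [InnerProductSpace ℝ E]
  (ρ : G →* (E ≃ₗᵢ[ℝ] E))

/-- The subspace fixed by an orthogonal representation. -/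
def fixedSubspace : Submodule ℝ E where
  carrier := {x | ∀ g, ρ g x = x}
  add_mem' hx hy g := by rw [map_add, hx g, hy g]
  zero_mem' g := map_zero _
  smul_mem' c x hx g := by rw [map_smul, hx g]

lemma mem_fixedSubspace {x : E} : x ∈ fixedSubspace ρ ↔ ∀ g, ρ g x = x := Iff.rfl

lemma map_mem_orthogonal_fixedSubspace (g : G) {w : E} (hw : w ∈ (fixedSubspace ρ)ᗮ) :
    ρ g w ∈ (fixedSubspace ρ)ᗮ := fun v hv => by
  rw [← hv g, (ρ g).inner_map_map]
  exact hw v hv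

/-- The restriction of an orthogonal representation to the complement of its fixed subspace. -/
noncomputable def normalRep : Representation ℝ G (fixedSubspace ρ)ᗮ where
  toFun g := (ρ g).toLinearMap.restrict fun _ hw => map_mem_orthogonal_fixedSubspace ρ g hw
  map_one' := by
    ext w
    simp
  map_mul' g h := by
    ext w
    simp

@[simp]
lemma coe_normalRep_apply (g : G) (w : (fixedSubspace ρ)ᗮ) :
    (normalRep ρ g w : E) = ρ g w := rfl

lemma norm_normalRep_apply (g : G) (w : (fixedSubspace ρ)ᗮ) : ‖normalRep ρ g w‖ = ‖w‖ :=
  (ρ g).norm_map w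

lemma eq_zero_of_forall_normalRep_eq {w : (fixedSubspace ρ)ᗮ} (hw : ∀ g, normalRep ρ g w = w) :
    w = 0 := by
  rw [← inner_self_eq_zero (𝕜 := ℝ)]
  exact w.2 w fun g => congrArg Subtype.val (hw g)

variable [(fixedSubspace ρ).HasOrthogonalProjection]

lemma orthogonalProjectionOnto_fixedSubspace_map (g : G) (x : E) :
    (fixedSubspace ρ).orthogonalProjectionOnto (ρ g x) =
      (fixedSubspace ρ).orthogonalProjectionOnto x := by
  obtain ⟨v, hv, w, hw, rfl⟩ := (fixedSubspace ρ).exists_add_mem_mem_orthogonal x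
  rw [map_add, hv g, map_add, map_add,
    (fixedSubspace ρ).orthogonalProjectionOnto_apply_of_mem_orthogonal hw,
    (fixedSubspace ρ).orthogonalProjectionOnto_apply_of_mem_orthogonal
      (map_mem_orthogonal_fixedSubspace ρ g hw)]

lemma orthogonalProjectionOnto_orthogonal_fixedSubspace_map (g : G) (x : E) :
    (fixedSubspace ρ)ᗮ.orthogonalProjectionOnto (ρ g x) =
      normalRep ρ g ((fixedSubspace ρ)ᗮ.orthogonalProjectionOnto x) := by
  obtain ⟨v, hv, w, hw, rfl⟩ := (fixedSubspace ρ).exists_add_mem_mem_orthogonal x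
  lift w to (fixedSubspace ρ)ᗮ using hw
  rw [map_add, hv g, ← coe_normalRep_apply, map_add, map_add,
    Submodule.orthogonalProjectionOnto_mem_subspace_eq_self,
    Submodule.orthogonalProjectionOnto_mem_subspace_eq_self,
    Submodule.orthogonalProjectionOnto_orthogonal_apply_eq_zero hv, zero_add, zero_add]

end FixedSubspace

section Sphere

variable {n : ℕ}

/-- The ambient Euclidean space of the sphere `Sph n`. -/
abbrev Euc (n : ℕ) : Type := EuclideanSpace ℝ (Fin (n + 1))

lemma norm_coe_sph (x : Sph n) : ‖(x : Euc n)‖ = 1 := mem_sphere_zero_iff_norm.1 x.2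

lemma coe_sph_ne_zero (x : Sph n) : (x : Euc n) ≠ 0 := ne_zero_of_mem_unit_sphere x

open Classical in
/-- Radial projection to the sphere; the value at the origin is arbitrary. -/
noncomputable def toSph (y : Euc n) : Sph n :=
  if h : y = 0 then ⟨EuclideanSpace.single 0 1, by simp⟩
  else ⟨‖y‖⁻¹ • y, by simpa using norm_smul_inv_norm (𝕜 := ℝ) h⟩

lemma coe_toSph {y : Euc n} (hy : y ≠ 0) : (toSph y : Euc n) = ‖y‖⁻¹ • y := by
  rw [toSph, dif_neg hy]

lemma toSph_coe (x : Sph n) : toSph (x : Euc n) = x := by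
  ext1
  rw [coe_toSph (coe_sph_ne_zero x), norm_coe_sph, inv_one, one_smul]

lemma continuousOn_toSph : ContinuousOn (toSph (n := n)) {0}ᶜ := by
  rw [Topology.IsInducing.subtypeVal.continuousOn_iff]
  refine ContinuousOn.congr (f := fun y => ‖y‖⁻¹ • y) ?_ fun y hy => coe_toSph hy
  exact (continuousOn_id.norm.inv₀ fun y hy => norm_ne_zero_iff.2 hy).smul continuousOn_id

variable {G : Type*} [Group G] (ρ : G →* (Euc n ≃ₗᵢ[ℝ] Euc n))

@[simp]
lemma coe_sphereAct (g : G) (x : Sph n) : (sphereAct ρ g x : Euc n) = ρ g x := rfl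

lemma sphereAct_one (x : Sph n) : sphereAct ρ 1 x = x := by
  ext1
  simp

lemma sphereAct_mul (g h : G) (x : Sph n) :
    sphereAct ρ (g * h) x = sphereAct ρ g (sphereAct ρ h x) := by
  ext1
  simp

lemma isometry_sphereAct (g : G) : Isometry (sphereAct ρ g) :=
  .of_dist_eq fun x y => (ρ g).dist_map x y

lemma coe_mem_fixedSubspace {x : Sph n} :
    (x : Euc n) ∈ fixedSubspace ρ ↔ ∀ g, sphereAct ρ g x = x := by
  simp only [mem_fixedSubspace, Subtype.ext_iff, coe_sphereAct]

lemma toSph_map (g : G) {y : Euc n} (hy : y ≠ 0) : toSph (ρ g y) = sphereAct ρ g (toSph y) := by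
  ext1
  rw [coe_sphereAct, coe_toSph hy, coe_toSph ((map_ne_zero_iff _ (ρ g).injective).2 hy),
    (ρ g).norm_map, map_smul]

end Sphere

section JoinPoint

variable {n k : ℕ} {V : Submodule ℝ (Euc n)} (e : V ≃L[ℝ] (Fin (k + 1) → ℝ))

/-- The coordinates, with respect to `e`, of the orthogonal projection to `V`. -/
noncomputable def coord : Euc n →L[ℝ] (Fin (k + 1) → ℝ) :=
  (e : V →L[ℝ] (Fin (k + 1) → ℝ)) ∘L V.orthogonalProjectionOnto

lemma coord_coe (v : V) : coord e v = e v := by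
  simp [coord]

lemma coord_eq_zero_iff {y : Euc n} : coord e y = 0 ↔ y ∈ Vᗮ := by
  simp [coord]

lemma coord_ne_zero {y : Euc n} (hy : y ∈ V) (h0 : y ≠ 0) : coord e y ≠ 0 := by
  lift y to V using hy
  rw [coord_coe]
  exact (map_ne_zero_iff _ e.injective).2 (by simpa using h0)

/-- The point with coordinates `v` on the segment that joins the point of `V` in the direction of
`v` to `w`; it lies in `V` as soon as `v` has norm one. -/
noncomputable def joinPoint (v : Fin (k + 1) → ℝ) (w : Vᗮ) : Euc n :=
  (e.symm v : Euc n) + (1 - ‖v‖) • (w : Euc n)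

lemma continuous_joinPoint :
    Continuous fun p : (Fin (k + 1) → ℝ) × Vᗮ => joinPoint e p.1 p.2 := by
  unfold joinPoint
  fun_prop

lemma coord_joinPoint (v : Fin (k + 1) → ℝ) (w : Vᗮ) : coord e (joinPoint e v w) = v := by
  rw [joinPoint, map_add, coord_coe, e.apply_symm_apply, map_smul, (coord_eq_zero_iff e).2 w.2,
    smul_zero, add_zero]

lemma joinPoint_ne_zero (v : Fin (k + 1) → ℝ) {w : Vᗮ} (hw : w ≠ 0) : joinPoint e v w ≠ 0 := by
  intro h
  have hv : v = 0 := by rw [← coord_joinPoint e v w, h, map_zero]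
  rw [hv] at h
  exact hw (by simpa [joinPoint] using h)

/-- The join parametrisation of the sphere by the unit ball of `V` and the directions of `Vᗮ`. -/
noncomputable def joinSph (v : Fin (k + 1) → ℝ) (w : Vᗮ) : Sph n := toSph (joinPoint e v w)

lemma continuousOn_joinSph :
    ContinuousOn (fun p : (Fin (k + 1) → ℝ) × Vᗮ => joinSph e p.1 p.2) (univ ×ˢ {0}ᶜ) :=
  continuousOn_toSph.comp (continuous_joinPoint e).continuousOn
    fun p hp => joinPoint_ne_zero e p.1 hp.2

lemma step_coord_joinSph (v : Fin (k + 1) → ℝ) {w : Vᗮ} (hw : w ≠ 0) (j) :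
    step (coord e (joinSph e v w) j) = step (v j) := by
  have hne := joinPoint_ne_zero e v hw
  rw [joinSph, coe_toSph hne, map_smul, coord_joinPoint, Pi.smul_apply, smul_eq_mul,
    step_mul_of_pos (inv_pos.2 (norm_pos_iff.2 hne))]

lemma joinSph_mem {v : Fin (k + 1) → ℝ} (hv : ‖v‖ = 1) {w : Vᗮ} (hw : w ≠ 0) :
    (joinSph e v w : Euc n) ∈ V := by
  rw [joinSph, coe_toSph (joinPoint_ne_zero e v hw), joinPoint, hv, sub_self, zero_smul, add_zero]
  exact V.smul_mem _ (e.symm v).2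

end JoinPoint

section JoinPoint

variable {n k : ℕ} {G : Type*} [Group G] {ρ : G →* (Euc n ≃ₗᵢ[ℝ] Euc n)}
  (e : fixedSubspace ρ ≃L[ℝ] (Fin (k + 1) → ℝ))

lemma joinSph_normalRep (g : G) (v : Fin (k + 1) → ℝ) {w : (fixedSubspace ρ)ᗮ} (hw : w ≠ 0) :
    joinSph e v (normalRep ρ g w) = sphereAct ρ g (joinSph e v w) := by
  rw [joinSph, joinSph, ← toSph_map ρ g (joinPoint_ne_zero e v hw), joinPoint, joinPoint, map_add,
    (e.symm v).2 g, map_smul, coe_normalRep_apply]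

end JoinPoint

section StepHomotopicPath

variable {X : Type*} [PseudoMetricSpace X] {n k : ℕ}

lemma StepHomotopic.symm {D : Set X} {f g : X → Fin (k + 1) → ℝ} (h : StepHomotopic D f g) :
    StepHomotopic D g f := by
  obtain ⟨h, hcont, hne, hends⟩ := h
  have hmaps : MapsTo (Prod.map id Neg.neg) (D ×ˢ Icc (-1 : ℝ) 1) (D ×ˢ Icc (-1) 1) :=
    fun p hp => ⟨hp.1, neg_le_neg hp.2.2, neg_le.1 hp.2.1⟩
  refine ⟨h ∘ Prod.map id Neg.neg, hcont.comp (by fun_prop) hmaps, fun p hp => hne _ (hmaps hp),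
    fun x hx j => ?_⟩
  simpa [and_comm] using hends x hx j

lemma stepHomotopic_coord_path {V : Submodule ℝ (Euc n)} (e : V ≃L[ℝ] (Fin (k + 1) → ℝ))
    {D : Set X} {γ : X → C(I, Sph n)} (hγ : ContinuousOn γ D)
    (hV : ∀ x ∈ D, ∀ t, (γ x t : Euc n) ∈ V) :
    StepHomotopic D (fun x => coord e (γ x 0)) fun x => coord e (γ x 1) := by
  let τ (t : ℝ) : I := projIcc 0 1 zero_le_one ((1 + t) / 2)
  have hτ : Continuous τ := continuous_projIcc.comp (by fun_prop)
  have heval : Continuous fun p : C(I, Sph n) × I => coord e (p.1 p.2) := by fun_prop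
  have hpair : ContinuousOn (fun p : X × ℝ => (γ p.1, τ p.2)) (D ×ˢ Icc (-1) 1) :=
    (hγ.comp continuousOn_fst fun p hp => hp.1).prodMk (hτ.comp continuous_snd).continuousOn
  have hcont := heval.comp_continuousOn hpair
  have hstart : τ (-1) = 0 := by simp [τ]
  have hend : τ 1 = 1 := by simp [τ]
  refine ⟨fun p => coord e (γ p.1 (τ p.2)), hcont,
    fun p hp => coord_ne_zero e (hV _ hp.1 _) (coe_sph_ne_zero _), fun x _ j => ?_⟩
  simp only [hstart, hend, and_self]

lemma StepHomotopic.congr {D : Set X} {f f' g g' : X → Fin (k + 1) → ℝ}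
    (h : StepHomotopic D f g) (hf : ∀ x ∈ D, ∀ j, step (f x j) = step (f' x j))
    (hg : ∀ x ∈ D, ∀ j, step (g x j) = step (g' x j)) : StepHomotopic D f' g' := by
  obtain ⟨h, hcont, hne, hends⟩ := h
  refine ⟨h, hcont, hne, fun x hx j => ?_⟩
  rw [← hf x hx, ← hg x hx]
  exact hends x hx j

end StepHomotopicPath

section PointPair

variable {n k : ℕ} {G : Type*} [Group G] {ρ : G →* (Euc n ≃ₗᵢ[ℝ] Euc n)}
  (e : fixedSubspace ρ ≃L[ℝ] (Fin (k + 1) → ℝ)) {x₀ : (fixedSubspace ρ)ᗮ}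

variable (x₀) in
/-- The pair of points of the sphere with join coordinates `(z.1.1, x₀)` and `(z.1.2, z.2)`. -/
noncomputable def pointPair (z : CubePair k × (fixedSubspace ρ)ᗮ) : Sph n × Sph n :=
  (joinSph e z.1.1 x₀, joinSph e z.1.2 z.2)

lemma continuousOn_pointPair (hx₀ : x₀ ≠ 0) :
    ContinuousOn (pointPair e x₀) (univ ×ˢ {0}ᶜ) := by
  have hjoin := continuousOn_joinSph e
  have hfst : ContinuousOn (fun z : CubePair k × (fixedSubspace ρ)ᗮ => joinSph e z.1.1 x₀)
      (univ ×ˢ {0}ᶜ) :=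
    hjoin.comp (f := fun z : CubePair k × (fixedSubspace ρ)ᗮ => (z.1.1, x₀)) (by fun_prop)
      fun z _ => ⟨trivial, hx₀⟩
  have hsnd : ContinuousOn (fun z : CubePair k × (fixedSubspace ρ)ᗮ => joinSph e z.1.2 z.2)
      (univ ×ˢ {0}ᶜ) :=
    hjoin.comp (f := fun z : CubePair k × (fixedSubspace ρ)ᗮ => (z.1.2, z.2)) (by fun_prop)
      fun z hz => ⟨trivial, hz.2⟩
  exact hfst.prodMk hsnd

lemma pointPair_map (g : G) {z : CubePair k × (fixedSubspace ρ)ᗮ} (hz : z.2 ≠ 0) :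
    pointPair e x₀ (z.1, normalRep ρ g z.2) =
      Prod.map (sphereAct ρ 1) (sphereAct ρ g) (pointPair e x₀ z) := by
  simp only [pointPair, joinSph_normalRep e g _ hz, Prod.map_apply, sphereAct_one]

end PointPair

lemma continuousOn_smul_of_norm_le {X F : Type*} [TopologicalSpace X] [NormedAddCommGroup F]
    [NormedSpace ℝ F] {f : X → ℝ} {g : X → F} {D : Set X} {C : ℝ} (hf : ContinuousOn f D)
    (hC : ∀ x, ‖g x‖ ≤ C) (hg : ∀ x ∈ D, f x ≠ 0 → ContinuousWithinAt g D x) :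
    ContinuousOn (fun x => f x • g x) D := by
  intro x hx
  by_cases h0 : f x = 0
  · have hlim := (hf x hx).abs.mul_const C
    rw [ContinuousWithinAt, h0, abs_zero, zero_mul] at hlim
    rw [ContinuousWithinAt, h0, zero_smul]
    refine squeeze_zero_norm (fun y => ?_) hlim
    rw [norm_smul]
    exact mul_le_mul_of_nonneg_left (hC y) (abs_nonneg _)
  · exact (hf x hx).smul (hg x hx h0)

namespace PlannerPair

section Fixed

variable {n : ℕ} {G : Type*} [Group G] {ρ : G →* (Euc n ≃ₗᵢ[ℝ] Euc n)}
  (T : PlannerPair (sphereAct ρ)) {i : Bool} {p : Sph n × Sph n}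

lemma head_mem_fixedSubspace (hp : 0 < T.weight i p) (h : (p.1 : Euc n) ∈ fixedSubspace ρ)
    (t : I) : (T.head i p t : Euc n) ∈ fixedSubspace ρ := by
  refine (coe_mem_fixedSubspace ρ).2 fun g => ?_
  rw [← T.head_map i p hp g 1, Prod.map, (coe_mem_fixedSubspace ρ).1 h, sphereAct_one]

lemma tail_mem_fixedSubspace (hp : 0 < T.weight i p) (h : (p.2 : Euc n) ∈ fixedSubspace ρ)
    (t : I) : (T.tail i p t : Euc n) ∈ fixedSubspace ρ := by
  refine (coe_mem_fixedSubspace ρ).2 fun g => ?_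
  rw [← T.tail_map i p hp 1 g, Prod.map, (coe_mem_fixedSubspace ρ).1 h, sphereAct_one]

lemma head_one_eq_tail_zero (hp : 0 < T.weight i p) (h : (p.2 : Euc n) ∈ fixedSubspace ρ) :
    T.head i p 1 = T.tail i p 0 := by
  obtain ⟨g, hg⟩ := T.exists_act_head i p hp
  have hfix := (coe_mem_fixedSubspace ρ).1 (T.tail_mem_fixedSubspace hp h 0)
  rw [← hfix g⁻¹, ← hg, ← sphereAct_mul, inv_mul_cancel, sphereAct_one]

end Fixed

section MeetingCoord

open Filter Topology

variable {n k : ℕ} {G : Type*} [Group G] {ρ : G →* (Euc n ≃ₗᵢ[ℝ] Euc n)}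
  (T : PlannerPair (sphereAct ρ)) (e : fixedSubspace ρ ≃L[ℝ] (Fin (k + 1) → ℝ))
  {x₀ : (fixedSubspace ρ)ᗮ} {w : (fixedSubspace ρ)ᗮ} {q : CubePair k}
  {z : CubePair k × (fixedSubspace ρ)ᗮ} {i : Bool}

variable (x₀) in
/-- The weighted coordinates in the fixed subspace of the end of the first path; up to the group
action, this is also where the second path starts. -/
noncomputable def meetingCoord (i : Bool) (z : CubePair k × (fixedSubspace ρ)ᗮ) :
    Fin (k + 1) → ℝ :=
  T.weight i (pointPair e x₀ z) • coord e (T.head i (pointPair e x₀ z) 1)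

lemma continuousOn_meetingCoord (hx₀ : x₀ ≠ 0) (i : Bool) :
    ContinuousOn (T.meetingCoord e x₀ i) (univ ×ˢ {0}ᶜ) := by
  have hpoint := continuousOn_pointPair e hx₀
  refine continuousOn_smul_of_norm_le (C := ‖coord e‖)
    ((T.continuous_weight i).comp_continuousOn hpoint) (fun z => ?_) fun z hz h0 => ?_
  · simpa [norm_coe_sph] using (coord e).le_opNorm (T.head i (pointPair e x₀ z) 1 : Euc n)
  · have hopen : IsOpen {p | 0 < T.weight i p} :=
      isOpen_lt continuous_const (T.continuous_weight i)
    have hhead : ContinuousAt (T.head i) (pointPair e x₀ z) :=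
      (T.continuousOn_head i).continuousAt
        (hopen.mem_nhds ((T.weight_nonneg i _).lt_of_ne' h0))
    have heval : Continuous fun γ : C(I, Sph n) => coord e (γ 1) := by fun_prop
    exact heval.continuousAt.comp_continuousWithinAt
      (hhead.comp_continuousWithinAt (hpoint z hz))

lemma meetingCoord_map (g : G) (i : Bool) (hz : z.2 ≠ 0) :
    T.meetingCoord e x₀ i (z.1, normalRep ρ g z.2) = T.meetingCoord e x₀ i z := by
  rw [meetingCoord, pointPair_map e g hz, T.weight_map, meetingCoord]
  rcases (T.weight_nonneg i (pointPair e x₀ z)).eq_or_lt with h | h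
  · rw [← h, zero_smul, zero_smul]
  · rw [T.head_map i _ h, sphereAct_one]

lemma step_meetingCoord (h : 0 < T.weight i (pointPair e x₀ z)) (j) :
    step (T.meetingCoord e x₀ i z j) = step (coord e (T.head i (pointPair e x₀ z) 1) j) :=
  step_mul_of_pos h _

lemma pointPair_fst_mem (hq : q ∈ leftFace k) (hx₀ : x₀ ≠ 0) :
    ((pointPair e x₀ (q, w)).1 : Euc n) ∈ fixedSubspace ρ :=
  joinSph_mem e (mem_sphere_zero_iff_norm.1 hq.1) hx₀

lemma pointPair_snd_mem (hq : q ∈ rightFace k) (hw : w ≠ 0) :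
    ((pointPair e x₀ (q, w)).2 : Euc n) ∈ fixedSubspace ρ :=
  joinSph_mem e (mem_sphere_zero_iff_norm.1 hq.2) hw

lemma meetingCoord_ne_zero (hq : q ∈ leftFace k ∪ rightFace k) (hx₀ : x₀ ≠ 0) (hw : w ≠ 0)
    (h : 0 < T.weight i (pointPair e x₀ (q, w))) : T.meetingCoord e x₀ i (q, w) ≠ 0 := by
  refine smul_ne_zero h.ne' (coord_ne_zero e ?_ (coe_sph_ne_zero _))
  rcases hq with hq | hq
  · exact T.head_mem_fixedSubspace h (pointPair_fst_mem e hq hx₀) 1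
  · rw [T.head_one_eq_tail_zero h (pointPair_snd_mem e hq hw)]
    exact T.tail_mem_fixedSubspace h (pointPair_snd_mem e hq hw) 0

lemma continuous_pointPair (hx₀ : x₀ ≠ 0) (hw : w ≠ 0) :
    Continuous fun q : CubePair k => pointPair e x₀ (q, w) :=
  continuousOn_univ.1 ((continuousOn_pointPair e hx₀).comp (Continuous.prodMk_left w).continuousOn
    fun _ _ => ⟨trivial, hw⟩)

lemma stepHomotopic_fst_meetingCoord (hx₀ : x₀ ≠ 0) (hw : w ≠ 0) (i : Bool) :
    StepHomotopic (leftFace k ∩ {q | 1 / 4 ≤ T.weight i (pointPair e x₀ (q, w))}) Prod.fst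
      fun q => T.meetingCoord e x₀ i (q, w) := by
  have hpos {q} (hq : 1 / 4 ≤ T.weight i (pointPair e x₀ (q, w))) :
    0 < T.weight i (pointPair e x₀ (q, w)) := by linarith
  refine (stepHomotopic_coord_path e ((T.continuousOn_head i).comp
    (continuous_pointPair e hx₀ hw).continuousOn fun q hq => hpos hq.2)
    fun q hq t => T.head_mem_fixedSubspace (hpos hq.2) (pointPair_fst_mem e hq.1 hx₀) t).congr
    (fun q hq j => ?_) fun q hq j => (T.step_meetingCoord e (hpos hq.2) j).symm
  rw [Function.comp_apply, T.head_zero i _ (hpos hq.2)]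
  exact step_coord_joinSph e _ hx₀ j

lemma stepHomotopic_snd_meetingCoord (hx₀ : x₀ ≠ 0) (hw : w ≠ 0) (i : Bool) :
    StepHomotopic (rightFace k ∩ {q | 1 / 4 ≤ T.weight i (pointPair e x₀ (q, w))}) Prod.snd
      fun q => T.meetingCoord e x₀ i (q, w) := by
  have hpos {q} (hq : 1 / 4 ≤ T.weight i (pointPair e x₀ (q, w))) :
    0 < T.weight i (pointPair e x₀ (q, w)) := by linarith
  refine (stepHomotopic_coord_path e ((T.continuousOn_tail i).comp
    (continuous_pointPair e hx₀ hw).continuousOn fun q hq => hpos hq.2)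
    fun q hq t => T.tail_mem_fixedSubspace (hpos hq.2) (pointPair_snd_mem e hq.1 hw)
      t).symm.congr (fun q hq j => ?_) fun q hq j => ?_
  · rw [Function.comp_apply, T.tail_one i _ (hpos hq.2)]
    exact step_coord_joinSph e _ hw j
  · rw [T.step_meetingCoord e (hpos hq.2),
      T.head_one_eq_tail_zero (hpos hq.2) (pointPair_snd_mem e hq.1 hw)]
    rfl

lemma odd_and_eventually_squareChain_eq_one (hk : 0 < k) (hx₀ : x₀ ≠ 0) (hw : w ≠ 0) :
    Odd k ∧ ∀ᶠ m : ℕ in atTop,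
      squareChain m k (pullback (·, w) (zeroCocycle (T.meetingCoord e x₀))) = 1 := by
  simp only [zeroCocycle, pullback_cup, pullback_signCocycle]
  exact PaperTC.odd_and_eventually_squareChain_eq_one
    (α := fun i q => T.meetingCoord e x₀ i (q, w)) hk
    (fun i => ((T.continuous_weight i).comp (continuous_pointPair e hx₀ hw)).continuousOn)
    (fun q _ => T.weight_add _) (T.stepHomotopic_fst_meetingCoord e hx₀ hw)
    (T.stepHomotopic_snd_meetingCoord e hx₀ hw)

end MeetingCoord

end PlannerPair

section Isotropy

variable {G W : Type*} [Group G] [AddCommGroup W] [Module ℝ W]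

/-- The isotropy group of a vector. -/
def isotropy (π : Representation ℝ G W) (w : W) : Subgroup G where
  carrier := {g | π g w = w}
  one_mem' := by simp
  mul_mem' {g h} hg hh := by
    rw [mem_ofPred_eq] at hg hh ⊢
    rw [map_mul, Module.End.mul_apply, hh, hg]
  inv_mem' {g} hg := by
    rw [mem_ofPred_eq] at hg ⊢
    nth_rw 1 [← hg]
    exact π.inv_self_apply g w

lemma mem_isotropy {π : Representation ℝ G W} {g : G} {w : W} :
    g ∈ isotropy π w ↔ π g w = w := Iff.rfl

/-- The isotropy group of the nonzero vector `w` is maximal among those of nonzero vectors. -/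
structure HasMaximalIsotropy (π : Representation ℝ G W) (w : W) : Prop where
  ne_zero : w ≠ 0
  isotropy_le : ∀ w' ≠ 0, isotropy π w ≤ isotropy π w' → isotropy π w' ≤ isotropy π w

lemma exists_hasMaximalIsotropy [Finite G] [Nontrivial W] (π : Representation ℝ G W) :
    ∃ w, HasMaximalIsotropy π w := by
  obtain ⟨w₀, hw₀⟩ := exists_ne (0 : W)
  obtain ⟨H, ⟨⟨w, hw, rfl⟩, hmax⟩⟩ :=
    (toFinite (isotropy π '' {0}ᶜ)).exists_maximal ⟨_, w₀, hw₀, rfl⟩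
  exact ⟨w, hw, fun w' hw' hle => hmax ⟨w', hw', rfl⟩ hle⟩

end Isotropy

section FixedSubspace

variable {n k : ℕ} {G : Type*} [Group G] {ρ : G →* (Euc n ≃ₗᵢ[ℝ] Euc n)}
  {x₀ : (fixedSubspace ρ)ᗮ}

lemma HasMaximalIsotropy.mem_of_sphereAct_eq (hx₀ : HasMaximalIsotropy (normalRep ρ) x₀)
    {A : Sph n} (hA : (A : Euc n) ∉ fixedSubspace ρ)
    (hfix : ∀ h ∈ isotropy (normalRep ρ) x₀, sphereAct ρ h A = A) {g : G}
    (hg : sphereAct ρ g A = A) : g ∈ isotropy (normalRep ρ) x₀ := by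
  have hmem {h : G} (hh : sphereAct ρ h A = A) :
      h ∈ isotropy (normalRep ρ) ((fixedSubspace ρ)ᗮ.orthogonalProjectionOnto A) := by
    rw [mem_isotropy, ← orthogonalProjectionOnto_orthogonal_fixedSubspace_map, ← coe_sphereAct,
      hh]
  refine hx₀.isotropy_le _ (fun h0 => hA ?_) (fun h hh => hmem (hfix h hh)) (hmem hg)
  rwa [Submodule.orthogonalProjectionOnto_eq_zero_iff, Submodule.orthogonal_orthogonal] at h0

lemma exists_pos_forall_notMem_of_abs_coord_lt {V : Submodule ℝ (Euc n)}
    (e : V ≃L[ℝ] (Fin (k + 1) → ℝ)) :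
    ∃ r > 0, ∀ x : Sph n, (∀ j, |coord e x j| < r) → (x : Euc n) ∉ V := by
  have hcompact : IsCompact {x : Sph n | (x : Euc n) ∈ V} :=
    (V.closed_of_finiteDimensional.preimage continuous_subtype_val).isCompact
  obtain ⟨r, hr, h⟩ := exists_pos_forall_exists_le_abs hcompact (f := fun x : Sph n => coord e x)
    (by fun_prop) fun x hx => coord_ne_zero e hx (coe_sph_ne_zero x)
  refine ⟨r, hr, fun x hlt hx => ?_⟩
  obtain ⟨j, hj⟩ := h x hx
  exact (hlt j).not_ge hj

end FixedSubspace

section Separation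

open Filter Topology

lemma eventually_forall_lt_dist {X : Type*} [MetricSpace X] {s t : Set X} (hs : IsCompact s)
    (ht : IsCompact t) (h : Disjoint s t) :
    ∀ᶠ ε in 𝓝[>] (0 : ℝ), ∀ x ∈ s, ∀ y ∈ t, ε < dist x y := by
  obtain ⟨r, hr, hlt⟩ := Metric.exists_pos_forall_lt_edist hs ht.isClosed h
  filter_upwards [nhdsWithin_le_nhds (Iio_mem_nhds (NNReal.coe_pos.2 hr))] with ε hε x hx y hy
  have hxy := hlt x hx y hy
  rw [edist_nndist, ENNReal.coe_lt_coe, ← NNReal.coe_lt_coe, coe_nndist] at hxy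
  exact lt_trans hε hxy

end Separation

namespace PlannerPair

section ZeroLabelling

open Filter Topology

variable {n k : ℕ} {G : Type*} [Group G] {ρ : G →* (Euc n ≃ₗᵢ[ℝ] Euc n)}
  (T : PlannerPair (sphereAct ρ)) (e : fixedSubspace ρ ≃L[ℝ] (Fin (k + 1) → ℝ))
  {x₀ : (fixedSubspace ρ)ᗮ} {z : CubePair k × (fixedSubspace ρ)ᗮ} {i : Bool} {r : ℝ}

variable (x₀) in
/-- A planner whose weight at the given pair of points is at least one half. -/
noncomputable def state (z : CubePair k × (fixedSubspace ρ)ᗮ) : Bool :=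
  decide (1 / 2 ≤ T.weight true (pointPair e x₀ z))

lemma half_le_weight_state (z : CubePair k × (fixedSubspace ρ)ᗮ) :
    1 / 2 ≤ T.weight (T.state e x₀ z) (pointPair e x₀ z) := by
  by_cases h : 1 / 2 ≤ T.weight true (pointPair e x₀ z)
  · rwa [state, decide_eq_true h]
  · rw [state, decide_eq_false h]
    linarith [T.weight_add (pointPair e x₀ z)]

lemma weight_state_pos (z : CubePair k × (fixedSubspace ρ)ᗮ) :
    0 < T.weight (T.state e x₀ z) (pointPair e x₀ z) :=
  one_half_pos.trans_le (T.half_le_weight_state e z)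

lemma state_map (g : G) (hz : z.2 ≠ 0) :
    T.state e x₀ (z.1, normalRep ρ g z.2) = T.state e x₀ z := by
  simp only [state, pointPair_map e g hz, T.weight_map]

lemma head_one_notMem (hr : ∀ x : Sph n, (∀ j, |coord e x j| < r) → (x : Euc n) ∉ fixedSubspace ρ)
    (hi : 1 / 2 ≤ T.weight i (pointPair e x₀ z))
    (hsmall : ∀ j, |T.meetingCoord e x₀ i z j| < r / 2) :
    (T.head i (pointPair e x₀ z) 1 : Euc n) ∉ fixedSubspace ρ := by
  refine hr _ fun j => ?_
  have hj := hsmall j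
  rw [meetingCoord, Pi.smul_apply, smul_eq_mul, abs_mul, abs_of_nonneg (T.weight_nonneg _ _)] at hj
  have := mul_le_mul_of_nonneg_right hi
    (abs_nonneg (coord e (T.head i (pointPair e x₀ z) 1) j))
  linarith

lemma coset_eq_of_sphereAct_eq (hx₀ : HasMaximalIsotropy (normalRep ρ) x₀)
    (hr : ∀ x : Sph n, (∀ j, |coord e x j| < r) → (x : Euc n) ∉ fixedSubspace ρ)
    (hi : 1 / 2 ≤ T.weight i (pointPair e x₀ z))
    (hsmall : ∀ j, |T.meetingCoord e x₀ i z j| < r / 2) {g g' : G}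
    (hg : sphereAct ρ g (T.head i (pointPair e x₀ z) 1) =
      sphereAct ρ g' (T.head i (pointPair e x₀ z) 1)) :
    (g : G ⧸ isotropy (normalRep ρ) x₀) = g' := by
  refine QuotientGroup.eq.2
    (hx₀.mem_of_sphereAct_eq (T.head_one_notMem e hr hi hsmall) (fun h hh => ?_) ?_)
  · have hfix : sphereAct ρ h (pointPair e x₀ z).1 = (pointPair e x₀ z).1 := by
      rw [pointPair, ← joinSph_normalRep e h _ hx₀.ne_zero, mem_isotropy.1 hh]
    rw [← T.head_map i _ (by linarith) h 1, Prod.map, hfix, sphereAct_one]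
  · rw [sphereAct_mul, ← hg, ← sphereAct_mul, inv_mul_cancel, sphereAct_one]

variable (x₀) in
/-- The points over `D` where the group element `g` takes the end of the first path of the
planner `i` to the start of the second path, and where the meeting coordinates are at most `r`. -/
def matchSet (D : Set (fixedSubspace ρ)ᗮ) (i : Bool) (r : ℝ) (g : G) :
    Set (CubePair k × (fixedSubspace ρ)ᗮ) :=
  {z ∈ cubeSquare k ×ˢ D | (1 / 2 ≤ T.weight i (pointPair e x₀ z) ∧
      ∀ j, |T.meetingCoord e x₀ i z j| ≤ r) ∧
    sphereAct ρ g (T.head i (pointPair e x₀ z) 1) = T.tail i (pointPair e x₀ z) 0}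

lemma isCompact_matchSet (hx₀ : x₀ ≠ 0) {D : Set (fixedSubspace ρ)ᗮ} (hD : IsCompact D)
    (h0 : 0 ∉ D) (i : Bool) (r : ℝ) (g : G) : IsCompact (T.matchSet e x₀ D i r g) := by
  have hsub : cubeSquare k ×ˢ D ⊆ univ ×ˢ {0}ᶜ :=
    prod_mono (subset_univ _) (subset_compl_singleton_iff.2 h0)
  have hpoint := (continuousOn_pointPair e hx₀).mono hsub
  let C : Set (CubePair k × (fixedSubspace ρ)ᗮ) :=
    {z ∈ cubeSquare k ×ˢ D | 1 / 2 ≤ T.weight i (pointPair e x₀ z) ∧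
      ∀ j, |T.meetingCoord e x₀ i z j| ≤ r}
  have hC : IsCompact C := by
    have hK := (isCompact_cubeSquare k).prod hD
    refine hK.of_isClosed_subset ?_ fun z hz => hz.1
    have hcont := ((T.continuous_weight i).comp_continuousOn hpoint).prodMk
      ((T.continuousOn_meetingCoord e hx₀ i).mono hsub)
    have hclosed : IsClosed {p : ℝ × (Fin (k + 1) → ℝ) | 1 / 2 ≤ p.1 ∧ ∀ j, |p.2 j| ≤ r} := by
      simp only [ofPred_and, ofPred_forall]
      exact (isClosed_le (by fun_prop) (by fun_prop)).inter
        (isClosed_iInter fun j => isClosed_le (by fun_prop) (by fun_prop))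
    exact hcont.preimage_isClosed_of_isClosed hK.isClosed hclosed
  have hpos : MapsTo (pointPair e x₀) C {p | 0 < T.weight i p} :=
    fun z hz => one_half_pos.trans_le hz.2.1
  have hpointC := hpoint.mono (t := C) fun z hz => hz.1
  have hhead := ((isometry_sphereAct ρ g).continuous.comp
    (continuous_eval_const (F := C(I, Sph n)) 1)).comp_continuousOn
      ((T.continuousOn_head i).comp hpointC hpos)
  have htail := (continuous_eval_const (F := C(I, Sph n)) 0).comp_continuousOn
    ((T.continuousOn_tail i).comp hpointC hpos)
  refine hC.of_isClosed_subset ?_ fun z hz => ⟨hz.1, hz.2.1⟩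
  convert (hhead.prodMk htail).preimage_isClosed_of_isClosed hC.isClosed isClosed_diagonal
    using 1
  ext z
  exact and_assoc.symm

lemma eventually_labelConstantOn [Finite G] (hx₀ : HasMaximalIsotropy (normalRep ρ) x₀)
    (hr : ∀ x : Sph n, (∀ j, |coord e x j| < r) → (x : Euc n) ∉ fixedSubspace ρ) (hr0 : 0 < r)
    {γ : CubePair k × (fixedSubspace ρ)ᗮ → G}
    (hγ : ∀ z, sphereAct ρ (γ z) (T.head (T.state e x₀ z) (pointPair e x₀ z) 1) =
      T.tail (T.state e x₀ z) (pointPair e x₀ z) 0)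
    {D : Set (fixedSubspace ρ)ᗮ} (hD : IsCompact D) (h0 : 0 ∉ D) :
    ∀ᶠ ε in 𝓝[>] (0 : ℝ), ∀ l, FineIn ε (cubeSquare k ×ˢ D) l →
      (∀ z ∈ l, ∀ i j, |T.meetingCoord e x₀ i z j| < r / 4) →
        LabelConstantOn (T.state e x₀)
          (fun z => (γ z : G ⧸ isotropy (normalRep ρ) x₀)) l := by
  have separated : ∀ᶠ ε in 𝓝[>] (0 : ℝ), ∀ (i : Bool) (g g' : G),
      (g : G ⧸ isotropy (normalRep ρ) x₀) ≠ g' →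
        ∀ z ∈ T.matchSet e x₀ D i (r / 4) g, ∀ z' ∈ T.matchSet e x₀ D i (r / 4) g',
          ε < dist z z' := by
    refine eventually_all.2 fun i => eventually_all.2 fun g => eventually_all.2 fun g' =>
      eventually_imp_distrib_left.2 fun hne => eventually_forall_lt_dist
        (T.isCompact_matchSet e hx₀.ne_zero hD h0 i _ g)
        (T.isCompact_matchSet e hx₀.ne_zero hD h0 i _ g')
        (disjoint_left.2 fun z hz hz' => hne ?_)
    exact T.coset_eq_of_sphereAct_eq e hx₀ hr hz.2.1.1
      (fun j => (hz.2.1.2 j).trans_lt (by linarith)) (hz.2.2.trans hz'.2.2.symm)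
  filter_upwards [separated] with ε hε l hl hsmall z hz z' hz' hstate
  have hmem {z} (hz : z ∈ l) : z ∈ T.matchSet e x₀ D (T.state e x₀ z) (r / 4) (γ z) :=
    ⟨hl.mem hz, ⟨T.half_le_weight_state e z, fun j => (hsmall z hz _ j).le⟩, hγ z⟩
  by_contra hne
  exact (hε _ _ _ hne z (hmem hz) z' (hstate ▸ hmem hz')).not_ge (hl.dist_le hz hz')

lemma isZeroLabelling [Finite G] (hk : 0 < k) (hx₀ : HasMaximalIsotropy (normalRep ρ) x₀)
    (hr : ∀ x : Sph n, (∀ j, |coord e x j| < r) → (x : Euc n) ∉ fixedSubspace ρ) (hr0 : 0 < r)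
    {γ : CubePair k × (fixedSubspace ρ)ᗮ → G}
    (hγ : ∀ z, sphereAct ρ (γ z) (T.head (T.state e x₀ z) (pointPair e x₀ z) 1) =
      T.tail (T.state e x₀ z) (pointPair e x₀ z) 0) :
    IsZeroLabelling (normalRep ρ) (T.meetingCoord e x₀) (T.state e x₀)
      (fun z => (γ z : G ⧸ isotropy (normalRep ρ) x₀)) (r / 4) where
  pos := by positivity
  continuousOn i := (T.continuousOn_meetingCoord e hx₀.ne_zero i).mono
    (prod_mono_left (subset_univ _))
  ne_zero_of_face z hz := ⟨T.state e x₀ z,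
    T.meetingCoord_ne_zero e hz.1 hx₀.ne_zero hz.2 (T.weight_state_pos e z)⟩
  apply_map g i z hz := T.meetingCoord_map e g i hz.2
  state_map g z hz := T.state_map e g hz.2
  label_map g z hz hsmall := by
    have hmap := hγ (z.1, normalRep ρ g z.2)
    rw [T.state_map e g hz.2, pointPair_map e g hz.2,
      T.head_map _ _ (T.weight_state_pos e z), T.tail_map _ _ (T.weight_state_pos e z),
      sphereAct_one, ← hγ z, ← sphereAct_mul] at hmap
    exact T.coset_eq_of_sphereAct_eq e hx₀ hr (T.half_le_weight_state e z)
      (fun j => (hsmall _ j).trans (by linarith)) hmap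
  label_eq D hD h0 := T.eventually_labelConstantOn e hx₀ hr hr0 hγ hD h0
  degree w hw := (T.odd_and_eventually_squareChain_eq_one e hk hx₀.ne_zero hw).2

end ZeroLabelling

end PlannerPair

section NoPlannerPair

variable {n k : ℕ} {G : Type*} [Group G] {ρ : G →* (Euc n ≃ₗᵢ[ℝ] Euc n)}

lemma odd_of_invTCcover_two (hk : 0 < k) (hV : Module.finrank ℝ (fixedSubspace ρ) = k + 1)
    (hW : 0 < Module.finrank ℝ (fixedSubspace ρ)ᗮ) (h : invTCcover (sphereAct ρ) 2) :
    Odd k := by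
  obtain ⟨T⟩ := nonempty_plannerPair (sphereAct_one ρ) (sphereAct_mul ρ) (isometry_sphereAct ρ) h
  let e : fixedSubspace ρ ≃L[ℝ] (Fin (k + 1) → ℝ) := .ofFinrankEq (by simpa using hV)
  have := Module.nontrivial_of_finrank_pos hW
  obtain ⟨w, hw⟩ := exists_ne (0 : (fixedSubspace ρ)ᗮ)
  exact (T.odd_and_eventually_squareChain_eq_one e hk hw hw).1

lemma isotropy_normalRep_ne_top {w : (fixedSubspace ρ)ᗮ} (hw : w ≠ 0) :
    isotropy (normalRep ρ) w ≠ ⊤ := fun h =>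
  hw (eq_zero_of_forall_normalRep_eq ρ fun g => mem_isotropy.1 (h ▸ Subgroup.mem_top g))

theorem not_invTCcover_two_of_three_le_finrank [Finite G] (hk : 0 < k)
    (hV : Module.finrank ℝ (fixedSubspace ρ) = k + 1)
    (hW : 3 ≤ Module.finrank ℝ (fixedSubspace ρ)ᗮ) : ¬ invTCcover (sphereAct ρ) 2 := by
  intro h
  obtain ⟨T⟩ := nonempty_plannerPair (sphereAct_one ρ) (sphereAct_mul ρ) (isometry_sphereAct ρ) h
  let e : fixedSubspace ρ ≃L[ℝ] (Fin (k + 1) → ℝ) := .ofFinrankEq (by simpa using hV)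
  have : Nontrivial (fixedSubspace ρ)ᗮ := Module.nontrivial_of_finrank_pos (R := ℝ) (by omega)
  obtain ⟨x₀, hx₀⟩ := exists_hasMaximalIsotropy (normalRep ρ)
  obtain ⟨r, hr0, hr⟩ := exists_pos_forall_notMem_of_abs_coord_lt e
  choose γ hγ using fun z =>
    T.exists_act_head (T.state e x₀ z) (pointPair e x₀ z) (T.weight_state_pos e z)
  have := Fintype.ofFinite (G ⧸ isotropy (normalRep ρ) x₀)
  have hcard := (T.isZeroLabelling e hk hx₀ hr hr0 hγ).card_eq_one hW
  rw [← Nat.card_eq_fintype_card] at hcard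
  exact isotropy_normalRep_ne_top hx₀.ne_zero (Subgroup.index_eq_one.1 hcard)

end NoPlannerPair

section NormalizedPow

open ComplexConjugate

/-- The `m`-th power in the angle of a complex number, its modulus being kept. -/
noncomputable def normalizedPow (m : ℕ) (w : ℂ) : ℂ := w ^ m / (‖w‖ : ℂ) ^ (m - 1)

lemma norm_normalizedPow (m : ℕ) [NeZero m] (w : ℂ) : ‖normalizedPow m w‖ = ‖w‖ := by
  rcases eq_or_ne w 0 with rfl | hw
  · simp [normalizedPow, NeZero.ne m]
  · have hw' : ‖w‖ ≠ 0 := norm_ne_zero_iff.2 hw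
    rw [normalizedPow, norm_div, norm_pow, norm_pow, Complex.norm_real, norm_norm,
      div_eq_iff (pow_ne_zero _ hw'), mul_pow_sub_one (NeZero.ne m)]

lemma continuous_normalizedPow (m : ℕ) [NeZero m] : Continuous (normalizedPow m) := by
  rw [continuous_iff_continuousAt]
  intro w
  rcases eq_or_ne w 0 with rfl | hw
  · have h0 : normalizedPow m 0 = 0 := norm_eq_zero.1 (by rw [norm_normalizedPow, norm_zero])
    rw [ContinuousAt, h0, tendsto_zero_iff_norm_tendsto_zero]
    simpa only [norm_normalizedPow, norm_zero] using (continuous_norm (E := ℂ)).tendsto 0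
  · have hw' : (‖w‖ : ℂ) ^ (m - 1) ≠ 0 := pow_ne_zero _ (by simpa using hw)
    unfold normalizedPow
    fun_prop (disch := assumption)

lemma normalizedPow_circle_mul (m : ℕ) (a : Circle) (w : ℂ) :
    normalizedPow m (a * w) = (a : ℂ) ^ m * normalizedPow m w := by
  simp only [normalizedPow, norm_mul, Circle.norm_coe, one_mul, mul_pow, mul_div_assoc]

lemma normalizedPow_conj (m : ℕ) (w : ℂ) : normalizedPow m (conj w) = conj (normalizedPow m w) := by
  simp [normalizedPow]

lemma exists_circle_mul_eq_of_norm_eq {w w' : ℂ} (h : ‖w‖ = ‖w'‖) : ∃ a : Circle, a * w = w' := by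
  rcases eq_or_ne w 0 with rfl | hw
  · exact ⟨1, by rw [norm_eq_zero.1 (h.symm.trans norm_zero), mul_zero]⟩
  · refine ⟨⟨w' / w, mem_sphere_zero_iff_norm.2 ?_⟩, div_mul_cancel₀ w' hw⟩
    rw [norm_div, h, div_self (h ▸ norm_ne_zero_iff.2 hw)]

lemma normalizedPow_eq_iff (m : ℕ) [NeZero m] {w w' : ℂ} :
    normalizedPow m w = normalizedPow m w' ↔ ∃ a : Circle, a ^ m = 1 ∧ a * w = w' := by
  constructor
  · intro h
    have hn : ‖w‖ = ‖w'‖ := by rw [← norm_normalizedPow m w, h, norm_normalizedPow]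
    rcases eq_or_ne w 0 with rfl | hw
    · exact ⟨1, one_pow m, by rw [norm_eq_zero.1 (hn.symm.trans norm_zero), mul_zero]⟩
    · obtain ⟨a, rfl⟩ := exists_circle_mul_eq_of_norm_eq hn
      have hne : normalizedPow m w ≠ 0 := by
        rwa [← norm_ne_zero_iff, norm_normalizedPow, norm_ne_zero_iff]
      rw [normalizedPow_circle_mul, eq_comm, mul_eq_right₀ hne] at h
      exact ⟨a, Circle.ext h, rfl⟩
  · rintro ⟨a, ha, rfl⟩
    rw [normalizedPow_circle_mul, ← Circle.coe_pow, ha, Circle.coe_one, one_mul]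

lemma normalizedPow_surjective (m : ℕ) [NeZero m] : Function.Surjective (normalizedPow m) := by
  intro z
  obtain ⟨a, ha⟩ := exists_circle_mul_eq_of_norm_eq (w := (‖z‖ : ℂ)) (w' := z) (by simp)
  obtain ⟨b, hb⟩ := IsAlgClosed.exists_pow_nat_eq (a : ℂ) (NeZero.pos m)
  have hb1 : ‖b‖ = 1 := by
    rw [← pow_eq_one_iff_of_nonneg (norm_nonneg b) (NeZero.ne m), ← norm_pow, hb, Circle.norm_coe]
  let c : Circle := ⟨b, mem_sphere_zero_iff_norm.2 hb1⟩
  have hr : normalizedPow m (‖z‖ : ℂ) = ‖z‖ := by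
    rcases eq_or_ne z 0 with rfl | hz
    · simp [normalizedPow, NeZero.ne m]
    · have hz' : (‖z‖ : ℂ) ≠ 0 := by simpa using hz
      rw [normalizedPow, Complex.norm_real, norm_norm, div_eq_iff (pow_ne_zero _ hz'),
        mul_pow_sub_one (NeZero.ne m)]
  exact ⟨c * ‖z‖, by rw [normalizedPow_circle_mul, hb, hr, ha]⟩

end NormalizedPow

section FoldIm

open ComplexConjugate

/-- The folding of the plane onto the closed upper half-plane along the real axis. -/
def foldIm (z : ℂ) : ℂ := ⟨z.re, |z.im|⟩

lemma norm_foldIm (z : ℂ) : ‖foldIm z‖ = ‖z‖ := by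
  simp [Complex.norm_def, foldIm, Complex.normSq_apply]

lemma continuous_foldIm : Continuous foldIm :=
  Complex.equivRealProdCLM.symm.continuous.comp
    (Complex.continuous_re.prodMk Complex.continuous_im.abs)

lemma foldIm_eq_iff {z z' : ℂ} : foldIm z = foldIm z' ↔ z = z' ∨ conj z = z' := by
  simp only [foldIm, Complex.ext_iff, abs_eq_abs, and_or_left, Complex.conj_re, Complex.conj_im,
    neg_eq_iff_eq_neg]

lemma foldIm_eq_self {z : ℂ} (hz : 0 ≤ z.im) : foldIm z = z :=
  Complex.ext rfl (abs_of_nonneg hz)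

end FoldIm

section PlanarOrbitMap

open ComplexConjugate RealInnerProductSpace

/-- `p` is a norm-preserving continuous self-map whose fibres are the orbits of `π`, so that it
identifies the orbit space with a subset of `W`. -/
structure IsNormedOrbitMap {G W : Type*} [Group G] [NormedAddCommGroup W] [Module ℝ W]
    (π : Representation ℝ G W) (p : W → W) : Prop where
  continuous : Continuous p
  norm_map : ∀ w, ‖p w‖ = ‖w‖
  eq_iff : ∀ {w w'}, p w = p w' ↔ ∃ g, π g w = w'

lemma mem_iff_pow_card_eq_one (R : Subgroup Circle) [Finite R] (a : Circle) :
    a ∈ R ↔ a ^ Nat.card R = 1 := by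
  have : NeZero (Nat.card R) := ⟨Nat.card_pos.ne'⟩
  have hle : R.map toUnits.toMonoidHom ≤ rootsOfUnity (Nat.card R) Circle := by
    rintro _ ⟨b, hb, rfl⟩
    have hb1 : b ^ Nat.card R = 1 := congrArg Subtype.val (pow_card_eq_one' (x := (⟨b, hb⟩ : R)))
    rw [mem_rootsOfUnity, ← map_pow, hb1, map_one]
  have heq := Subgroup.eq_of_le_of_card_ge hle (by
    rw [HasEnoughRootsOfUnity.natCard_rootsOfUnity,
      Subgroup.card_map_of_injective toUnits.injective])
  calc a ∈ R ↔ toUnits a ∈ R.map toUnits.toMonoidHom :=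
        (Subgroup.mem_map_iff_mem (f := toUnits.toMonoidHom) toUnits.injective).symm
    _ ↔ a ^ Nat.card R = 1 := by
        rw [heq, mem_rootsOfUnity, ← map_pow, map_eq_one_iff _ toUnits.injective]

variable {G : Type*} [Group G] (π : Representation ℝ G ℂ)

/-- The rotations by which a real representation in the plane acts. -/
def rotationSubgroup : Subgroup Circle where
  carrier := {a | ∃ g, ∀ z, π g z = a * z}
  one_mem' := ⟨1, fun z => by simp⟩
  mul_mem' := by
    rintro a b ⟨g, hg⟩ ⟨h, hh⟩
    exact ⟨g * h, fun z => by rw [map_mul, Module.End.mul_apply, hh, hg, Circle.coe_mul, mul_assoc]⟩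
  inv_mem' := by
    rintro a ⟨g, hg⟩
    refine ⟨g⁻¹, fun z => ?_⟩
    have h := hg (π g⁻¹ z)
    rw [π.self_inv_apply] at h
    rw [Circle.coe_inv, eq_inv_mul_iff_mul_eq₀ a.coe_ne_zero, ← h]

instance [Finite G] : Finite (rotationSubgroup π) := by
  choose g hg using fun a : rotationSubgroup π => a.2
  refine Finite.of_injective g fun a b h => Subtype.ext (Circle.ext ?_)
  rw [← mul_one (a : ℂ), ← hg, h, hg, mul_one]

lemma normalizedPow_card_eq_iff [Finite G] {w w' : ℂ} :
    normalizedPow (Nat.card (rotationSubgroup π)) w =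
        normalizedPow (Nat.card (rotationSubgroup π)) w' ↔
      ∃ a ∈ rotationSubgroup π, a * w = w' := by
  have : NeZero (Nat.card (rotationSubgroup π)) := ⟨Nat.card_pos.ne'⟩
  simp only [normalizedPow_eq_iff, ← mem_iff_pow_card_eq_one]

lemma exists_circle_of_norm_map {f : ℂ →ₗ[ℝ] ℂ} (hf : ∀ z, ‖f z‖ = ‖z‖) :
    ∃ a : Circle, (∀ z, f z = a * z) ∨ ∀ z, f z = a * conj z := by
  let f' : ℂ ≃ₗᵢ[ℝ] ℂ := (⟨f, hf⟩ : ℂ →ₗᵢ[ℝ] ℂ).toLinearIsometryEquiv rfl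
  obtain ⟨a, h | h⟩ := linear_isometry_complex f'
  · exact ⟨a, .inl fun z => DFunLike.congr_fun h z⟩
  · exact ⟨a, .inr fun z => DFunLike.congr_fun h z⟩

variable {π}

lemma isNormedOrbitMap_normalizedPow [Finite G] (h : ∀ g, ∃ a : Circle, ∀ z, π g z = a * z) :
    IsNormedOrbitMap π (normalizedPow (Nat.card (rotationSubgroup π))) := by
  have : NeZero (Nat.card (rotationSubgroup π)) := ⟨Nat.card_pos.ne'⟩
  refine ⟨continuous_normalizedPow _, norm_normalizedPow _, (normalizedPow_card_eq_iff π).trans ?_⟩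
  constructor
  · rintro ⟨a, ⟨g, hg⟩, rfl⟩
    exact ⟨g, hg _⟩
  · rintro ⟨g, rfl⟩
    obtain ⟨a, ha⟩ := h g
    exact ⟨a, ⟨g, ha⟩, (ha _).symm⟩

lemma exists_apply_eq_iff_of_reflection (hπ : ∀ g z, ‖π g z‖ = ‖z‖) {g₀ : G} {c : Circle}
    (hg₀ : ∀ z, π g₀ z = c * conj z) {w w' : ℂ} :
    (∃ g, π g w = w') ↔
      (∃ a ∈ rotationSubgroup π, a * w = w') ∨ ∃ a ∈ rotationSubgroup π, a * π g₀ w = w' := by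
  constructor
  · rintro ⟨g, rfl⟩
    obtain ⟨a, ha | ha⟩ := exists_circle_of_norm_map (hπ g)
    · exact .inl ⟨a, ⟨g, ha⟩, (ha w).symm⟩
    · have hmul (z : ℂ) : π (g * g₀⁻¹) (π g₀ z) = (a * c⁻¹ : Circle) * π g₀ z := by
        rw [map_mul, Module.End.mul_apply, π.inv_self_apply, ha, hg₀, Circle.coe_mul,
          Circle.coe_inv, mul_assoc, inv_mul_cancel_left₀ c.coe_ne_zero]
      refine .inr ⟨a * c⁻¹, ⟨g * g₀⁻¹, fun z => ?_⟩, ?_⟩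
      · rw [← π.self_inv_apply g₀ z, hmul]
      · rw [← hmul, map_mul, Module.End.mul_apply, π.inv_self_apply]
  · rintro (⟨a, ⟨g, hg⟩, rfl⟩ | ⟨a, ⟨g, hg⟩, rfl⟩)
    · exact ⟨g, hg w⟩
    · exact ⟨g * g₀, by rw [map_mul, Module.End.mul_apply, hg]⟩

-- Rotating by `d⁻¹` turns the reflection `z ↦ d² conj z` into complex conjugation.
lemma isNormedOrbitMap_foldIm [Finite G] (hπ : ∀ g z, ‖π g z‖ = ‖z‖) {g₀ : G} {d : Circle}
    (hg₀ : ∀ z, π g₀ z = (d * d : Circle) * conj z) :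
    IsNormedOrbitMap π fun w =>
      foldIm (normalizedPow (Nat.card (rotationSubgroup π)) ((d⁻¹ : Circle) * w)) := by
  have : NeZero (Nat.card (rotationSubgroup π)) := ⟨Nat.card_pos.ne'⟩
  have hd := d.coe_ne_zero
  refine ⟨?_, fun w => ?_, @fun w w' => ?_⟩
  · exact continuous_foldIm.comp
      ((continuous_normalizedPow _).comp (continuous_const.mul continuous_id))
  · rw [norm_foldIm, norm_normalizedPow, norm_mul, Circle.norm_coe, one_mul]
  · rw [foldIm_eq_iff, ← normalizedPow_conj, normalizedPow_card_eq_iff, normalizedPow_card_eq_iff,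
      exists_apply_eq_iff_of_reflection hπ hg₀]
    refine or_congr (exists_congr fun a => and_congr_right fun _ => ?_)
      (exists_congr fun a => and_congr_right fun _ => ?_)
    · rw [mul_left_comm, mul_right_inj' (Circle.coe_ne_zero _)]
    · rw [hg₀, map_mul, Circle.coe_inv_eq_conj, Complex.conj_conj, Circle.coe_mul,
        ← Circle.coe_inv_eq_conj, Circle.coe_inv, eq_inv_mul_iff_mul_eq₀ hd]
      ring_nf

theorem exists_isNormedOrbitMap_complex [Finite G] (hπ : ∀ g z, ‖π g z‖ = ‖z‖) :
    ∃ p, IsNormedOrbitMap π p ∧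
      (range p = univ ∨ ∃ e : ℂ, ‖e‖ = 1 ∧ range p = {z | 0 ≤ ⟪e, z⟫}) := by
  have : NeZero (Nat.card (rotationSubgroup π)) := ⟨Nat.card_pos.ne'⟩
  by_cases hrot : ∀ g, ∃ a : Circle, ∀ z, π g z = a * z
  · exact ⟨_, isNormedOrbitMap_normalizedPow hrot, .inl (normalizedPow_surjective _).range_eq⟩
  push Not at hrot
  obtain ⟨g₀, hg₀⟩ := hrot
  obtain ⟨c, hc⟩ := exists_circle_of_norm_map (hπ g₀)
  have hc' := hc.resolve_left fun h => (hg₀ c).elim fun z hz => hz (h z)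
  obtain ⟨d, rfl⟩ : ∃ d : Circle, d * d = c :=
    ⟨Circle.exp (Complex.arg c / 2), by rw [← Circle.exp_add, add_halves, Circle.exp_arg]⟩
  refine ⟨_, isNormedOrbitMap_foldIm hπ hc', .inr ⟨Complex.I, Complex.norm_I, ?_⟩⟩
  ext z
  have hI : ⟪Complex.I, z⟫ = z.im := by simp [Complex.inner]
  rw [mem_ofPred_eq, hI]
  constructor
  · rintro ⟨w, rfl⟩
    exact abs_nonneg _
  · intro hz
    obtain ⟨u, hu⟩ := normalizedPow_surjective (Nat.card (rotationSubgroup π)) z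
    refine ⟨d * u, ?_⟩
    dsimp only
    rw [Circle.coe_inv, inv_mul_cancel_left₀ d.coe_ne_zero, hu, foldIm_eq_self hz]

end PlanarOrbitMap

section Hemisphere

open RealInnerProductSpace

theorem contractibleSpace_hemisphere {n : ℕ} {e : Euc n} (he : ‖e‖ = 1) :
    ContractibleSpace {x : Sph n | 0 ≤ ⟪e, (x : Euc n)⟫} := by
  let c : I × {x : Sph n | 0 ≤ ⟪e, (x : Euc n)⟫} → Euc n :=
    fun q => (1 - (q.1 : ℝ)) • (q.2 : Euc n) + (q.1 : ℝ) • e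
  have hinner (q) : (q.1 : ℝ) ≤ ⟪e, c q⟫ := by
    simp only [c, inner_add_right, inner_smul_right, real_inner_self_eq_norm_sq, he, one_pow,
      mul_one, le_add_iff_nonneg_left]
    exact mul_nonneg (unitInterval.one_minus_nonneg q.1) q.2.2
  have hc0 (q) : c q ≠ 0 := by
    intro h
    have hq : (q.1 : ℝ) = 0 := le_antisymm (by simpa [h] using hinner q) q.1.2.1
    simp only [c, hq, sub_zero, one_smul, zero_smul, add_zero] at h
    exact coe_sph_ne_zero _ h
  have hmem (q) : 0 ≤ ⟪e, (toSph (c q) : Euc n)⟫ := by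
    rw [coe_toSph (hc0 q), inner_smul_right]
    exact mul_nonneg (inv_nonneg.2 (norm_nonneg _)) (q.1.2.1.trans (hinner q))
  have hcont : Continuous fun q => toSph (c q) :=
    continuousOn_toSph.comp_continuous (by fun_prop) hc0
  have h0 (x) : toSph (c (0, x)) = x := by simp [c, toSph_coe]
  have h1 (x) : toSph (c (1, x)) = toSph e := by simp [c]
  rw [contractible_iff_id_nullhomotopic]
  refine ⟨⟨toSph e, ?_⟩, ⟨⟨⟨fun q => ⟨toSph (c q), hmem q⟩, hcont.subtype_mk hmem⟩,
    fun x => Subtype.ext (h0 x), fun x => Subtype.ext (h1 x)⟩⟩⟩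
  rw [mem_ofPred_eq, coe_toSph (norm_ne_zero_iff.1 (he ▸ one_ne_zero)), he, inv_one, one_smul]
  exact real_inner_self_nonneg

end Hemisphere

section NormalFold

variable {E : Type*} [NormedAddCommGroup E] [InnerProductSpace ℝ E] {V : Submodule ℝ E}
  [V.HasOrthogonalProjection]

lemma eq_iff_orthogonalProjectionOnto_eq {x y : E} :
    x = y ↔ V.orthogonalProjectionOnto x = V.orthogonalProjectionOnto y ∧
      Vᗮ.orthogonalProjectionOnto x = Vᗮ.orthogonalProjectionOnto y := by
  refine ⟨by rintro rfl; exact ⟨rfl, rfl⟩, fun ⟨h₁, h₂⟩ => ?_⟩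
  rw [← V.starProjection_add_starProjection_orthogonal x,
    ← V.starProjection_add_starProjection_orthogonal y, Submodule.starProjection_apply,
    Submodule.starProjection_apply, Submodule.starProjection_apply, Submodule.starProjection_apply,
    h₁, h₂]

/-- The self-map of `V ⊕ Vᗮ` which is the identity on `V` and `p` on `Vᗮ`. -/
noncomputable def normalFold (p : Vᗮ → Vᗮ) (x : E) : E :=
  V.orthogonalProjectionOnto x + p (Vᗮ.orthogonalProjectionOnto x)

lemma orthogonalProjectionOnto_normalFold (p : Vᗮ → Vᗮ) (x : E) :
    V.orthogonalProjectionOnto (normalFold p x) = V.orthogonalProjectionOnto x := by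
  rw [normalFold, map_add, V.orthogonalProjectionOnto_mem_subspace_eq_self,
    V.orthogonalProjectionOnto_apply_of_mem_orthogonal (p _).2, add_zero]

lemma orthogonalProjectionOnto_orthogonal_normalFold (p : Vᗮ → Vᗮ) (x : E) :
    Vᗮ.orthogonalProjectionOnto (normalFold p x) = p (Vᗮ.orthogonalProjectionOnto x) := by
  rw [normalFold, map_add, Submodule.orthogonalProjectionOnto_mem_subspace_eq_self,
    Submodule.orthogonalProjectionOnto_orthogonal_apply_eq_zero (Subtype.mem _), zero_add]

lemma norm_normalFold {p : Vᗮ → Vᗮ} (hp : ∀ w, ‖p w‖ = ‖w‖) (x : E) :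
    ‖normalFold p x‖ = ‖x‖ := by
  rw [← sq_eq_sq₀ (norm_nonneg _) (norm_nonneg _), Submodule.norm_sq_eq_add_norm_sq_projection _ V,
    Submodule.norm_sq_eq_add_norm_sq_projection x V, orthogonalProjectionOnto_normalFold,
    orthogonalProjectionOnto_orthogonal_normalFold, hp]

lemma continuous_normalFold {p : Vᗮ → Vᗮ} (hp : Continuous p) : Continuous (normalFold p) := by
  unfold normalFold
  fun_prop

lemma range_normalFold (p : Vᗮ → Vᗮ) :
    range (normalFold p) = {y | Vᗮ.orthogonalProjectionOnto y ∈ range p} := by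
  ext y
  constructor
  · rintro ⟨x, rfl⟩
    exact ⟨_, (orthogonalProjectionOnto_orthogonal_normalFold p x).symm⟩
  · rintro ⟨w, hw⟩
    refine ⟨V.orthogonalProjectionOnto y + w, (eq_iff_orthogonalProjectionOnto_eq (V := V)).2 ?_⟩
    rw [orthogonalProjectionOnto_normalFold, orthogonalProjectionOnto_orthogonal_normalFold,
      map_add, map_add, V.orthogonalProjectionOnto_mem_subspace_eq_self,
      V.orthogonalProjectionOnto_apply_of_mem_orthogonal w.2,
      Submodule.orthogonalProjectionOnto_mem_subspace_eq_self,
      Submodule.orthogonalProjectionOnto_orthogonal_apply_eq_zero (Subtype.mem _), add_zero,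
      zero_add, hw]
    exact ⟨rfl, rfl⟩

variable {G : Type*} [Group G] {ρ : G →* (E ≃ₗᵢ[ℝ] E)} [(fixedSubspace ρ).HasOrthogonalProjection]

lemma IsNormedOrbitMap.normalFold_eq_iff {p : (fixedSubspace ρ)ᗮ → (fixedSubspace ρ)ᗮ}
    (hp : IsNormedOrbitMap (normalRep ρ) p) {x y : E} :
    normalFold p x = normalFold p y ↔ ∃ g, ρ g x = y := by
  simp only [eq_iff_orthogonalProjectionOnto_eq (V := fixedSubspace ρ),
    orthogonalProjectionOnto_normalFold, orthogonalProjectionOnto_orthogonal_normalFold,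
    orthogonalProjectionOnto_fixedSubspace_map,
    orthogonalProjectionOnto_orthogonal_fixedSubspace_map, hp.eq_iff, exists_and_left]

end NormalFold

section OrbitSpace

open RealInnerProductSpace

variable {n : ℕ} {G : Type*} [Group G] {ρ : G →* (Euc n ≃ₗᵢ[ℝ] Euc n)}
  {p : (fixedSubspace ρ)ᗮ → (fixedSubspace ρ)ᗮ}

namespace IsNormedOrbitMap

section

variable (hp : IsNormedOrbitMap (normalRep ρ) p)

/-- The map of the sphere which is the identity on the fixed subspace and `p` on its complement,
as a map on the orbit space. -/
noncomputable def orbitSpaceToSphere : OrbitSpace (sphereAct ρ) → Sph n :=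
  Quot.lift (fun x => ⟨normalFold p x, by simp [norm_normalFold hp.norm_map]⟩) fun _ _ ⟨g, h⟩ =>
    Subtype.ext (hp.normalFold_eq_iff.2 ⟨g, congrArg Subtype.val h⟩)

lemma continuous_orbitSpaceToSphere : Continuous hp.orbitSpaceToSphere :=
  continuous_quot_lift _
    (((continuous_normalFold hp.continuous).comp continuous_subtype_val).subtype_mk _)

lemma injective_orbitSpaceToSphere : Function.Injective hp.orbitSpaceToSphere := by
  rintro ⟨x⟩ ⟨y⟩ h
  obtain ⟨g, hg⟩ := hp.normalFold_eq_iff.1 (congrArg Subtype.val h)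
  exact Quot.sound ⟨g, Subtype.ext hg⟩

lemma range_orbitSpaceToSphere :
    range hp.orbitSpaceToSphere =
      {y : Sph n | (fixedSubspace ρ)ᗮ.orthogonalProjectionOnto (y : Euc n) ∈ range p} := by
  ext y
  have hy : (fixedSubspace ρ)ᗮ.orthogonalProjectionOnto (y : Euc n) ∈ range p ↔
      (y : Euc n) ∈ range (normalFold p) := by rw [range_normalFold, mem_ofPred_eq]
  rw [mem_ofPred_eq, hy]
  constructor
  · rintro ⟨⟨x⟩, rfl⟩
    exact ⟨x, rfl⟩
  · rintro ⟨x, hx⟩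
    have hx1 : ‖x‖ = 1 := by rw [← norm_normalFold hp.norm_map, hx, norm_coe_sph]
    exact ⟨Quot.mk _ ⟨x, mem_sphere_zero_iff_norm.2 hx1⟩, Subtype.ext hx⟩

/-- The orbit space is homeomorphic to the part of the sphere that lies over the image of `p`. -/
noncomputable def orbitSpaceHomeomorph :
    OrbitSpace (sphereAct ρ) ≃ₜ
      {y : Sph n | (fixedSubspace ρ)ᗮ.orthogonalProjectionOnto (y : Euc n) ∈ range p} :=
  (hp.continuous_orbitSpaceToSphere.isClosedEmbedding
    hp.injective_orbitSpaceToSphere).isEmbedding.toHomeomorph.trans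
      (.setCongr hp.range_orbitSpaceToSphere)

end

theorem nonempty_homeomorph_sphere (hp : IsNormedOrbitMap (normalRep ρ) p) (h : range p = univ) :
    Nonempty (OrbitSpace (sphereAct ρ) ≃ₜ Sph n) :=
  ⟨hp.orbitSpaceHomeomorph.trans
    ((Homeomorph.setCongr (t := univ) (by simp [h])).trans (Homeomorph.Set.univ _))⟩

theorem contractibleSpace_orbitSpace (hp : IsNormedOrbitMap (normalRep ρ) p)
    {e : (fixedSubspace ρ)ᗮ} (he : ‖e‖ = 1) (h : range p = {w | 0 ≤ ⟪e, w⟫}) :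
    ContractibleSpace (OrbitSpace (sphereAct ρ)) := by
  have := contractibleSpace_hemisphere (e := (e : Euc n)) he
  refine (hp.orbitSpaceHomeomorph.trans
    (Homeomorph.setCongr (t := {x : Sph n | 0 ≤ ⟪(e : Euc n), (x : Euc n)⟫}) ?_)).contractibleSpace
  simp only [h, mem_ofPred_eq, Submodule.inner_orthogonalProjectionOnto_eq_of_mem_left]

end IsNormedOrbitMap

end OrbitSpace

section LowCodimension

open RealInnerProductSpace

variable {G W F : Type*} [Group G] [NormedAddCommGroup W] [InnerProductSpace ℝ W]
  [NormedAddCommGroup F] [InnerProductSpace ℝ F]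

lemma isNormedOrbitMap_abs {π : Representation ℝ G ℝ} (hπ : ∀ g x, ‖π g x‖ = ‖x‖)
    (hne : ∃ g, π g 1 ≠ 1) : IsNormedOrbitMap π fun x => |x| := by
  have hsmul (g x) : π g x = x * π g 1 := by rw [← smul_eq_mul, ← map_smul, smul_eq_mul, mul_one]
  have hone (g) : π g 1 = 1 ∨ π g 1 = -1 := by simpa [abs_eq] using hπ g 1
  refine ⟨continuous_abs, fun x => norm_abs_eq_norm x, @fun x y => ⟨fun h => ?_, ?_⟩⟩
  · rcases abs_eq_abs.1 h with rfl | rfl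
    · exact ⟨1, by simp⟩
    · obtain ⟨g, hg⟩ := hne
      exact ⟨g, by rw [hsmul, (hone g).resolve_left hg, neg_mul_neg, mul_one]⟩
  · rintro ⟨g, rfl⟩
    exact (hπ g x).symm

lemma range_abs_eq_inner : range (fun x : ℝ => |x|) = {x | 0 ≤ ⟪(1 : ℝ), x⟫} := by
  ext x
  simp only [real_inner_eq_re_inner]
  exact ⟨by rintro ⟨y, rfl⟩; simp, fun hx => ⟨x, abs_of_nonneg (by simpa using hx)⟩⟩

/-- The representation obtained by transport along a linear isometry. -/
noncomputable def transport (Φ : W ≃ₗᵢ[ℝ] F) (π : Representation ℝ G W) : Representation ℝ G F :=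
  (Φ.toLinearEquiv.conjRingEquiv : Module.End ℝ W →* Module.End ℝ F).comp π

lemma transport_apply (Φ : W ≃ₗᵢ[ℝ] F) (π : Representation ℝ G W) (g : G) (z : F) :
    transport Φ π g z = Φ (π g (Φ.symm z)) := rfl

lemma norm_transport_apply (Φ : W ≃ₗᵢ[ℝ] F) {π : Representation ℝ G W}
    (hπ : ∀ g w, ‖π g w‖ = ‖w‖) (g : G) (z : F) : ‖transport Φ π g z‖ = ‖z‖ := by
  rw [transport_apply, Φ.norm_map, hπ, Φ.symm.norm_map]

lemma IsNormedOrbitMap.of_transport {Φ : W ≃ₗᵢ[ℝ] F} {π : Representation ℝ G W} {p : F → F}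
    (hp : IsNormedOrbitMap (transport Φ π) p) :
    IsNormedOrbitMap π fun w => Φ.symm (p (Φ w)) where
  continuous := Φ.symm.continuous.comp (hp.continuous.comp Φ.continuous)
  norm_map w := by rw [Φ.symm.norm_map, hp.norm_map, Φ.norm_map]
  eq_iff := by
    simp only [Φ.symm.injective.eq_iff, hp.eq_iff, transport_apply, Φ.symm_apply_apply,
      Φ.injective.eq_iff, implies_true]

lemma range_symm_comp_comp (Φ : W ≃ₗᵢ[ℝ] F) (p : F → F) :
    range (fun w => Φ.symm (p (Φ w))) = Φ ⁻¹' range p := by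
  ext w
  simp only [mem_range, mem_preimage, Φ.symm_apply_eq, Φ.surjective.exists]

lemma preimage_halfSpace (Φ : W ≃ₗᵢ[ℝ] F) (e : F) :
    Φ ⁻¹' {z | 0 ≤ ⟪e, z⟫} = {w | 0 ≤ ⟪Φ.symm e, w⟫} := by
  ext w
  rw [mem_preimage, mem_ofPred_eq, mem_ofPred_eq, ← Φ.inner_map_map, Φ.apply_symm_apply]

variable {n : ℕ} {ρ : G →* (Euc n ≃ₗᵢ[ℝ] Euc n)}

theorem contractibleSpace_orbitSpace_of_finrank_eq_one
    (hW : Module.finrank ℝ (fixedSubspace ρ)ᗮ = 1) :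
    ContractibleSpace (OrbitSpace (sphereAct ρ)) := by
  let Φ : (fixedSubspace ρ)ᗮ ≃ₗᵢ[ℝ] ℝ := (stdOrthonormalBasis ℝ _).equiv
    (stdOrthonormalBasis ℝ ℝ) (finCongr (hW.trans (Module.finrank_self ℝ).symm))
  have hne : ∃ g, transport Φ (normalRep ρ) g 1 ≠ 1 := by
    by_contra! h
    have h0 : Φ.symm 1 = 0 :=
      eq_zero_of_forall_normalRep_eq ρ fun g => Φ.eq_symm_apply.2 (h g)
    simp at h0
  have hp := isNormedOrbitMap_abs (norm_transport_apply Φ (norm_normalRep_apply ρ)) hne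
  refine hp.of_transport.contractibleSpace_orbitSpace (e := Φ.symm 1) (by simp) ?_
  rw [range_symm_comp_comp, range_abs_eq_inner, preimage_halfSpace]

theorem contractibleSpace_or_homeomorph_sphere_of_finrank_eq_two [Finite G]
    (hW : Module.finrank ℝ (fixedSubspace ρ)ᗮ = 2) :
    ContractibleSpace (OrbitSpace (sphereAct ρ)) ∨
      Nonempty (OrbitSpace (sphereAct ρ) ≃ₜ Sph n) := by
  let Φ : (fixedSubspace ρ)ᗮ ≃ₗᵢ[ℝ] ℂ := (stdOrthonormalBasis ℝ _).equiv
    (stdOrthonormalBasis ℝ ℂ) (finCongr (hW.trans Complex.finrank_real_complex.symm))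
  obtain ⟨p, hp, h | ⟨e, he, h⟩⟩ :=
    exists_isNormedOrbitMap_complex (norm_transport_apply Φ (norm_normalRep_apply ρ))
  · refine .inr (hp.of_transport.nonempty_homeomorph_sphere ?_)
    rw [range_symm_comp_comp, h, preimage_univ]
  · refine .inl (hp.of_transport.contractibleSpace_orbitSpace (e := Φ.symm e) (by simpa) ?_)
    rw [range_symm_comp_comp, h, preimage_halfSpace]

end LowCodimension

section Planned

variable {G X : Type*} [TopologicalSpace X] {act : G → X → X} {N : X}

/-- An invariant subset of `X × X` over which `π^G` has an equivariant section, that is, a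
possible member of a cover counted by `invTCcover`. -/
def IsPlanned (act : G → X → X) (O : Set (X × X)) : Prop :=
  (∀ g₁ g₂ : G, ∀ p, p ∈ O → (act g₁ p.1, act g₂ p.2) ∈ O) ∧
    ∃ s₁ s₂ : X × X → C(I, X),
      ContinuousOn s₁ O ∧ ContinuousOn s₂ O ∧
      (∀ p ∈ O, s₁ p 0 = p.1 ∧ s₂ p 1 = p.2 ∧ orbit act (s₁ p 1) = orbit act (s₂ p 0)) ∧
      (∀ g₁ g₂ : G, ∀ p, p ∈ O → ∀ t : I,
        s₁ (act g₁ p.1, act g₂ p.2) t = act g₁ (s₁ p t) ∧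
        s₂ (act g₁ p.1, act g₂ p.2) t = act g₂ (s₂ p t))

lemma invTCcover_iff_isPlanned {k : ℕ} :
    invTCcover act k ↔ ∃ U : Fin k → Set (X × X),
      (∀ i, IsOpen (U i)) ∧ (⋃ i, U i) = univ ∧ ∀ i, IsPlanned act (U i) := Iff.rfl

lemma IsPlanned.mono {O O' : Set (X × X)} (h : IsPlanned act O) (hO : O' ⊆ O)
    (hmap : ∀ g₁ g₂ : G, ∀ p, p ∈ O' → (act g₁ p.1, act g₂ p.2) ∈ O') : IsPlanned act O' := by
  obtain ⟨-, s₁, s₂, hs₁, hs₂, hs, hs_map⟩ := h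
  exact ⟨hmap, s₁, s₂, hs₁.mono hO, hs₂.mono hO, fun p hp => hs p (hO hp),
    fun g₁ g₂ p hp => hs_map g₁ g₂ p (hO hp)⟩

lemma IsPlanned.union {O O' : Set (X × X)} (h : IsPlanned act O) (h' : IsPlanned act O')
    (hO : IsOpen O) (hO' : IsOpen O') (hd : Disjoint O O') : IsPlanned act (O ∪ O') := by
  classical
  obtain ⟨hmap, s₁, s₂, hs₁, hs₂, hs, hs_map⟩ := h
  obtain ⟨hmap', s₁', s₂', hs₁', hs₂', hs', hs_map'⟩ := h'
  have heq (s s' : X × X → C(I, X)) : EqOn (O.piecewise s s') s' O' := fun p hp =>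
    piecewise_eq_of_notMem _ _ _ (hd.notMem_of_mem_right hp)
  have hcont {s s' : X × X → C(I, X)} (hs : ContinuousOn s O) (hs' : ContinuousOn s' O') :
      ContinuousOn (O.piecewise s s') (O ∪ O') :=
    (hs.congr (piecewise_eqOn _ _ _)).union_of_isOpen (hs'.congr (heq s s')) hO hO'
  refine ⟨fun g₁ g₂ p hp => hp.imp (hmap g₁ g₂ p) (hmap' g₁ g₂ p), O.piecewise s₁ s₁',
    O.piecewise s₂ s₂', hcont hs₁ hs₁', hcont hs₂ hs₂', ?_, ?_⟩
  · rintro p (hp | hp)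
    · simpa only [piecewise_eq_of_mem _ _ _ hp] using hs p hp
    · simpa only [heq _ _ hp] using hs' p hp
  · rintro g₁ g₂ p (hp | hp)
    · simpa only [piecewise_eq_of_mem _ _ _ hp, piecewise_eq_of_mem _ _ _ (hmap g₁ g₂ p hp)]
        using hs_map g₁ g₂ p hp
    · simpa only [heq _ _ hp, heq _ _ (hmap' g₁ g₂ p hp)] using hs_map' g₁ g₂ p hp

/-- An equivariant contraction in `X` of the invariant set `A` to the point `N`, recorded by the
path followed by each point of `A`. -/
structure EquivariantContraction (act : G → X → X) (A : Set X) (N : X) where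
  path : X → C(I, X)
  map_mem : ∀ g, ∀ x ∈ A, act g x ∈ A
  continuousOn_path : ContinuousOn path A
  path_zero : ∀ x ∈ A, path x 0 = x
  path_one : ∀ x ∈ A, path x 1 = N
  path_map : ∀ g, ∀ x ∈ A, ∀ t, path (act g x) t = act g (path x t)

namespace EquivariantContraction

variable {A B : Set X}

lemma isPlanned_prod (a : EquivariantContraction act A N) (b : EquivariantContraction act B N) :
    IsPlanned act (A ×ˢ B) := by
  let reverse : C(I, I) := ⟨σ, continuous_symm⟩
  have hreverse : Continuous fun γ : C(I, X) => γ.comp reverse :=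
    ContinuousMap.continuous_precomp reverse
  have hreverse_apply (γ : C(I, X)) (t) : γ.comp reverse t = γ (σ t) := rfl
  refine ⟨fun g₁ g₂ p hp => ⟨a.map_mem g₁ _ hp.1, b.map_mem g₂ _ hp.2⟩, fun p => a.path p.1,
    fun p => (b.path p.2).comp reverse, a.continuousOn_path.comp continuousOn_fst fun p hp => hp.1,
    hreverse.comp_continuousOn (b.continuousOn_path.comp continuousOn_snd fun p hp => hp.2),
    fun p hp => ⟨a.path_zero _ hp.1, ?_, ?_⟩,
    fun g₁ g₂ p hp t => ⟨a.path_map g₁ _ hp.1 t, b.path_map g₂ _ hp.2 (σ t)⟩⟩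
  · rw [hreverse_apply, symm_one, b.path_zero _ hp.2]
  · rw [hreverse_apply, symm_zero, a.path_one _ hp.1, b.path_one _ hp.2]

theorem invTCcover_three {d : X → ℝ} (a : EquivariantContraction act {x | 0 < d x} N)
    (b : EquivariantContraction act B N) (hd : Continuous d) (hd_nonneg : ∀ x, 0 ≤ d x)
    (hd_map : ∀ g x, d (act g x) = d x) (hB : IsOpen B) (hdB : ∀ x, d x = 0 → x ∈ B) :
    invTCcover act 3 := by
  let A : Set X := {x | 0 < d x}
  have hA : IsOpen A := isOpen_lt continuous_const hd
  have hmem (x) (hx : x ∉ A) : d x = 0 ∧ x ∈ B := by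
    have h0 : d x = 0 := (not_lt.1 hx).antisymm (hd_nonneg x)
    exact ⟨h0, hdB x h0⟩
  -- Comparing `d p.1` with `d p.2` makes the mixed products `A ×ˢ B` and `B ×ˢ A` disjoint, so that
  -- together they form one member of the cover.
  let Q : Set (X × X) := A ×ˢ B ∩ {p | d p.2 < d p.1}
  let Q' : Set (X × X) := B ×ˢ A ∩ {p | d p.1 < d p.2}
  have hQ : IsOpen Q := (hA.prod hB).inter
    (isOpen_lt (hd.comp continuous_snd) (hd.comp continuous_fst))
  have hQ' : IsOpen Q' := (hB.prod hA).inter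
    (isOpen_lt (hd.comp continuous_fst) (hd.comp continuous_snd))
  have planned_Q : IsPlanned act Q := (a.isPlanned_prod b).mono inter_subset_left fun g₁ g₂ p hp =>
    ⟨⟨a.map_mem g₁ _ hp.1.1, b.map_mem g₂ _ hp.1.2⟩,
      by simpa only [mem_ofPred_eq, hd_map] using hp.2⟩
  have planned_Q' : IsPlanned act Q' := (b.isPlanned_prod a).mono inter_subset_left
    fun g₁ g₂ p hp => ⟨⟨b.map_mem g₁ _ hp.1.1, a.map_mem g₂ _ hp.1.2⟩,
      by simpa only [mem_ofPred_eq, hd_map] using hp.2⟩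
  have hQQ' : Disjoint Q Q' := disjoint_left.2 fun p hp hp' => lt_asymm (mem_ofPred_eq ▸ hp.2) hp'.2
  have hcover (p : X × X) : p ∈ A ×ˢ A ∨ p ∈ Q ∪ Q' ∨ p ∈ B ×ˢ B := by
    by_cases h₁ : p.1 ∈ A <;> by_cases h₂ : p.2 ∈ A
    · exact .inl ⟨h₁, h₂⟩
    · exact .inr (.inl (.inl ⟨⟨h₁, (hmem _ h₂).2⟩, (hmem _ h₂).1.trans_lt h₁⟩))
    · exact .inr (.inl (.inr ⟨⟨(hmem _ h₁).2, h₂⟩, (hmem _ h₁).1.trans_lt h₂⟩))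
    · exact .inr (.inr ⟨(hmem _ h₁).2, (hmem _ h₂).2⟩)
  refine invTCcover_iff_isPlanned.2 ⟨![A ×ˢ A, Q ∪ Q', B ×ˢ B], ?_, ?_, ?_⟩
  · simpa [Fin.forall_fin_succ] using ⟨hA.prod hA, hQ.union hQ', hB.prod hB⟩
  · simpa [eq_univ_iff_forall, Fin.exists_fin_succ] using hcover
  · simpa [Fin.forall_fin_succ] using
      ⟨a.isPlanned_prod a, planned_Q.union planned_Q' hQ hQ' hQQ', b.isPlanned_prod b⟩

end EquivariantContraction

lemma exists_continuousOn_curry {Y Z : Type*} [TopologicalSpace Y] [Nonempty Y]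
    [TopologicalSpace Z] {A : Set X} {f : X × Y → Z} (hf : ContinuousOn f (A ×ˢ univ)) :
    ∃ c : X → C(Y, Z), ContinuousOn c A ∧ ∀ x ∈ A, ∀ y, c x y = f (x, y) := by
  classical
  have hf' : Continuous fun q : A × Y => f (q.1, q.2) :=
    hf.comp_continuous (by fun_prop) fun q => ⟨q.1.2, mem_univ _⟩
  let c : C(A, C(Y, Z)) := ContinuousMap.curry ⟨_, hf'⟩
  let c' (x : X) : C(Y, Z) :=
    if hx : x ∈ A then c ⟨x, hx⟩ else .const Y (f (x, Classical.arbitrary Y))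
  have hc (x : A) : c' x = c x := dif_pos x.2
  refine ⟨c', ?_, fun x hx y => by rw [hc ⟨x, hx⟩]; rfl⟩
  exact continuousOn_iff_continuous_domRestrict.2 (c.continuous.congr fun x => (hc x).symm)

end Planned

section SphereContraction

open RealInnerProductSpace

section Segment

variable {E : Type*} [NormedAddCommGroup E] [InnerProductSpace ℝ E] {x N P : E}

lemma segment_ne_zero (hx : ‖x‖ = 1) (hN : ‖N‖ = 1) (h : x + N ≠ 0) (t : ℝ) :
    (1 - t) • x + t • N ≠ 0 := by
  intro h0
  have hnorm : |1 - t| = |t| := by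
    simpa [norm_smul, hx, hN] using congrArg norm (eq_neg_of_add_eq_zero_left h0)
  have ht : t = 1 / 2 := by
    rcases abs_eq_abs.1 hnorm with h | h <;> linarith
  rw [ht, sub_half, ← smul_add] at h0
  exact h ((smul_eq_zero_iff_right (by norm_num)).1 h0)

lemma detour_ne_zero (hx : ‖x‖ = 1) (hN : ‖N‖ = 1) (hP : ‖P‖ = 1) (hPN : ⟪P, N⟫ = 0)
    (hPx : -(1 / 2) < ⟪P, x⟫) {t : ℝ} (ht : t ∈ I) :
    (1 - t) • x + (t • N + (2 * t * (1 - t)) • P) ≠ 0 := by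
  intro h0
  have hP_inner : (1 - t) * (⟪P, x⟫ + 2 * t) = 0 := by
    have h := congrArg (inner ℝ P) h0
    simp only [inner_add_right, inner_smul_right, hPN, real_inner_self_eq_norm_sq, hP,
      inner_zero_right] at h
    linarith
  rcases mul_eq_zero.1 hP_inner with h1 | h1
  · rw [h1, ← sub_eq_zero.1 h1] at h0
    exact norm_ne_zero_iff.1 (hN ▸ one_ne_zero) (by simpa using h0)
  · have hnorm : 1 - t ≤ t + 2 * t * (1 - t) := by
      have h := norm_add_le (t • N) ((2 * t * (1 - t)) • P)
      rw [← norm_neg, ← eq_neg_of_add_eq_zero_left h0, norm_smul, norm_smul, norm_smul, hx, hN, hP,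
        Real.norm_of_nonneg (sub_nonneg.2 ht.2), Real.norm_of_nonneg ht.1, Real.norm_of_nonneg
        (mul_nonneg (mul_nonneg two_pos.le ht.1) (sub_nonneg.2 ht.2))] at h
      linarith
    nlinarith [ht.1]

lemma exists_orthonormal_pair {V : Submodule ℝ E} (hV : 2 ≤ Module.finrank ℝ V) :
    ∃ N ∈ V, ∃ P ∈ V, ‖N‖ = 1 ∧ ‖P‖ = 1 ∧ ⟪P, N⟫ = 0 := by
  have : FiniteDimensional ℝ V := .of_finrank_pos (by lia)
  let b := stdOrthonormalBasis ℝ V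
  let i : Fin (Module.finrank ℝ V) := ⟨0, by lia⟩
  let j : Fin (Module.finrank ℝ V) := ⟨1, by lia⟩
  exact ⟨b i, (b i).2, b j, (b j).2, b.norm_eq_one i, b.norm_eq_one j,
    b.inner_eq_zero (by simp [i, j])⟩

end Segment

variable {n : ℕ} {G : Type*} [Group G] {ρ : G →* (Euc n ≃ₗᵢ[ℝ] Euc n)}

lemma nonempty_equivariantContraction {A : Set (Sph n)} {N : Sph n} {u : ℝ → Euc n}
    (hA : ∀ g, ∀ x ∈ A, sphereAct ρ g x ∈ A) (hu : Continuous u)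
    (hu_fixed : ∀ t, u t ∈ fixedSubspace ρ) (hu_zero : u 0 = 0) (hu_one : u 1 = N)
    (h0 : ∀ x ∈ A, ∀ t : I, (1 - t : ℝ) • (x : Euc n) + u t ≠ 0) :
    Nonempty (EquivariantContraction (sphereAct ρ) A N) := by
  obtain ⟨c, hc, hc_apply⟩ := exists_continuousOn_curry (A := A)
    (f := fun q : Sph n × I => toSph ((1 - q.2 : ℝ) • (q.1 : Euc n) + u q.2))
    (continuousOn_toSph.comp (by fun_prop) fun q hq => h0 q.1 hq.1 q.2)
  refine ⟨⟨c, hA, hc, fun x hx => ?_, fun x hx => ?_, fun g x hx t => ?_⟩⟩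
  · simp [hc_apply x hx, hu_zero, toSph_coe]
  · simp [hc_apply x hx, hu_one, toSph_coe]
  · rw [hc_apply x hx, hc_apply _ (hA g x hx), ← toSph_map ρ g (h0 x hx t), map_add, map_smul,
      hu_fixed t g, coe_sphereAct]

theorem invTCcover_three_of_two_le_finrank (hV : 2 ≤ Module.finrank ℝ (fixedSubspace ρ)) :
    invTCcover (sphereAct ρ) 3 := by
  obtain ⟨N, hN, P, hP, hN1, hP1, hPN⟩ := exists_orthonormal_pair hV
  lift N to Sph n using mem_sphere_zero_iff_norm.2 hN1
  have hd_map (g) (x : Sph n) : ‖(sphereAct ρ g x + N : Euc n)‖ = ‖(x + N : Euc n)‖ := by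
    rw [coe_sphereAct, ← (ρ g).norm_map (x + N), map_add, hN g]
  have hP_map (g) (x : Sph n) : ⟪P, (sphereAct ρ g x : Euc n)⟫ = ⟪P, (x : Euc n)⟫ := by
    rw [coe_sphereAct, ← (ρ g).inner_map_map P x, hP g]
  obtain ⟨a⟩ := nonempty_equivariantContraction (ρ := ρ) (N := N) (u := fun t => t • (N : Euc n))
    (A := {x | 0 < ‖(x + N : Euc n)‖}) (fun g x hx => by rwa [mem_ofPred_eq, hd_map])
    (by fun_prop) (fun t => Submodule.smul_mem _ t hN) (zero_smul ℝ _) (one_smul ℝ _)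
    fun x hx t => segment_ne_zero (norm_coe_sph x) hN1 (norm_pos_iff.1 hx) t
  obtain ⟨b⟩ := nonempty_equivariantContraction (ρ := ρ) (N := N)
    (u := fun t => t • (N : Euc n) + (2 * t * (1 - t)) • P)
    (A := {x | -(1 / 2) < ⟪P, (x : Euc n)⟫}) (fun g x hx => by rwa [mem_ofPred_eq, hP_map])
    (by fun_prop) (fun t => add_mem (Submodule.smul_mem _ t hN) (Submodule.smul_mem _ _ hP))
    (by simp) (by simp) fun x hx t => detour_ne_zero (norm_coe_sph x) hN1 hP1 hPN hx t.2
  refine a.invTCcover_three b (by fun_prop) (fun x => norm_nonneg _) hd_map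
    (isOpen_lt continuous_const (by fun_prop)) fun x hx => ?_
  rw [mem_ofPred_eq, eq_neg_of_add_eq_zero_left (norm_eq_zero.1 hx), inner_neg_right, hPN]
  norm_num

end SphereContraction

section MinCover

lemma minCover_eq_of_isLeast {P : ℕ → Prop} {m : ℕ} (h : IsLeast {k | 1 ≤ k ∧ P k} m) :
    minCover P = m := by
  refine le_antisymm (sInf_le ⟨m, rfl, h.1⟩) (le_sInf ?_)
  rintro _ ⟨k, rfl, hk⟩
  exact Nat.cast_le.2 (h.2 hk)

lemma invTCcover_mono {G X : Type*} [TopologicalSpace X] {act : G → X → X} {j k : ℕ} (hj : 0 < j)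
    (hjk : j ≤ k) (h : invTCcover act j) : invTCcover act k := by
  have : NeZero j := ⟨hj.ne'⟩
  obtain ⟨U, hU, hcover, hs⟩ := invTCcover_iff_isPlanned.1 h
  refine invTCcover_iff_isPlanned.2 ⟨fun i => U (Fin.ofNat j i), fun i => hU _, ?_, fun i => hs _⟩
  have hsurj : Function.Surjective fun i : Fin k => Fin.ofNat j i := fun i =>
    ⟨i.castLE hjk, Fin.ext (Nat.mod_eq_of_lt i.2)⟩
  exact (hsurj.iUnion_comp U).trans hcover

end MinCover

section FixedSphere

variable {n : ℕ} {G : Type*} [Group G] {ρ : G →* (Euc n ≃ₗᵢ[ℝ] Euc n)}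

lemma fixedSubspace_le_of_forall_sph_mem {V : Submodule ℝ (Euc n)}
    (h : ∀ x : Sph n, (∀ g, sphereAct ρ g x = x) → (x : Euc n) ∈ V) : fixedSubspace ρ ≤ V := by
  intro y hy
  rcases eq_or_ne y 0 with rfl | hy0
  · exact V.zero_mem
  · have hmem := h (toSph y) fun g => by rw [← toSph_map ρ g hy0, hy g]
    rwa [coe_toSph hy0, V.smul_mem_iff (inv_ne_zero (norm_ne_zero_iff.2 hy0))] at hmem

end FixedSphere

section Main

variable {n k : ℕ} {G : Type*} [Group G] [Finite G] {ρ : G →* (Euc n ≃ₗᵢ[ℝ] Euc n)}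

theorem not_invTCcover_two (hk : 0 < k) (hkn : k < n)
    (hV : Module.finrank ℝ (fixedSubspace ρ) = k + 1)
    (hnc : ¬ ContractibleSpace (OrbitSpace (sphereAct ρ)))
    (hns : ¬ ∃ m : ℕ, Odd m ∧
      Nonempty (ContinuousMap.HomotopyEquiv (OrbitSpace (sphereAct ρ)) ↥(Sph m))) :
    ¬ invTCcover (sphereAct ρ) 2 := by
  intro h
  have hsum := (fixedSubspace ρ).finrank_add_finrank_orthogonal
  rw [hV, finrank_euclideanSpace_fin] at hsum
  obtain hW | hW | hW : Module.finrank ℝ (fixedSubspace ρ)ᗮ = 1 ∨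
      Module.finrank ℝ (fixedSubspace ρ)ᗮ = 2 ∨ 3 ≤ Module.finrank ℝ (fixedSubspace ρ)ᗮ := by omega
  · exact hnc (contractibleSpace_orbitSpace_of_finrank_eq_one hW)
  · obtain hc | ⟨⟨e⟩⟩ := contractibleSpace_or_homeomorph_sphere_of_finrank_eq_two hW
    · exact hnc hc
    · have hodd : Odd k := odd_of_invTCcover_two hk hV (by omega) h
      have hn : n = k + 2 := by omega
      exact hns ⟨n, hn ▸ hodd.add_even even_two, ⟨e.toHomotopyEquiv⟩⟩
  · exact not_invTCcover_two_of_three_le_finrank hk hV hW h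

end Main

end PaperTC

/-- Let a finite group `G` act linearly on a `G`-connected sphere `S^n`
whose fixed point set is the great `k`-sphere obtained by intersecting `S^n` with a
pointwise-fixed linear subspace `V` of dimension `k + 1`, where `0 < k < n`.  If the orbit
space `S^n/G` is neither contractible nor homotopy equivalent to an odd-dimensional
sphere, then `TC^G(S^n) = 3`. -/
theorem invTC_linear_sphere_eq_three_of_orbit_space {G : Type*} [Group G] [Finite G]
    (n k : ℕ) (hk : 0 < k) (hkn : k < n)
    (ρ : G →* (EuclideanSpace ℝ (Fin (n + 1)) ≃ₗᵢ[ℝ] EuclideanSpace ℝ (Fin (n + 1))))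
    (hconn : ∀ H : Subgroup G, IsPathConnected (fixedSetOf (sphereAct ρ) (H : Set G)))
    (V : Submodule ℝ (EuclideanSpace ℝ (Fin (n + 1))))
    (hV : Module.finrank ℝ V = k + 1)
    (hVfix : ∀ g : G, ∀ v ∈ V, ρ g v = v)
    (hfixV : ∀ x : ↥(Sph n),
      (∀ g : G, sphereAct ρ g x = x) ↔ (x : EuclideanSpace ℝ (Fin (n + 1))) ∈ V)
    (hnc : ¬ ContractibleSpace (OrbitSpace (sphereAct ρ)))
    (hns : ¬ ∃ m : ℕ, Odd m ∧
      Nonempty (ContinuousMap.HomotopyEquiv (OrbitSpace (sphereAct ρ)) ↥(Sph m))) :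
    invTC (sphereAct ρ) = 3 := by
  obtain rfl : V = fixedSubspace ρ := le_antisymm (fun v hv g => hVfix g v hv)
    (fixedSubspace_le_of_forall_sph_mem fun x => (hfixV x).1)
  have upper : invTCcover (sphereAct ρ) 3 :=
    invTCcover_three_of_two_le_finrank ((Nat.succ_le_succ hk).trans hV.ge)
  have lower : ¬ invTCcover (sphereAct ρ) 2 := not_invTCcover_two hk hkn hV hnc hns
  refine minCover_eq_of_isLeast (m := 3) ⟨⟨by norm_num, upper⟩, fun m ⟨hm, h⟩ => ?_⟩
  by_contra! hm3
  exact lower (invTCcover_mono hm (by omega) h)
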